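/- Fix τ ∈ H₊, x ∈ ℂ with x ∉ ℤ+τℤ and −x ∉ ℤ+τℤ, m ∈ ℤ, and set q = exp(2πiτ). For Re(κ) < 0 let h_m(x,τ,κ) = ∫₀¹ exp(−(2/κ)L(t)) [ σ_x(t,τ)θ_{4,m}(x+2t/κ,τ) + σ_{−x}(t,τ)θ_{4,m}(−x+2t/κ,τ) ] dt, where L is the branch of log E(·,τ) on (0,1) with L(t) − log t → 0 as t → 0⁺. Then there exist an open connected set U ⊆ ℂ containing {κ : Re(κ) < 0} ∪ {4} and a holomorphic function F on U such that F(κ) = h_m(x,τ,κ) whenever Re(κ) < 0 (so h_m has an analytic continuation regular at κ = 4), and the value at κ = 4 is: F(4) = 0 if m ≢ 2 (mod 4), while if m ≡ 2 (mod 4) then F(4) = 2π^{1/2} · (Γ(−1/2)Γ(3/4)/Γ(1/4)) · [ q^{1/8} (e^{iπx} − e^{−iπx}) ∏_{j=1}^{∞} (1−q^j)(1−q^j e^{2πix})(1−q^j e^{−2πix}) ]². -/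

import Mathlib

open Complex Filter Topology MeasureTheory

noncomputable section

/-- Jacobi's theta function `ϑ₁(t,τ)`. -/
def theta1 (t τ : ℂ) : ℂ :=
  -∑' j : ℤ, Complex.exp ((Real.pi : ℂ) * Complex.I * ((j : ℂ) + 1/2)^2 * τ +
      2 * (Real.pi : ℂ) * Complex.I * ((j : ℂ) + 1/2) * (t + 1/2))

/-- Derivative of `ϑ₁` in the first argument. -/
def theta1' (t τ : ℂ) : ℂ := deriv (fun s => theta1 s τ) t

/-- Membership in the lattice `ℤ + τℤ`. -/
def inLattice (τ t : ℂ) : Prop := ∃ a b : ℤ, t = (a : ℂ) + (b : ℂ) * τ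

/-- The function `σ_w(t,τ)`. -/
def sigmaF (w t τ : ℂ) : ℂ := theta1 (w - t) τ * theta1' 0 τ / (theta1 w τ * theta1 t τ)

/-- The function `ρ(t,τ) = ϑ₁'(t,τ)/ϑ₁(t,τ)`. -/
def rhoF (t τ : ℂ) : ℂ := theta1' t τ / theta1 t τ

/-- The function `E(t,τ) = ϑ₁(t,τ)/ϑ₁'(0,τ)`. -/
def EF (t τ : ℂ) : ℂ := theta1 t τ / theta1' 0 τ

end

noncomputable section

/-- The theta function `θ_{4,m}(x,τ) = ∑_{j∈ℤ} exp(πi(8j+m)²τ/8 + πi(8j+m)x)`. -/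
def theta4m (m : ℤ) (x τ : ℂ) : ℂ :=
  ∑' j : ℤ, Complex.exp ((Real.pi : ℂ) * Complex.I * ((8 * j + m : ℤ) : ℂ) ^ 2 * τ / 8
    + (Real.pi : ℂ) * Complex.I * ((8 * j + m : ℤ) : ℂ) * x)

end

section ThetaBasics
open scoped Real

/-- second Jacobi theta function -/
noncomputable def T2 (z τ : ℂ) : ℂ := theta1 (z + 1/2) τ
/-- fourth Jacobi theta function -/
noncomputable def T4 (z τ : ℂ) : ℂ := jacobiTheta₂ (z + 1/2) τ

lemma theta1_eq (z τ : ℂ) : theta1 z τ =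
    -(cexp (π * I * τ / 4 + π * I * (z + 1/2)) * jacobiTheta₂ (z + 1/2 + τ/2) τ) := by
  rw [theta1, jacobiTheta₂, ← tsum_mul_left]
  congr 1
  refine tsum_congr fun j => ?_
  rw [jacobiTheta₂_term, ← Complex.exp_add]
  congr 1; ring

lemma exp_pi_half : cexp (π * I * (1/2)) = I := by
  rw [show (π * I * (1/2) : ℂ) = π / 2 * I by ring, Complex.exp_pi_div_two_mul_I]

lemma T2_eq (z τ : ℂ) : T2 z τ =
    cexp (π * I * τ / 4 + π * I * z) * jacobiTheta₂ (z + τ/2) τ := by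
  rw [T2, theta1_eq, show z + 1/2 + 1/2 + τ/2 = (z + τ/2) + 1 by ring, jacobiTheta₂_add_left,
    show (π * I * τ / 4 + π * I * (z + 1/2 + 1/2) : ℂ) = (π * I * τ / 4 + π * I * z) + π * I by ring,
    Complex.exp_add _ (π * I), Complex.exp_pi_mul_I]
  ring

lemma jt_shift (e : ℤ) (z τ : ℂ) : jacobiTheta₂ (z + e * τ) τ =
    cexp (-π * I * (e^2 * τ + 2 * e * z)) * jacobiTheta₂ z τ := by
  conv_rhs => rw [jacobiTheta₂, ← tsum_mul_left, ← (Equiv.addRight e).tsum_eq]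
  refine tsum_congr (fun n ↦ ?_)
  simp_rw [jacobiTheta₂_term, ← Complex.exp_add, Equiv.coe_addRight, Int.cast_add]
  ring_nf

lemma jt_add_int (e : ℤ) (z τ : ℂ) : jacobiTheta₂ (z + e) τ = jacobiTheta₂ z τ := by
  refine tsum_congr (fun n ↦ ?_)
  simp_rw [jacobiTheta₂_term]
  rw [show (2 * π * I * n * (z + e) + π * I * n^2 * τ : ℂ) =
    (2 * π * I * n * z + π * I * n^2 * τ) + ((n * e : ℤ) : ℂ) * (2 * π * I) by push_cast; ring,
    Complex.exp_add _ (_ * (2 * π * I)), exp_int_mul_two_pi_mul_I, mul_one]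

lemma theta1_neg (z τ : ℂ) : theta1 (-z) τ = -theta1 z τ := by
  rw [theta1_eq, theta1_eq, ← jacobiTheta₂_neg_left (-z + 1/2 + τ/2)]
  have h := jt_shift (-1) (z + 1/2 + τ/2) τ
  have h2 := jt_add_int (-1) (z + 1/2 + τ/2 + ((-1:ℤ):ℂ) * τ) τ
  rw [h] at h2
  rw [show -(-z + 1/2 + τ/2) = z + 1/2 + τ/2 + ((-1:ℤ):ℂ) * τ + ((-1:ℤ):ℂ) by push_cast; ring, h2,
    ← mul_assoc, ← Complex.exp_add]
  rw [← neg_mul, ← neg_mul, ← neg_mul]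
  congr 1
  rw [show (π * I * τ / 4 + π * I * (-z + 1/2) + -π * I * (((-1:ℤ):ℂ)^2 * τ + 2 * ((-1:ℤ):ℂ) * (z + 1/2 + τ/2)) : ℂ)
    = (π * I * τ / 4 + π * I * (z + 1/2)) + π * I by push_cast; ring, Complex.exp_add _ (π * I),
    Complex.exp_pi_mul_I]
  ring

lemma theta1_add_one (z τ : ℂ) : theta1 (z + 1) τ = - theta1 z τ := by
  rw [theta1_eq, theta1_eq, show z + 1 + 1/2 + τ/2 = (z + 1/2 + τ/2) + 1 by ring, jacobiTheta₂_add_left,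
    show (π * I * τ / 4 + π * I * (z + 1 + 1/2) : ℂ) = (π * I * τ / 4 + π * I * (z + 1/2)) + π * I by ring,
    Complex.exp_add _ (π * I), Complex.exp_pi_mul_I]
  ring

lemma theta1_zero (τ : ℂ) : theta1 0 τ = 0 := by
  have := theta1_neg 0 τ
  rw [neg_zero] at this
  linear_combination this / 2

lemma T2_add_half (z τ : ℂ) : T2 (z + 1/2) τ = - theta1 z τ := by
  rw [T2, show z + 1/2 + 1/2 = z + 1 by ring, theta1_add_one]

lemma T2_sub_half (z τ : ℂ) : T2 (z - 1/2) τ = theta1 z τ := by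
  rw [T2, sub_add_cancel]

lemma T2_neg (z τ : ℂ) : T2 (-z) τ = T2 z τ := by
  rw [T2, T2, show -z + 1/2 = -((z + 1/2) - 1) by ring, theta1_neg]
  have := theta1_add_one (z + 1/2 - 1) τ
  rw [sub_add_cancel] at this
  rw [this]

lemma T4_add_half (z τ : ℂ) : T4 (z + 1/2) τ = jacobiTheta₂ z τ := by
  rw [T4, show z + 1/2 + 1/2 = z + 1 by ring, jacobiTheta₂_add_left]

lemma T4_neg (z τ : ℂ) : T4 (-z) τ = T4 z τ := by
  rw [T4, T4, ← jacobiTheta₂_neg_left, show -(-z + 1/2) = (z - 1/2) by ring,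
    ← jacobiTheta₂_add_left]
  congr 1; ring

lemma theta4m_eq (m : ℤ) (x τ : ℂ) : theta4m m x τ =
    cexp (π * I * m^2 * τ / 8 + π * I * m * x) * jacobiTheta₂ (4 * x + m * τ) (8 * τ) := by
  rw [theta4m, jacobiTheta₂, ← tsum_mul_left]
  refine tsum_congr fun j => ?_
  rw [jacobiTheta₂_term, ← Complex.exp_add]
  congr 1; push_cast; ring

lemma hasSum_conv {ι : Type*} {f g : ι → ℂ} {a b : ℂ} (h : HasSum g b) (hf : ∀ k, f k = g k)
    (ha : a = b) : HasSum f a := by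
  obtain rfl : f = g := funext hf
  rwa [ha]

lemma hasSum_int_even_odd {f : ℤ → ℂ} {a b : ℂ} (ha : HasSum (fun k : ℤ => f (2 * k)) a)
    (hb : HasSum (fun k : ℤ => f (2 * k + 1)) b) : HasSum f (a + b) := by
  have := mul_right_injective₀ (two_ne_zero' ℤ)
  replace ha := this.hasSum_range_iff.2 ha
  replace hb := ((add_left_injective 1).comp this).hasSum_range_iff.2 hb
  refine ha.add_isCompl ?_ hb
  have h := Int.isCompl_even_odd
  have e1 : (Set.range fun x : ℤ => 2 * x) = {n : ℤ | Even n} := by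
    ext n; simp [even_iff_exists_two_mul, eq_comm]
  have e2 : Set.range ((fun x : ℤ => x + 1) ∘ fun x => 2 * x) = {n : ℤ | Odd n} := by
    ext n; simp [Odd, eq_comm]
  rw [e1, e2]; exact h

lemma jt_split (z : ℂ) {τ : ℂ} (hτ : 0 < τ.im) : jacobiTheta₂ z τ =
    jacobiTheta₂ (2 * z) (4 * τ) + cexp (π * I * τ + 2 * π * I * z) *
      jacobiTheta₂ (2 * z + 2 * τ) (4 * τ) := by
  have h4 : 0 < (4 * τ).im := by simp; exact hτ
  refine (hasSum_jacobiTheta₂_term z hτ).unique (hasSum_int_even_odd ?_ ?_)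
  · refine hasSum_conv (hasSum_jacobiTheta₂_term (2 * z) h4) (fun k => ?_) rfl
    simp only [jacobiTheta₂_term]; congr 1; push_cast; ring
  · refine hasSum_conv ((hasSum_jacobiTheta₂_term (2 * z + 2 * τ) h4).mul_left
      (cexp (π * I * τ + 2 * π * I * z))) (fun k => ?_) rfl
    simp only [jacobiTheta₂_term]; rw [← Complex.exp_add]; congr 1; push_cast; ring

lemma jt_mul (X Y : ℂ) {τ : ℂ} (hτ : 0 < τ.im) :
    jacobiTheta₂ (X + Y) τ * jacobiTheta₂ (X - Y) τ =
      jacobiTheta₂ (2 * X) (2 * τ) * jacobiTheta₂ (2 * Y) (2 * τ) +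
      T2 (2 * X) (2 * τ) * T2 (2 * Y) (2 * τ) := by
  have h2 : 0 < (2 * τ).im := by simp; exact hτ
  have s1 : Summable fun n => ‖jacobiTheta₂_term n (X + Y) τ‖ :=
    ((summable_jacobiTheta₂_term_iff _ _).2 hτ).norm
  have s2 : Summable fun n => ‖jacobiTheta₂_term n (X - Y) τ‖ :=
    ((summable_jacobiTheta₂_term_iff _ _).2 hτ).norm
  let e : ℤ × ℤ ≃ ℤ × ℤ :=
    { toFun := fun p => (p.2, p.2 + p.1)
      invFun := fun p => (p.2 - p.1, p.1)
      left_inv := fun p => by simp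
      right_inv := fun p => by simp }
  have hs := summable_mul_of_summable_norm s1 s2
  have hs' := (e.summable_iff).2 hs
  have key : ∀ d : ℤ, ∑' a : ℤ, jacobiTheta₂_term a (X + Y) τ * jacobiTheta₂_term (a + d) (X - Y) τ
      = cexp (π * I * d^2 * τ + 2 * π * I * d * (X - Y)) * jacobiTheta₂ (2 * X + d * τ) (2 * τ) := by
    intro d
    rw [jacobiTheta₂, ← tsum_mul_left]
    refine tsum_congr fun a => ?_
    simp only [jacobiTheta₂_term]
    rw [← Complex.exp_add, ← Complex.exp_add]; congr 1; push_cast; ring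
  have main : HasSum (fun d : ℤ => cexp (π * I * d^2 * τ + 2 * π * I * d * (X - Y)) *
      jacobiTheta₂ (2 * X + d * τ) (2 * τ)) (jacobiTheta₂ (X + Y) τ * jacobiTheta₂ (X - Y) τ) := by
    have e1 : jacobiTheta₂ (X + Y) τ * jacobiTheta₂ (X - Y) τ = ∑' p : ℤ × ℤ,
        jacobiTheta₂_term p.2 (X + Y) τ * jacobiTheta₂_term (p.2 + p.1) (X - Y) τ := by
      rw [jacobiTheta₂, jacobiTheta₂, tsum_mul_tsum_of_summable_norm s1 s2, ← e.tsum_eq]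
      rfl
    rw [e1]
    have h3 := hs'.hasSum.prod_fiberwise (fun d => (hs'.prod_factor d).hasSum)
    exact hasSum_conv h3 (fun d => (key d).symm) rfl
  refine main.unique (hasSum_int_even_odd ?_ ?_)
  · rw [← jacobiTheta₂_neg_left (2 * Y)]
    refine hasSum_conv ((hasSum_jacobiTheta₂_term (-(2 * Y)) h2).mul_left
      (jacobiTheta₂ (2 * X) (2 * τ))) (fun k => ?_) rfl
    rw [show (2 * X + ((2 * k : ℤ) : ℂ) * τ) = 2 * X + k * (2 * τ) by push_cast; ring, jt_shift,
      ← mul_assoc, ← Complex.exp_add, mul_comm, jacobiTheta₂_term]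
    congr 2; push_cast; ring
  · rw [T2_eq, ← T2_neg (2 * Y), T2_eq]
    refine hasSum_conv ((hasSum_jacobiTheta₂_term (-(2 * Y) + 2 * τ / 2) h2).mul_left
      (cexp (π * I * (2 * τ) / 4 + π * I * (2 * X)) * jacobiTheta₂ (2 * X + 2 * τ / 2) (2 * τ) *
       cexp (π * I * (2 * τ) / 4 + π * I * (-(2 * Y))))) (fun k => ?_) ?_
    · rw [show (2 * X + ((2 * k + 1 : ℤ) : ℂ) * τ) = (2 * X + 2 * τ / 2) + k * (2 * τ) by push_cast; ring,
        jt_shift, ← mul_assoc, ← Complex.exp_add, jacobiTheta₂_term]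
      rw [mul_right_comm (cexp _) (jacobiTheta₂ _ _) (cexp _), ← Complex.exp_add,
        mul_right_comm (cexp _) (jacobiTheta₂ _ _) (cexp _), ← Complex.exp_add]
      congr 2; push_cast; ring
    · ring

end ThetaBasics

section TripleProduct
open scoped Real

/-- finite q-Pochhammer symbol -/
noncomputable def qp (Q : ℂ) (n : ℕ) : ℂ := ∏ i ∈ Finset.range n, (1 - Q ^ (i + 1))
/-- its inverse extended by zero to negative integers -/
noncomputable def rr (Q : ℂ) (k : ℤ) : ℂ := if k < 0 then 0 else (qp Q k.toNat)⁻¹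

lemma one_sub_pow_ne {Q : ℂ} (hQ : ‖Q‖ < 1) (n : ℕ) : 1 - Q ^ (n + 1) ≠ 0 := by
  intro h
  have h1 : Q ^ (n + 1) = 1 := by linear_combination -h
  have h2 : ‖Q‖ ^ (n + 1) = 1 := by rw [← norm_pow, h1, norm_one]
  have := pow_lt_one₀ (norm_nonneg Q) hQ (Nat.succ_ne_zero n)
  rw [Nat.succ_eq_add_one] at this
  linarith

lemma qp_ne {Q : ℂ} (hQ : ‖Q‖ < 1) (n : ℕ) : qp Q n ≠ 0 :=
  Finset.prod_ne_zero_iff.2 fun i _ => one_sub_pow_ne hQ i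

lemma rr_rel {Q : ℂ} (hQ : ‖Q‖ < 1) (k : ℤ) : (1 - Q ^ k) * rr Q k = rr Q (k - 1) := by
  rcases lt_trichotomy k 0 with h | h | h
  · rw [rr, rr, if_pos h, if_pos (by omega), mul_zero]
  · subst h; simp [rr]
  · obtain ⟨n, rfl⟩ : ∃ n : ℕ, k = n + 1 := ⟨(k - 1).toNat, by omega⟩
    rw [rr, rr, if_neg (by omega), if_neg (by omega)]
    rw [show ((n : ℤ) + 1).toNat = n + 1 by omega, show ((n : ℤ) + 1 - 1).toNat = n by omega,
      qp, Finset.prod_range_succ, ← qp]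
    have := one_sub_pow_ne hQ n
    have h2 := qp_ne hQ n
    rw [show Q ^ ((n : ℤ) + 1) = Q ^ (n + 1) by exact_mod_cast zpow_natCast Q (n+1)]
    field_simp

/-- coefficients of finite triple product -/
noncomputable def cc (Q : ℂ) (n : ℕ) (k : ℤ) : ℂ := qp Q (2 * n) * rr Q (n - k) * rr Q (n + k)

lemma cc_step {q : ℂ} (hq0 : q ≠ 0) (hq : ‖q ^ 2‖ < 1) (n : ℕ) (k : ℤ) :
    cc (q ^ 2) (n + 1) k * q ^ (k ^ 2) =
    (1 + q ^ (4 * n + 2)) * (cc (q ^ 2) n k * q ^ (k ^ 2))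
    + q ^ (2 * n + 1) * (cc (q ^ 2) n (k - 1) * q ^ ((k - 1) ^ 2))
    + q ^ (2 * n + 1) * (cc (q ^ 2) n (k + 1) * q ^ ((k + 1) ^ 2)) := by
  set Q := q ^ 2 with hQ
  have hQ0 : Q ≠ 0 := pow_ne_zero _ hq0
  have a1 := rr_rel hq ((n : ℤ) + 1 - k)
  have a2 := rr_rel hq ((n : ℤ) - k)
  have b1 := rr_rel hq ((n : ℤ) + 1 + k)
  have b2 := rr_rel hq ((n : ℤ) + k)
  rw [show (n : ℤ) + 1 - k - 1 = n - k by ring] at a1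
  rw [show (n : ℤ) + 1 + k - 1 = n + k by ring] at b1
  have e1 : q ^ (2 * n + 1) * q ^ ((k - 1) ^ 2) = Q ^ ((n : ℤ) + 1 - k) * q ^ (k ^ 2) := by
    rw [hQ, ← zpow_natCast q 2, ← zpow_mul, ← zpow_natCast, ← zpow_add₀ hq0, ← zpow_add₀ hq0]
    congr 1; push_cast; ring
  have e2 : q ^ (2 * n + 1) * q ^ ((k + 1) ^ 2) = Q ^ ((n : ℤ) + 1 + k) * q ^ (k ^ 2) := by
    rw [hQ, ← zpow_natCast q 2, ← zpow_mul, ← zpow_natCast, ← zpow_add₀ hq0, ← zpow_add₀ hq0]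
    congr 1; push_cast; ring
  have e3 : q ^ (4 * n + 2) * Q = Q ^ ((n : ℤ) + 1 - k) * Q ^ ((n : ℤ) + 1 + k) := by
    rw [hQ, ← zpow_natCast q 2, ← zpow_mul, ← zpow_mul, ← zpow_natCast, ← zpow_add₀ hq0, ← zpow_add₀ hq0]
    congr 1; push_cast; ring
  have e4 : Q ^ ((n : ℤ) - k) * Q = Q ^ ((n : ℤ) + 1 - k) := by
    rw [← zpow_add_one₀ hQ0]; congr 1; ring
  have e5 : Q ^ ((n : ℤ) + k) * Q = Q ^ ((n : ℤ) + 1 + k) := by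
    rw [← zpow_add_one₀ hQ0]; congr 1; ring
  have e6 : qp Q (2 * (n + 1)) = qp Q (2 * n) * (1 - q ^ (4 * n + 2)) * (1 - q ^ (4 * n + 2) * Q) := by
    rw [show 2 * (n + 1) = 2 * n + 1 + 1 by ring, qp, Finset.prod_range_succ, Finset.prod_range_succ,
      ← qp]
    rw [hQ, ← pow_mul, ← pow_mul, ← pow_add]
    congr 3 <;> ring
  simp only [cc]
  rw [e6]
  rw [show ((n + 1 : ℕ) : ℤ) - k = n + 1 - k by push_cast; ring,
    show ((n + 1 : ℕ) : ℤ) + k = n + 1 + k by push_cast; ring,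
    show (n : ℤ) - (k - 1) = n + 1 - k by ring, show (n : ℤ) + (k - 1) = n + k - 1 by ring,
    show (n : ℤ) - (k + 1) = n - k - 1 by ring, show (n : ℤ) + (k + 1) = n + 1 + k by ring,
    ← a2, ← b2, ← a1, ← b1]
  set α' := Q ^ ((n : ℤ) - k) with hα
  set β' := Q ^ ((n : ℤ) + k) with hβ
  have e7 : q ^ (4 * n + 2) = α' * β' * Q := by
    apply mul_right_cancel₀ hQ0
    rw [e3, ← e4, ← e5]; ring
  rw [e7, ← e4, ← e5]
  rw [← e4] at e1
  rw [← e5] at e2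
  generalize q ^ (2 * n + 1) = u at *
  generalize q ^ ((k - 1) ^ 2) = v1 at *
  generalize q ^ ((k + 1) ^ 2) = v2 at *
  generalize q ^ (k ^ 2) = v at *
  generalize rr Q ((n : ℤ) + 1 - k) = R1 at *
  generalize rr Q ((n : ℤ) + 1 + k) = R2 at *
  clear_value α' β' Q
  linear_combination (-(qp Q (2 * n) * R1 * (1 - β') * (1 - β' * Q) * R2)) * e1
    - (qp Q (2 * n) * R2 * (1 - α') * (1 - α' * Q) * R1) * e2

lemma finite_triple {q W : ℂ} (hq0 : q ≠ 0) (hq : ‖q ^ 2‖ < 1) (hW : W ≠ 0) (n : ℕ) :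
    HasSum (fun k : ℤ => cc (q ^ 2) n k * q ^ (k ^ 2) * W ^ k)
      (∏ j ∈ Finset.range n, (1 + q ^ (2 * j + 1) * W) * (1 + q ^ (2 * j + 1) * W⁻¹)) := by
  induction n with
  | zero =>
    simp only [Finset.range_zero, Finset.prod_empty]
    have := hasSum_single (f := fun k : ℤ => cc (q ^ 2) 0 k * q ^ (k ^ 2) * W ^ k) 0 (fun k hk => ?_)
    · exact hasSum_conv this (fun k => rfl) (by simp [cc, rr, qp])
    · rcases lt_or_gt_of_ne hk with h | h
      · simp [cc, rr, h]
      · simp [cc, rr, h]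
  | succ n ih =>
    rw [Finset.prod_range_succ]
    generalize (∏ j ∈ Finset.range n, (1 + q ^ (2 * j + 1) * W) * (1 + q ^ (2 * j + 1) * W⁻¹)) = P at *
    have i1 : HasSum (fun k : ℤ => cc (q ^ 2) n (k - 1) * q ^ ((k - 1) ^ 2) * W ^ (k - 1)) P :=
      hasSum_conv ((Equiv.subRight (1 : ℤ)).hasSum_iff.2 ih) (fun k => rfl) rfl
    have i2 : HasSum (fun k : ℤ => cc (q ^ 2) n (k + 1) * q ^ ((k + 1) ^ 2) * W ^ (k + 1)) P :=
      hasSum_conv ((Equiv.addRight (1 : ℤ)).hasSum_iff.2 ih) (fun k => rfl) rfl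
    have := ((ih.mul_left (1 + q ^ (4 * n + 2))).add (i1.mul_left (q ^ (2 * n + 1) * W))).add
      (i2.mul_left (q ^ (2 * n + 1) * W⁻¹))
    refine hasSum_conv this (fun k => ?_) ?_
    · rw [cc_step hq0 hq, zpow_sub_one₀ hW, zpow_add_one₀ hW]
      field_simp
    · have : q ^ (4 * n + 2) = q ^ (2 * n + 1) * q ^ (2 * n + 1) := by rw [← pow_add]; congr 1; ring
      rw [this]
      field_simp
      ring

lemma summable_pow_succ {Q : ℂ} (hQ : ‖Q‖ < 1) : Summable fun n : ℕ => ‖Q ^ (n + 1)‖ := by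
  simp_rw [norm_pow]
  exact (summable_nat_add_iff 1).2 (summable_geometric_of_lt_one (norm_nonneg _) hQ)

lemma summable_pow_odd {q : ℂ} (hq : ‖q‖ < 1) : Summable fun n : ℕ => ‖q ^ (2 * n + 1)‖ := by
  have h : ‖q‖ ^ 2 < 1 := by nlinarith [norm_nonneg q]
  have := (summable_geometric_of_lt_one (by positivity) h).mul_left ‖q‖
  refine this.congr fun n => ?_
  rw [norm_pow, pow_succ _ (2 * n), pow_mul, mul_comm]

/-- infinite q-Pochhammer symbol -/
noncomputable def qpi (Q : ℂ) : ℂ := ∏' j : ℕ, (1 - Q ^ (j + 1))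

lemma mult_aux {f : ℕ → ℂ} (h : Summable fun n => ‖f n‖) (a : ℂ) :
    Multipliable fun n => 1 + f n * a := by
  apply multipliable_one_add_of_summable
  simp_rw [norm_mul]
  exact h.mul_right _

lemma tendsto_qp {Q : ℂ} (hQ : ‖Q‖ < 1) : Tendsto (qp Q) atTop (𝓝 (qpi Q)) := by
  have : Multipliable fun n : ℕ => (1 - Q ^ (n + 1)) := by
    refine (mult_aux (summable_pow_succ hQ) (-1)).congr fun n => ?_
    ring
  exact this.hasProd.tendsto_prod_nat

lemma qpi_ne {Q : ℂ} (hQ : ‖Q‖ < 1) : qpi Q ≠ 0 := by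
  have := tprod_one_add_ne_zero_of_summable (f := fun n : ℕ => - Q ^ (n + 1))
    (fun n => by have := one_sub_pow_ne hQ n; rwa [← sub_eq_add_neg])
    (by simpa only [norm_neg] using summable_pow_succ hQ)
  simpa only [qpi, sub_eq_add_neg] using this

lemma triple_product {q W : ℂ} (hq0 : q ≠ 0) (hq : ‖q‖ < 1) (hW : W ≠ 0)
    (hs : Summable fun k : ℤ => ‖q ^ (k ^ 2) * W ^ k‖) :
    ∑' k : ℤ, q ^ (k ^ 2) * W ^ k = qpi (q ^ 2) *
      ((∏' j : ℕ, (1 + q ^ (2 * j + 1) * W)) * ∏' j : ℕ, (1 + q ^ (2 * j + 1) * W⁻¹)) := by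
  have hQ : ‖q ^ 2‖ < 1 := by rw [norm_pow]; nlinarith [norm_nonneg q]
  have t0 := tendsto_qp hQ
  have t1 := t0.inv₀ (qpi_ne hQ)
  obtain ⟨C1, hC1⟩ := (Metric.isBounded_range_of_tendsto _ t0).exists_norm_le
  obtain ⟨C2, hC2⟩ := (Metric.isBounded_range_of_tendsto _ t1).exists_norm_le
  have hC1' : ∀ n, ‖qp (q ^ 2) n‖ ≤ C1 := fun n => hC1 _ ⟨n, rfl⟩
  have hC2p : 0 ≤ C2 := (norm_nonneg _).trans (hC2 _ ⟨0, rfl⟩)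
  have hC2' : ∀ k, ‖rr (q ^ 2) k‖ ≤ C2 := fun k => by
    rw [rr]; split_ifs
    · simpa using hC2p
    · exact hC2 _ ⟨k.toNat, rfl⟩
  have hC1p : 0 ≤ C1 := (norm_nonneg _).trans (hC1' 0)
  have tr : ∀ k : ℤ, Tendsto (fun n : ℕ => rr (q ^ 2) (n + k)) atTop (𝓝 (qpi (q ^ 2))⁻¹) := by
    intro k
    have h1 : Tendsto (fun n : ℕ => ((n : ℤ) + k).toNat) atTop atTop := by
      refine tendsto_atTop.2 fun b => ?_
      filter_upwards [eventually_ge_atTop (b + k.natAbs)] with n hn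
      omega
    refine (t1.comp h1).congr' ?_
    filter_upwards [eventually_ge_atTop k.natAbs] with n hn
    rw [rr, if_neg (by omega)]
    rfl
  have t2 : Tendsto (fun n : ℕ => qp (q ^ 2) (2 * n)) atTop (𝓝 (qpi (q ^ 2))) :=
    t0.comp (tendsto_id.const_mul_atTop' (by norm_num))
  have tc : ∀ k : ℤ, Tendsto (fun n : ℕ => cc (q ^ 2) n k * q ^ (k ^ 2) * W ^ k) atTop
      (𝓝 ((qpi (q ^ 2))⁻¹ * (q ^ (k ^ 2) * W ^ k))) := by
    intro k
    have h1 := ((t2.mul (tr (-k))).mul (tr k)).mul_const (q ^ (k ^ 2) * W ^ k)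
    rw [mul_inv_cancel₀ (qpi_ne hQ), one_mul] at h1
    refine h1.congr fun n => ?_
    rw [cc, sub_eq_add_neg, mul_assoc _ (q ^ (k^2))]
  have lim1 := tendsto_tsum_of_dominated_convergence (𝓕 := atTop)
    (f := fun (n : ℕ) (k : ℤ) => cc (q ^ 2) n k * q ^ (k ^ 2) * W ^ k)
    (g := fun k : ℤ => (qpi (q ^ 2))⁻¹ * (q ^ (k ^ 2) * W ^ k))
    (bound := fun k : ℤ => C1 * C2 * C2 * ‖q ^ (k ^ 2) * W ^ k‖)
    (hs.mul_left _) tc (Eventually.of_forall fun n k => by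
      rw [mul_assoc, norm_mul, cc, norm_mul, norm_mul]
      have := hC1' (2 * n)
      have := hC2' (n - k)
      have := hC2' (n + k)
      gcongr)
  have e1 : ∀ n : ℕ, ∑' k : ℤ, cc (q ^ 2) n k * q ^ (k ^ 2) * W ^ k =
      (∏ j ∈ Finset.range n, (1 + q ^ (2 * j + 1) * W)) *
      ∏ j ∈ Finset.range n, (1 + q ^ (2 * j + 1) * W⁻¹) := fun n => by
    rw [(finite_triple hq0 hQ hW n).tsum_eq, Finset.prod_mul_distrib]
  simp_rw [e1] at lim1
  have so := summable_pow_odd hq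
  have lim2 := (mult_aux so W).hasProd.tendsto_prod_nat.mul (mult_aux so W⁻¹).hasProd.tendsto_prod_nat
  have := tendsto_nhds_unique lim1 lim2
  rw [← this, tsum_mul_left, mul_inv_cancel_left₀ (qpi_ne hQ)]

lemma norm_qexp {τ : ℂ} (hτ : 0 < τ.im) : ‖cexp (π * I * τ)‖ < 1 := by
  rw [Complex.norm_exp]
  simp
  positivity

lemma norm_Qexp {τ : ℂ} (hτ : 0 < τ.im) : ‖cexp (2 * π * I * τ)‖ < 1 := by
  rw [Complex.norm_exp]
  simp
  positivity

lemma qexp_sq (τ : ℂ) : cexp (π * I * τ) ^ 2 = cexp (2 * π * I * τ) := by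
  rw [← Complex.exp_nat_mul]; congr 1; push_cast; ring

lemma jt_term_eq (k : ℤ) (z τ : ℂ) : jacobiTheta₂_term k z τ =
    cexp (π * I * τ) ^ (k ^ 2) * cexp (2 * π * I * z) ^ k := by
  rw [jacobiTheta₂_term, ← Complex.exp_int_mul, ← Complex.exp_int_mul, ← Complex.exp_add]
  congr 1; push_cast; ring

lemma jt_prod (z : ℂ) {τ : ℂ} (hτ : 0 < τ.im) : jacobiTheta₂ z τ = qpi (cexp (2 * π * I * τ)) *
      ((∏' j : ℕ, (1 + cexp (π * I * τ) ^ (2 * j + 1) * cexp (2 * π * I * z))) *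
        ∏' j : ℕ, (1 + cexp (π * I * τ) ^ (2 * j + 1) * cexp (-(2 * π * I * z)))) := by
  have h := triple_product (q := cexp (π * I * τ)) (W := cexp (2 * π * I * z)) (Complex.exp_ne_zero _)
    (norm_qexp hτ) (Complex.exp_ne_zero _)
    (by simpa only [jt_term_eq] using ((summable_jacobiTheta₂_term_iff z τ).2 hτ).norm)
  rw [qexp_sq] at h
  rw [Complex.exp_neg, ← h, jacobiTheta₂]
  exact tsum_congr fun k => jt_term_eq k z τ

/-- jacobiTheta₂ zero set -/
lemma jt_ne_zero (z : ℂ) {τ : ℂ} (hτ : 0 < τ.im)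
    (h : ∀ a b : ℤ, z ≠ 1/2 + τ/2 + a + b * τ) : jacobiTheta₂ z τ ≠ 0 := by
  rw [jt_prod z hτ]
  have so := summable_pow_odd (norm_qexp hτ)
  have key : ∀ (w : ℂ), (∀ a b : ℤ, w ≠ 1/2 + τ/2 + a + b * τ) →
      ∏' j : ℕ, (1 + cexp (π * I * τ) ^ (2 * j + 1) * cexp (2 * π * I * w)) ≠ 0 := by
    intro w hw
    refine tprod_one_add_ne_zero_of_summable (fun j hj => ?_) ?_
    · rw [← Complex.exp_nat_mul, ← Complex.exp_add] at hj
      have h1 : cexp (((2 * j + 1 : ℕ) : ℂ) * (π * I * τ) + 2 * π * I * w) = cexp (π * I) := by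
        rw [Complex.exp_pi_mul_I]; linear_combination hj
      obtain ⟨n, hn⟩ := Complex.exp_eq_exp_iff_exists_int.1 h1
      have h2 : (2 * π * I : ℂ) ≠ 0 := Complex.two_pi_I_ne_zero
      refine hw n (-(j + 1)) (mul_left_cancel₀ h2 ?_)
      push_cast at hn ⊢
      linear_combination hn
    · simp_rw [norm_mul]
      exact so.mul_right _
  refine mul_ne_zero (qpi_ne (norm_Qexp hτ)) (mul_ne_zero (key z h) ?_)
  have := key (-z) (fun a b hab => h (-a - 1) (-b - 1) (by push_cast; linear_combination -hab))
  simpa only [mul_neg] using this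

lemma theta1_ne_zero {z τ : ℂ} (hτ : 0 < τ.im) (h : ¬ inLattice τ z) : theta1 z τ ≠ 0 := by
  rw [theta1_eq]
  refine neg_ne_zero.2 (mul_ne_zero (Complex.exp_ne_zero _) (jt_ne_zero _ hτ fun a b hab => h ⟨a, b, ?_⟩))
  linear_combination hab

lemma not_inLattice_of_Ioo {τ : ℂ} (hτ : 0 < τ.im) {t : ℝ} (ht : t ∈ Set.Ioo (0:ℝ) 1) :
    ¬ inLattice τ t := by
  rintro ⟨a, b, h⟩
  have h1 := congrArg Complex.im h
  simp at h1
  have hb : b = 0 := by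
    rcases h1 with h1 | h1
    · exact h1
    · exact absurd h1 hτ.ne'
  subst hb
  simp at h
  have h2 : t = a := by exact_mod_cast h
  have h3 := ht.1
  have h4 := ht.2
  rw [h2] at h3 h4
  have : (0:ℤ) < a := by exact_mod_cast h3
  have : a < (1:ℤ) := by exact_mod_cast h4
  omega

end TripleProduct

section Products
open scoped Real

lemma one_sub_slit {z : ℂ} (hz : ‖z‖ < 1) : 1 + -z ∈ slitPlane := by
  refine Or.inl ?_
  have := (Complex.abs_re_le_norm z)
  have := (le_abs_self z.re)
  simp; linarith

/-- sum of logarithms of the factors of the product -/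
noncomputable def lgs (Q w : ℂ) : ℂ := ∑' j : ℕ, Complex.log (1 + -(Q ^ (j + 1) * w))
/-- the product -/
noncomputable def pr (Q w : ℂ) : ℂ := ∏' j : ℕ, (1 + -(Q ^ (j + 1) * w))

lemma norm_fac_le {Q w : ℂ} {ρ : ℝ} (hQ : ‖Q‖ ≤ ρ) (hw : ‖w‖ ≤ 1) (j : ℕ) :
    ‖Q ^ (j + 1) * w‖ ≤ ρ ^ (j + 1) := by
  rw [norm_mul, norm_pow]
  calc ‖Q‖ ^ (j + 1) * ‖w‖ ≤ ρ ^ (j + 1) * 1 := by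
        have : 0 ≤ ρ := (norm_nonneg _).trans hQ
        gcongr
    _ = _ := mul_one _

lemma norm_fac_lt {Q w : ℂ} (hQ : ‖Q‖ < 1) (hw : ‖w‖ ≤ 1) (j : ℕ) :
    ‖Q ^ (j + 1) * w‖ < 1 :=
  (norm_fac_le le_rfl hw j).trans_lt (pow_lt_one₀ (norm_nonneg Q) hQ (Nat.succ_ne_zero j))

lemma norm_logfac_le {Q w : ℂ} {ρ : ℝ} (hρ : ρ < 1) (hQ : ‖Q‖ ≤ ρ) (hw : ‖w‖ ≤ 1) (j : ℕ) :
    ‖Complex.log (1 + -(Q ^ (j + 1) * w))‖ ≤ ((1 - ρ)⁻¹ / 2 + 1) * ρ ^ (j + 1) := by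
  have h0 : 0 ≤ ρ := (norm_nonneg _).trans hQ
  have h1 := norm_fac_le hQ hw j
  have h2 : ρ ^ (j + 1) ≤ ρ := pow_le_of_le_one h0 hρ.le (Nat.succ_ne_zero j)
  set z := Q ^ (j + 1) * w
  have h3 : ‖-z‖ < 1 := by rw [norm_neg]; linarith
  refine (Complex.norm_log_one_add_le h3).trans ?_
  rw [norm_neg]
  have h4 : (1 - ‖z‖)⁻¹ ≤ (1 - ρ)⁻¹ := inv_anti₀ (by linarith) (by linarith)
  have h5 : 0 ≤ (1 - ‖z‖)⁻¹ := inv_nonneg.2 (by linarith)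
  have h6 : ‖z‖ ^ 2 ≤ ρ ^ (j + 1) := by nlinarith [norm_nonneg z]
  have h7 : ‖z‖ ^ 2 * (1 - ‖z‖)⁻¹ ≤ ρ ^ (j + 1) * (1 - ρ)⁻¹ := by gcongr
  linarith

lemma summable_bd {ρ : ℝ} (h0 : 0 ≤ ρ) (hρ : ρ < 1) :
    Summable fun j : ℕ => ((1 - ρ)⁻¹ / 2 + 1) * ρ ^ (j + 1) :=
  ((summable_nat_add_iff 1).2 (summable_geometric_of_lt_one h0 hρ)).mul_left _

lemma exp_lgs {Q w : ℂ} (hQ : ‖Q‖ < 1) (hw : ‖w‖ ≤ 1) : cexp (lgs Q w) = pr Q w := by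
  refine Complex.cexp_tsum_eq_tprod (fun j => slitPlane_ne_zero (one_sub_slit (norm_fac_lt hQ hw j))) ?_
  exact Summable.of_norm_bounded (summable_bd (norm_nonneg _) hQ) (fun j => norm_logfac_le hQ le_rfl hw j)

lemma lgs_continuousOn {ρ : ℝ} (h0 : 0 ≤ ρ) (hρ : ρ < 1) :
    ContinuousOn (fun p : ℂ × ℂ => lgs p.1 p.2) {p | ‖p.1‖ ≤ ρ ∧ ‖p.2‖ ≤ 1} := by
  refine continuousOn_tsum (fun j => ?_) (summable_bd h0 hρ) (fun j p hp => norm_logfac_le hρ hp.1 hp.2 j)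
  refine ContinuousOn.clog (by fun_prop) fun p hp => ?_
  exact one_sub_slit (norm_fac_lt (hp.1.trans_lt hρ) hp.2 j)

lemma lgs_differentiableAt {Q w : ℂ} (hQ : ‖Q‖ < 1) (hw : ‖w‖ ≤ 1) :
    DifferentiableAt ℂ (fun Q => lgs Q w) Q := by
  obtain ⟨ρ, h1, h2⟩ := exists_between hQ
  have hd : DifferentiableOn ℂ (fun Q => lgs Q w) (Metric.ball 0 ρ) := by
    refine differentiableOn_tsum_of_summable_norm (summable_bd ((norm_nonneg _).trans h1.le) h2)
      (fun j => ?_) Metric.isOpen_ball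
      (fun j p hp => norm_logfac_le h2 (by simpa using (mem_ball_zero_iff.1 hp).le) hw j)
    refine DifferentiableOn.clog (by fun_prop) fun p hp => ?_
    exact one_sub_slit (norm_fac_lt ((mem_ball_zero_iff.1 hp).trans h2) hw j)
  exact hd.differentiableAt (Metric.isOpen_ball.mem_nhds (by simpa using h1))

lemma mult_pr {Q : ℂ} (hQ : ‖Q‖ < 1) (w : ℂ) : Multipliable fun j : ℕ => 1 + -(Q ^ (j + 1) * w) :=
  (mult_aux (summable_pow_succ hQ) (-w)).congr fun j => by ring

lemma qpi_eq_pr (Q : ℂ) : qpi Q = pr Q 1 := by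
  simp [qpi, pr, sub_eq_add_neg]

lemma theta1_prod (z : ℂ) {τ : ℂ} (hτ : 0 < τ.im) : theta1 z τ =
    -I * cexp (π * I * τ / 4) * (cexp (π * I * z) - cexp (-(π * I * z))) *
      (qpi (cexp (2 * π * I * τ)) * pr (cexp (2 * π * I * τ)) (cexp (2 * π * I * z)) *
        pr (cexp (2 * π * I * τ)) (cexp (-(2 * π * I * z)))) := by
  rw [theta1_eq, jt_prod _ hτ]
  have e1 : ∀ j : ℕ, 1 + cexp (π * I * τ) ^ (2 * j + 1) * cexp (2 * π * I * (z + 1/2 + τ/2)) =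
      1 + -(cexp (2 * π * I * τ) ^ (j + 1) * cexp (2 * π * I * z)) := by
    intro j
    rw [← qexp_sq τ, ← pow_mul, show (2 * π * I * (z + 1/2 + τ/2) : ℂ) = 2 * π * I * z + π * I + π * I * τ by ring,
      Complex.exp_add, Complex.exp_add, Complex.exp_pi_mul_I, show 2 * (j + 1) = 2 * j + 1 + 1 by ring,
      pow_succ _ (2 * j + 1)]
    ring
  have e2 : ∀ j : ℕ, 1 + cexp (π * I * τ) ^ (2 * j + 1) * cexp (-(2 * π * I * (z + 1/2 + τ/2))) =
      1 + -(cexp (2 * π * I * τ) ^ j * cexp (-(2 * π * I * z))) := by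
    intro j
    rw [← qexp_sq τ, ← pow_mul, show (-(2 * π * I * (z + 1/2 + τ/2)) : ℂ) = -(2 * π * I * z) + -(π * I) + -(π * I * τ) by ring,
      Complex.exp_add, Complex.exp_add, Complex.exp_neg (π * I), Complex.exp_pi_mul_I, pow_succ,
      Complex.exp_neg (π * I * τ)]
    field_simp [Complex.exp_ne_zero (π * I * τ)]
  simp_rw [e1, e2]
  have hm : Multipliable fun j : ℕ => 1 + -(cexp (2 * π * I * τ) ^ (j + 1) * cexp (-(2 * π * I * z))) :=
    mult_pr (norm_Qexp hτ) _
  have e3 : ∏' j : ℕ, (1 + -(cexp (2 * π * I * τ) ^ j * cexp (-(2 * π * I * z)))) =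
      (1 - cexp (-(2 * π * I * z))) * pr (cexp (2 * π * I * τ)) (cexp (-(2 * π * I * z))) := by
    have h1 := hm.hasProd.tendsto_prod_nat.const_mul (1 - cexp (-(2 * π * I * z)))
    have h2 : Multipliable fun j : ℕ => 1 + -(cexp (2 * π * I * τ) ^ j * cexp (-(2 * π * I * z))) := by
      refine (mult_aux (f := fun j => cexp (2 * π * I * τ) ^ j) ?_ (-cexp (-(2 * π * I * z)))).congr
        fun j => by ring
      simp_rw [norm_pow]
      exact summable_geometric_of_lt_one (norm_nonneg _) (norm_Qexp hτ)
    have h3 := h2.hasProd.tendsto_prod_nat.comp (tendsto_add_atTop_nat 1)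
    refine tendsto_nhds_unique h3 (h1.congr fun n => ?_)
    simp only [Function.comp]
    rw [Finset.prod_range_succ', mul_comm]
    simp [sub_eq_add_neg]
  rw [e3, ← pr]
  have e4 : cexp (-(2 * π * I * z)) = cexp (-(π * I * z)) * cexp (-(π * I * z)) := by
    rw [← Complex.exp_add]; congr 1; ring
  have e5 : cexp (π * I * z) * cexp (-(π * I * z)) = 1 := by
    rw [← Complex.exp_add]; simp
  rw [show (π * I * τ / 4 + π * I * (z + 1/2) : ℂ) = π * I * τ / 4 + π * I * z + π * I * (1/2) by ring,
    Complex.exp_add, Complex.exp_add, exp_pi_half]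
  generalize pr (cexp (2 * π * I * τ)) (cexp (-(2 * π * I * z))) = A1
  rw [e4]
  linear_combination (cexp (π * I * τ / 4) * I * cexp (-(π * I * z)) * qpi (cexp (2 * π * I * τ)) *
    pr (cexp (2 * π * I * τ)) (cexp (2 * π * I * z)) * A1) * e5

lemma theta1_prod_sin (z : ℂ) {τ : ℂ} (hτ : 0 < τ.im) : theta1 z τ =
    2 * cexp (π * I * τ / 4) * Complex.sin (π * z) *
      (qpi (cexp (2 * π * I * τ)) * pr (cexp (2 * π * I * τ)) (cexp (2 * π * I * z)) *
        pr (cexp (2 * π * I * τ)) (cexp (-(2 * π * I * z)))) := by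
  rw [theta1_prod z hτ, Complex.sin, show (-(π * z) * I : ℂ) = -(π * I * z) by ring,
    show (π * z * I : ℂ) = π * I * z by ring]
  ring

lemma norm_w (t : ℝ) : ‖cexp (2 * π * I * t)‖ ≤ 1 := by
  rw [Complex.norm_exp]; simp
lemma norm_w' (t : ℝ) : ‖cexp (-(2 * π * I * t))‖ ≤ 1 := by
  rw [Complex.norm_exp]; simp

/-- the regular part of the logarithm of the prime form -/
noncomputable def MM (τ : ℂ) (t : ℝ) : ℂ :=
  lgs (cexp (2 * π * I * τ)) (cexp (2 * π * I * t)) + lgs (cexp (2 * π * I * τ)) (cexp (-(2 * π * I * t)))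
    - 2 * lgs (cexp (2 * π * I * τ)) 1

lemma MM_continuous_strip {δ : ℝ} (hδ : 0 < δ) :
    ContinuousOn (fun p : ℂ × ℝ => MM p.1 p.2) {p | δ ≤ p.1.im} := by
  have hρ : Real.exp (-2 * π * δ) < 1 := by rw [Real.exp_lt_one_iff]; have := Real.pi_pos; nlinarith
  have hc := lgs_continuousOn (Real.exp_pos _).le hρ
  have hb : ∀ p : ℂ × ℝ, δ ≤ p.1.im → ‖cexp (2 * π * I * p.1)‖ ≤ Real.exp (-2 * π * δ) := by
    intro p hp
    rw [Complex.norm_exp, Real.exp_le_exp]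
    simp
    have := Real.pi_pos
    nlinarith
  have h1 := hc.comp (t := {p : ℂ × ℂ | ‖p.1‖ ≤ Real.exp (-2 * π * δ) ∧ ‖p.2‖ ≤ 1})
    (s := {p : ℂ × ℝ | δ ≤ p.1.im})
    (f := fun p => (cexp (2 * π * I * p.1), cexp (2 * π * I * p.2))) (by fun_prop)
    (fun p hp => ⟨hb p hp, norm_w p.2⟩)
  have h2 := hc.comp (t := {p : ℂ × ℂ | ‖p.1‖ ≤ Real.exp (-2 * π * δ) ∧ ‖p.2‖ ≤ 1})
    (s := {p : ℂ × ℝ | δ ≤ p.1.im})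
    (f := fun p => (cexp (2 * π * I * p.1), cexp (-(2 * π * I * p.2)))) (by fun_prop)
    (fun p hp => ⟨hb p hp, norm_w' p.2⟩)
  have h3 := hc.comp (t := {p : ℂ × ℂ | ‖p.1‖ ≤ Real.exp (-2 * π * δ) ∧ ‖p.2‖ ≤ 1})
    (s := {p : ℂ × ℝ | δ ≤ p.1.im})
    (f := fun p => (cexp (2 * π * I * p.1), 1)) (by fun_prop)
    (fun p hp => ⟨hb p hp, by simp⟩)
  exact (h1.add h2).sub (h3.const_smul (2:ℂ))

lemma MM_continuous {τ : ℂ} (hτ : 0 < τ.im) : Continuous (MM τ) := by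
  have := (MM_continuous_strip hτ).comp_continuous (f := fun t : ℝ => (τ, t)) (by fun_prop)
    (fun t => le_refl τ.im)
  exact this

lemma MM_zero (τ : ℂ) : MM τ 0 = 0 := by
  simp [MM]; ring

lemma exp_MM {τ : ℂ} (hτ : 0 < τ.im) (t : ℝ) : cexp (MM τ t) * qpi (cexp (2 * π * I * τ)) ^ 2 =
    pr (cexp (2 * π * I * τ)) (cexp (2 * π * I * t)) * pr (cexp (2 * π * I * τ)) (cexp (-(2 * π * I * t))) := by
  have hQ := norm_Qexp hτ
  rw [← exp_lgs hQ (norm_w t), ← exp_lgs hQ (norm_w' t), qpi_eq_pr, ← exp_lgs hQ (by simp), MM,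
    ← Complex.exp_add, ← Complex.exp_nat_mul, ← Complex.exp_add]
  congr 1; push_cast; ring

lemma theta1_exp_MM {τ : ℂ} (hτ : 0 < τ.im) (t : ℝ) : theta1 t τ =
    2 * cexp (π * I * τ / 4) * qpi (cexp (2 * π * I * τ)) ^ 3 * Complex.sin (π * t) * cexp (MM τ t) := by
  rw [theta1_prod_sin t hτ, mul_assoc (qpi _), ← exp_MM hτ]
  ring

lemma theta1_differentiable {τ : ℂ} (hτ : 0 < τ.im) : Differentiable ℂ (fun z => theta1 z τ) := by
  simp_rw [theta1_eq]
  have : Differentiable ℂ (fun z => jacobiTheta₂ z τ) := fun z => differentiableAt_jacobiTheta₂_fst z hτ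
  have h2 : Differentiable ℂ (fun z => jacobiTheta₂ (z + 1/2 + τ/2) τ) :=
    this.comp (by fun_prop : Differentiable ℂ (fun z : ℂ => z + 1/2 + τ/2))
  fun_prop

lemma theta1'_zero {τ : ℂ} (hτ : 0 < τ.im) : theta1' 0 τ =
    2 * π * cexp (π * I * τ / 4) * qpi (cexp (2 * π * I * τ)) ^ 3 := by
  have h1 : HasDerivAt (fun z => theta1 z τ) (theta1' 0 τ) ((0:ℝ):ℂ) := by
    rw [Complex.ofReal_zero]; exact (theta1_differentiable hτ 0).hasDerivAt
  have h2 := h1.comp_ofReal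
  have h3 : HasDerivAt (fun t : ℝ => Complex.sin (π * t)) (π : ℂ) 0 := by
    have : HasDerivAt (fun z : ℂ => Complex.sin (π * z)) (π : ℂ) ((0:ℝ):ℂ) := by
      have := ((hasDerivAt_id ((0:ℝ):ℂ)).const_mul (π:ℂ)).csin
      simpa using this
    exact this.comp_ofReal
  rw [hasDerivAt_iff_tendsto_slope] at h2 h3
  have h4 : Tendsto (fun t : ℝ => cexp (MM τ t)) (𝓝[≠] 0) (𝓝 1) := by
    have : Continuous fun t : ℝ => cexp (MM τ t) := (MM_continuous hτ).cexp
    have := (this.tendsto 0).mono_left (nhdsWithin_le_nhds (s := {0}ᶜ))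
    simpa [MM_zero] using this
  have h5 := (h3.mul h4).const_mul (2 * cexp (π * I * τ / 4) * qpi (cexp (2 * π * I * τ)) ^ 3)
  have := tendsto_nhds_unique h2 (h5.congr fun t => ?_)
  · rw [this]; ring
  · simp only [slope, vsub_eq_sub, theta1_exp_MM hτ]
    simp
    ring

lemma theta1'_zero_ne {τ : ℂ} (hτ : 0 < τ.im) : theta1' 0 τ ≠ 0 := by
  rw [theta1'_zero hτ]
  have := qpi_ne (norm_Qexp hτ)
  have := Complex.ofReal_ne_zero.2 Real.pi_ne_zero
  have := Complex.exp_ne_zero (π * I * τ / 4)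
  simp_all

lemma EF_eq {τ : ℂ} (hτ : 0 < τ.im) (t : ℝ) : EF t τ = Complex.sin (π * t) / π * cexp (MM τ t) := by
  rw [EF, theta1_exp_MM hτ, theta1'_zero hτ]
  have := qpi_ne (norm_Qexp hτ)
  have := Complex.ofReal_ne_zero.2 Real.pi_ne_zero
  have := Complex.exp_ne_zero (π * I * τ / 4)
  field_simp

lemma jacobi_deriv {τ : ℂ} (hτ : 0 < τ.im) : theta1' 0 τ = π * T2 0 τ * T4 0 (2 * τ) ^ 2 := by
  have h2 : 0 < (2 * τ).im := by simp; exact hτ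
  have hQ := norm_Qexp hτ
  rw [theta1'_zero hτ, T2, zero_add, theta1_prod_sin _ hτ, T4, zero_add, jt_prod _ h2]
  have s1 : (π * (1/2) : ℂ) = π / 2 := by ring
  have s2 : cexp (2 * π * I * (1/2)) = -1 := by
    rw [show (2 * π * I * (1/2) : ℂ) = π * I by ring, Complex.exp_pi_mul_I]
  have s3 : cexp (-(2 * π * I * (1/2))) = -1 := by
    rw [Complex.exp_neg, s2]; norm_num
  rw [s1, s2, s3, Complex.sin_pi_div_two]
  have s4 : cexp (2 * π * I * (2 * τ)) = cexp (2 * π * I * τ) ^ 2 := by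
    rw [← Complex.exp_nat_mul]; congr 1; push_cast; ring
  have s5 : cexp (π * I * (2 * τ)) = cexp (2 * π * I * τ) := by congr 1; ring
  rw [s4, s5]
  set Q := cexp (2 * π * I * τ)
  have hQ2 : ‖Q ^ 2‖ < 1 := by rw [norm_pow]; nlinarith [norm_nonneg Q]
  have m1 : Multipliable fun n : ℕ => (1 - Q ^ (n + 1)) := (mult_pr hQ 1).congr fun n => by ring
  have m2 : Multipliable fun n : ℕ => (1 - (Q ^ 2) ^ (n + 1)) := (mult_pr hQ2 1).congr fun n => by ring
  have m3 : Multipliable fun n : ℕ => (1 + Q ^ (2 * n + 1) * (-1)) := mult_aux (summable_pow_odd hQ) (-1)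
  set e := ∏' j : ℕ, (1 + Q ^ (2 * j + 1) * (-1)) with he
  have r1 : qpi (Q ^ 2) = qpi Q * pr Q (-1) := by
    rw [qpi, qpi, pr, ← m1.tprod_mul (mult_pr hQ (-1))]
    exact tprod_congr fun j => by ring
  have r2 : e * qpi (Q ^ 2) = qpi Q := by
    have := tprod_even_mul_odd (f := fun n : ℕ => (1 - Q ^ (n + 1))) (m3.congr fun n => by ring)
      (m2.congr fun n => by rw [← pow_mul]; ring)
    rw [qpi, qpi, ← this, he]
    congr 1
    · exact tprod_congr fun j => by ring
    · exact tprod_congr fun j => by rw [← pow_mul]; ring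
  have n1 := qpi_ne hQ
  have r3 : e * pr Q (-1) = 1 := by
    apply mul_left_cancel₀ n1
    linear_combination r2 - e * r1
  have r4 : e ^ 2 * qpi (Q ^ 2) ^ 2 = qpi Q ^ 2 := by rw [← mul_pow, r2]
  have r5 : e ^ 2 * pr Q (-1) ^ 2 = 1 := by rw [← mul_pow, r3, one_pow]
  generalize pr Q (-1) = d at *
  generalize qpi (Q ^ 2) = g at *
  linear_combination (-2 * π * cexp (π * I * τ / 4) * qpi Q * e ^ 2 * d ^ 2) * r4
    - (2 * π * cexp (π * I * τ / 4) * qpi Q * qpi Q ^ 2) * r5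

end Products

section Bilinear
open scoped Real

lemma theta1_sub_one (z τ : ℂ) : theta1 (z - 1) τ = - theta1 z τ := by
  have := theta1_add_one (z - 1) τ
  rw [sub_add_cancel] at this
  rw [this, neg_neg]

lemma T2_add_one (z τ : ℂ) : T2 (z + 1) τ = - T2 z τ := by
  rw [T2, T2, ← theta1_add_one]; congr 1; ring

lemma T4_add_one (z τ : ℂ) : T4 (z + 1) τ = T4 z τ := by
  rw [T4, T4, show z + 1 + 1/2 = z + 1/2 + 1 by ring, jacobiTheta₂_add_left]

lemma T44 (X Y : ℂ) {τ : ℂ} (hτ : 0 < τ.im) : T4 (X + Y) τ * T4 (X - Y) τ =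
    jacobiTheta₂ (2 * X) (2 * τ) * jacobiTheta₂ (2 * Y) (2 * τ) -
      T2 (2 * X) (2 * τ) * T2 (2 * Y) (2 * τ) := by
  have := jt_mul (X + 1/2) Y hτ
  rw [show 2 * (X + 1/2) = 2 * X + 1 by ring, jacobiTheta₂_add_left, T2_add_one] at this
  rw [T4, T4, show X + Y + 1/2 = X + 1/2 + Y by ring, show X - Y + 1/2 = X + 1/2 - Y by ring, this]
  ring

lemma jt_sub_half (z τ : ℂ) : jacobiTheta₂ (z - 1/2) τ = T4 z τ := by
  rw [T4, ← jacobiTheta₂_add_left (z - 1/2)]; congr 1; ring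

lemma T34 (X Y : ℂ) {τ : ℂ} (hτ : 0 < τ.im) : jacobiTheta₂ (X + Y) τ * T4 (X - Y) τ =
    T4 (2 * X) (2 * τ) * T4 (2 * Y) (2 * τ) -
      theta1 (2 * X) (2 * τ) * theta1 (2 * Y) (2 * τ) := by
  have h := jt_mul (X + 1/4) (Y - 1/4) hτ
  rw [show X + 1/4 + (Y - 1/4) = X + Y by ring, show X + 1/4 - (Y - 1/4) = X - Y + 1/2 by ring, ← T4,
    show 2 * (X + 1/4) = 2 * X + 1/2 by ring, ← T4, show 2 * (Y - 1/4) = 2 * Y - 1/2 by ring,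
    T2_sub_half, T2_add_half, jt_sub_half] at h
  rw [h]; ring

lemma T2_add_tau (X τ : ℂ) : T2 (X + τ / 2) τ =
    cexp (-(π * I * τ / 4) - π * I * X) * jacobiTheta₂ X τ := by
  have h := jt_shift 1 X τ
  rw [T2_eq, show X + τ/2 + τ/2 = X + ((1:ℤ):ℂ) * τ by push_cast; ring, h, ← mul_assoc, ← Complex.exp_add]
  congr 2; push_cast; ring

lemma T22 (X Y : ℂ) {τ : ℂ} (hτ : 0 < τ.im) : T2 (X + Y) τ * T2 (X - Y) τ =
    T2 (2 * X) (2 * τ) * jacobiTheta₂ (2 * Y) (2 * τ) +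
      jacobiTheta₂ (2 * X) (2 * τ) * T2 (2 * Y) (2 * τ) := by
  have h := jt_mul (X + τ/2) Y hτ
  rw [show 2 * (X + τ/2) = 2 * X + (2 * τ)/2 by ring, T2_add_tau] at h
  rw [T2_eq (X + Y), T2_eq (X - Y), T2_eq (2 * X)]
  rw [show ∀ a b c d : ℂ, a * b * (c * d) = (a * c) * (b * d) by intros; ring,
    show X + Y + τ/2 = X + τ/2 + Y by ring, show X - Y + τ/2 = X + τ/2 - Y by ring, h, ← Complex.exp_add,
    mul_add]
  congr 1
  · rw [← mul_assoc]; congr 3; ring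
  · rw [← mul_assoc, ← mul_assoc, ← Complex.exp_add]
    rw [show (π * I * τ / 4 + π * I * (X + Y) + (π * I * τ / 4 + π * I * (X - Y)) +
      (-(π * I * (2 * τ) / 4) - π * I * (2 * X)) : ℂ) = 0 by ring, Complex.exp_zero, one_mul]

lemma T11 (X Y : ℂ) {τ : ℂ} (hτ : 0 < τ.im) : theta1 (X + Y) τ * theta1 (X - Y) τ =
    jacobiTheta₂ (2 * X) (2 * τ) * T2 (2 * Y) (2 * τ) -
      T2 (2 * X) (2 * τ) * jacobiTheta₂ (2 * Y) (2 * τ) := by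
  have h := T22 (X + 1/2) Y hτ
  rw [show 2 * (X + 1/2) = 2 * X + 1 by ring, jacobiTheta₂_add_left, T2_add_one,
    show X + 1/2 + Y = X + Y + 1/2 by ring, show X + 1/2 - Y = X - Y + 1/2 by ring, T2_add_half,
    T2_add_half] at h
  linear_combination h

lemma T12 (X Y : ℂ) {τ : ℂ} (hτ : 0 < τ.im) : theta1 (X + Y) τ * T2 (X - Y) τ =
    theta1 (2 * X) (2 * τ) * T4 (2 * Y) (2 * τ) +
      T4 (2 * X) (2 * τ) * theta1 (2 * Y) (2 * τ) := by
  have h := T22 (X - 1/4) (Y - 1/4) hτ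
  rw [show 2 * (X - 1/4) = 2 * X - 1/2 by ring, show 2 * (Y - 1/4) = 2 * Y - 1/2 by ring,
    show X - 1/4 + (Y - 1/4) = X + Y - 1/2 by ring, show X - 1/4 - (Y - 1/4) = X - Y by ring] at h
  simpa only [T2_sub_half, jt_sub_half] using h

-- consequences
lemma id_TT (x t : ℂ) {τ : ℂ} (hτ : 0 < τ.im) :
    2 * T2 (2 * x + t) (2 * τ) * jacobiTheta₂ t (2 * τ) =
      T2 (x + t) τ * T2 x τ - theta1 (x + t) τ * theta1 x τ := by
  have h1 := T22 (x + t/2) (t/2) hτ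
  have h2 := T11 (x + t/2) (t/2) hτ
  rw [show x + t/2 + t/2 = x + t by ring, show x + t/2 - t/2 = x by ring,
    show 2 * (x + t/2) = 2 * x + t by ring, show 2 * (t/2) = t by ring] at h1 h2
  rw [h1, h2]; ring

lemma id_dup (x t : ℂ) {τ : ℂ} (hτ : 0 < τ.im) :
    (theta1 (x - t) τ * T2 (x + t) τ + theta1 (x + t) τ * T2 (x - t) τ) * T4 0 (2 * τ) =
      2 * theta1 x τ * T2 x τ * T4 (2 * t) (2 * τ) := by
  have h1 := T12 x t hτ
  have h2 := T12 x (-t) hτ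
  have h3 := T12 x 0 hτ
  rw [add_zero, sub_zero, mul_zero, theta1_zero] at h3
  rw [mul_neg, T4_neg, theta1_neg, ← sub_eq_add_neg, sub_neg_eq_add] at h2
  rw [h1, h2]
  linear_combination -(2 * T4 (2 * t) (2 * τ)) * h3

lemma id_T2zero {τ : ℂ} (hτ : 0 < τ.im) :
    T2 0 τ ^ 2 = 2 * jacobiTheta₂ 0 (2 * τ) * T2 0 (2 * τ) := by
  have h := T22 0 0 hτ
  simp only [add_zero, sub_zero, mul_zero] at h
  linear_combination h

lemma id_addition (x t : ℂ) {τ : ℂ} (hτ : 0 < τ.im) :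
    theta1 (x + t) τ * theta1 (x - t) τ * T2 0 τ ^ 2 =
      theta1 x τ ^ 2 * T2 t τ ^ 2 - T2 x τ ^ 2 * theta1 t τ ^ 2 := by
  have h := T11 x t hτ
  have a1 := T11 x 0 hτ
  have a2 := T11 t 0 hτ
  have b1 := T22 x 0 hτ
  have b2 := T22 t 0 hτ
  simp only [add_zero, sub_zero, mul_zero] at a1 a2 b1 b2
  rw [id_T2zero hτ, h, pow_two, pow_two, pow_two, pow_two, a1, a2, b1, b2]
  ring

lemma id_p2 (t : ℂ) {τ : ℂ} (hτ : 0 < τ.im) : jacobiTheta₂ t τ * jacobiTheta₂ 0 τ =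
    jacobiTheta₂ t (2 * τ) ^ 2 + T2 t (2 * τ) ^ 2 := by
  have h := jt_mul (t/2) (t/2) hτ
  rw [add_halves, sub_self, show 2 * (t/2) = t by ring] at h
  rw [h]; ring

lemma id_r2 (t : ℂ) {τ : ℂ} (hτ : 0 < τ.im) : T4 t τ * T4 0 τ =
    jacobiTheta₂ t (2 * τ) ^ 2 - T2 t (2 * τ) ^ 2 := by
  have h := T44 (t/2) (t/2) hτ
  rw [add_halves, sub_self, show 2 * (t/2) = t by ring] at h
  rw [h]; ring

lemma id_pQ (t : ℂ) {τ : ℂ} (hτ : 0 < τ.im) : jacobiTheta₂ t τ * T4 0 τ =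
    T4 t (2 * τ) ^ 2 - theta1 t (2 * τ) ^ 2 := by
  have h := T34 (t/2) (t/2) hτ
  rw [add_halves, sub_self, show 2 * (t/2) = t by ring] at h
  rw [h]; ring

lemma id_rP (t : ℂ) {τ : ℂ} (hτ : 0 < τ.im) : T4 t τ * jacobiTheta₂ 0 τ =
    T4 t (2 * τ) ^ 2 + theta1 t (2 * τ) ^ 2 := by
  have h := T34 (t/2) (-(t/2)) hτ
  rw [add_neg_cancel, sub_neg_eq_add, add_halves, mul_neg, show 2 * (t/2) = t by ring, T4_neg, theta1_neg] at h
  rw [mul_comm, h]; ring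

lemma id_pr (t : ℂ) {τ : ℂ} (hτ : 0 < τ.im) : jacobiTheta₂ t τ * T4 t τ =
    T4 (2 * t) (2 * τ) * T4 0 (2 * τ) := by
  have h := T34 t 0 hτ
  rw [add_zero, sub_zero, mul_zero, theta1_zero] at h
  rw [h]; ring

lemma id_T1sq (t : ℂ) {τ : ℂ} (hτ : 0 < τ.im) :
    jacobiTheta₂ 0 τ ^ 2 * T4 t τ ^ 2 - T4 0 τ ^ 2 * jacobiTheta₂ t τ ^ 2 =
    2 * jacobiTheta₂ 0 (2 * τ) * T2 0 (2 * τ) * theta1 t τ ^ 2 := by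
  have p2 := jt_mul t 0 hτ
  have r2 := T44 t 0 hτ
  have P2 := id_p2 0 hτ
  have Q2 := id_r2 0 hτ
  have a1 := T11 t 0 hτ
  simp only [add_zero, sub_zero, mul_zero] at p2 r2 a1
  rw [pow_two (T4 t τ), pow_two (jacobiTheta₂ t τ), pow_two (theta1 t τ), p2, r2, a1,
    pow_two (jacobiTheta₂ 0 τ), pow_two (T4 0 τ), P2, Q2]
  ring

lemma id_T2t (t : ℂ) {τ : ℂ} (hτ : 0 < τ.im) :
    T2 t τ * T2 0 τ = 2 * T2 t (2 * τ) * jacobiTheta₂ t (2 * τ) := by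
  have h := T22 (t/2) (t/2) hτ
  rw [add_halves, sub_self, show 2 * (t/2) = t by ring] at h
  rw [h]; ring

lemma id_T1t (t : ℂ) {τ : ℂ} (hτ : 0 < τ.im) :
    theta1 t τ * T2 0 τ = 2 * theta1 t (2 * τ) * T4 t (2 * τ) := by
  have h := T12 (t/2) (t/2) hτ
  rw [add_halves, sub_self, show 2 * (t/2) = t by ring] at h
  rw [h]; ring

lemma id_wronsk (t h : ℂ) {τ : ℂ} (hτ : 0 < τ.im) :
    theta1 (t + h) (2 * τ) * T4 t (2 * τ) - T4 (t + h) (2 * τ) * theta1 t (2 * τ) =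
      theta1 (h/2) τ * T2 (t + h/2) τ := by
  have e := T12 ((t + h)/2) (-(t/2)) hτ
  rw [show (t + h)/2 + -(t/2) = h/2 by ring, show (t + h)/2 - -(t/2) = t + h/2 by ring,
    show 2 * ((t + h)/2) = t + h by ring, mul_neg, show 2 * (t/2) = t by ring, T4_neg, theta1_neg] at e
  rw [e]; ring

/-- the Pythagorean relation -/
lemma id_pyth (t : ℂ) {τ : ℂ} (hτ : 0 < τ.im) :
    T2 0 (2 * τ) ^ 2 * T4 t (2 * τ) ^ 2 - jacobiTheta₂ 0 (2 * τ) ^ 2 * theta1 t (2 * τ) ^ 2 =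
      T4 0 (2 * τ) ^ 2 * T2 t (2 * τ) ^ 2 := by
  have a1 := id_p2 t hτ
  have a2 := id_r2 t hτ
  have a3 := id_pQ t hτ
  have a4 := id_rP t hτ
  have b1 := id_p2 0 hτ
  have b2 := id_r2 0 hτ
  have b3 := id_pQ 0 hτ
  rw [theta1_zero] at b3
  generalize jacobiTheta₂ t τ = p at *
  generalize T4 t τ = r at *
  generalize jacobiTheta₂ 0 τ = P at *
  generalize T4 0 τ = Q at *
  generalize jacobiTheta₂ t (2 * τ) = S3 at *
  generalize T2 t (2 * τ) = S2 at *
  generalize T4 t (2 * τ) = S4 at *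
  generalize theta1 t (2 * τ) = S1 at *
  generalize jacobiTheta₂ 0 (2 * τ) = a at *
  generalize T2 0 (2 * τ) = b at *
  generalize T4 0 (2 * τ) = c at *
  have h1 : S4 ^ 2 = (r * P + p * Q) / 2 := by linear_combination (-a4 - a3)/2
  have h2 : S1 ^ 2 = (r * P - p * Q) / 2 := by linear_combination (-a4 + a3)/2
  have h3 : S2 ^ 2 = (p * P - r * Q) / 2 := by linear_combination (-a1 + a2)/2
  have h4 : a ^ 2 = (P ^ 2 + Q ^ 2) / 2 := by linear_combination (-b1 - b2)/2
  have h5 : b ^ 2 = (P ^ 2 - Q ^ 2) / 2 := by linear_combination (-b1 + b2)/2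
  have h6 : c ^ 2 = P * Q := by linear_combination -b3
  rw [h1, h2, h3, h4, h5, h6]; ring

end Bilinear

section LogBranch
open scoped Real

/-- the explicit branch of `log E` -/
noncomputable def LL (τ : ℂ) (t : ℝ) : ℂ := (Real.log (Real.sin (π * t) / π) : ℂ) + MM τ t

lemma sin_pi_pos {t : ℝ} (ht : t ∈ Set.Ioo (0:ℝ) 1) : 0 < Real.sin (π * t) := by
  have := Real.pi_pos
  apply Real.sin_pos_of_pos_of_lt_pi
  · exact mul_pos this ht.1
  · nlinarith [ht.2]

lemma sin_div_pos {t : ℝ} (ht : t ∈ Set.Ioo (0:ℝ) 1) : 0 < Real.sin (π * t) / π :=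
  div_pos (sin_pi_pos ht) Real.pi_pos

lemma exp_LL {τ : ℂ} (hτ : 0 < τ.im) {t : ℝ} (ht : t ∈ Set.Ioo (0:ℝ) 1) :
    cexp (LL τ t) = EF t τ := by
  rw [LL, Complex.exp_add, ← Complex.ofReal_exp, Real.exp_log (sin_div_pos ht), EF_eq hτ]
  push_cast; rfl

lemma LL_continuousOn {τ : ℂ} (hτ : 0 < τ.im) : ContinuousOn (LL τ) (Set.Ioo 0 1) := by
  refine ContinuousOn.add ?_ (MM_continuous hτ).continuousOn
  refine Complex.continuous_ofReal.comp_continuousOn ?_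
  refine ContinuousOn.log (by fun_prop) fun t ht => (sin_div_pos ht).ne'

lemma LL_tendsto {τ : ℂ} (hτ : 0 < τ.im) :
    Tendsto (fun t : ℝ => LL τ t - (Real.log t : ℂ)) (𝓝[>] (0 : ℝ)) (𝓝 0) := by
  have h1 : Tendsto (fun t : ℝ => Real.sin (π * t) / t) (𝓝[>] 0) (𝓝 π) := by
    have : HasDerivAt (fun t : ℝ => Real.sin (π * t)) π 0 := by
      have := ((hasDerivAt_id (0:ℝ)).const_mul π).sin
      simpa using this
    have := (hasDerivAt_iff_tendsto_slope.1 this).mono_left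
      (nhdsWithin_mono 0 (fun t (ht : t ∈ Set.Ioi (0:ℝ)) => (ne_of_gt ht : t ≠ 0)))
    refine this.congr fun t => ?_
    simp [slope, div_eq_inv_mul]
  have h2 : Tendsto (fun t : ℝ => Real.log (Real.sin (π * t) / t / π)) (𝓝[>] 0) (𝓝 0) := by
    have := (h1.div_const π).log (by rw [div_self Real.pi_ne_zero]; exact one_ne_zero)
    rwa [div_self Real.pi_ne_zero, Real.log_one] at this
  have h3 : Tendsto (MM τ) (𝓝[>] 0) (𝓝 0) := by
    have := ((MM_continuous hτ).tendsto 0).mono_left (nhdsWithin_le_nhds (s := Set.Ioi 0))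
    rwa [MM_zero] at this
  have h4 := ((Complex.continuous_ofReal.tendsto 0).comp h2).add h3
  simp only [Complex.ofReal_zero, add_zero] at h4
  refine h4.congr' ?_
  have : Set.Ioo (0:ℝ) 1 ∈ 𝓝[>] (0:ℝ) := Ioo_mem_nhdsGT one_pos
  filter_upwards [this] with t ht
  simp only [Function.comp, LL]
  rw [div_right_comm, Real.log_div (sin_div_pos ht).ne' ht.1.ne']
  push_cast; ring

lemma LL_unique {τ : ℂ} (hτ : 0 < τ.im) {L : ℝ → ℂ} (hLc : ContinuousOn L (Set.Ioo 0 1))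
    (hLe : ∀ t ∈ Set.Ioo (0 : ℝ) 1, Complex.exp (L t) = EF (t : ℂ) τ)
    (hL0 : Tendsto (fun t : ℝ => L t - (Real.log t : ℂ)) (𝓝[>] (0 : ℝ)) (𝓝 0)) :
    ∀ t ∈ Set.Ioo (0 : ℝ) 1, L t = LL τ t := by
  have hint : ∀ t ∈ Set.Ioo (0 : ℝ) 1, ∃ n : ℤ, L t - LL τ t = n * (2 * π * I) := by
    intro t ht
    have h : cexp (L t) = cexp (LL τ t) := by rw [hLe t ht, exp_LL hτ ht]
    obtain ⟨n, hn⟩ := Complex.exp_eq_exp_iff_exists_int.1 h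
    exact ⟨n, by rw [hn]; ring⟩
  have him : ∀ (n : ℤ), ((n : ℂ) * (2 * π * I)).im = n * (2 * π) := by intro n; simp
  set f : ℝ → ℝ := fun t => |(L t - LL τ t).im| with hf
  have hfc : ContinuousOn f (Set.Ioo 0 1) :=
    (Complex.continuous_im.comp_continuousOn (hLc.sub (LL_continuousOn hτ))).abs
  have hf0 : Tendsto f (𝓝[>] 0) (𝓝 0) := by
    have h1 := hL0.sub (LL_tendsto hτ)
    have h2 := ((Complex.continuous_im.tendsto _).comp h1).abs
    simp only [sub_zero, Complex.zero_im, abs_zero] at h2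
    refine h2.congr fun t => ?_
    simp [hf]
  intro t ht
  by_contra hne
  obtain ⟨n, hn⟩ := hint t ht
  have hn0 : n ≠ 0 := by
    rintro rfl
    apply hne
    have : L t - LL τ t = 0 := by rw [hn]; simp
    exact sub_eq_zero.1 this
  have hpi := Real.pi_pos
  have hft : 2 * π ≤ f t := by
    simp only [hf]
    rw [hn, him, abs_mul, abs_of_pos (by positivity : (0:ℝ) < 2 * π)]
    have : (1:ℝ) ≤ |(n:ℝ)| := by exact_mod_cast Int.one_le_abs hn0
    nlinarith
  have hev : ∀ᶠ u in 𝓝[>] (0:ℝ), f u < π ∧ u ∈ Set.Ioo (0:ℝ) 1 :=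
    (hf0.eventually (gt_mem_nhds hpi)).and (Ioo_mem_nhdsGT one_pos)
  obtain ⟨u, hu1, hu2⟩ := hev.exists
  have hiv := isPreconnected_Ioo.intermediate_value hu2 ht hfc
  obtain ⟨v, hv, hfv⟩ := hiv (⟨hu1.le, by linarith⟩ : π ∈ Set.Icc (f u) (f t))
  obtain ⟨k, hk⟩ := hint v hv
  simp only [hf] at hfv
  rw [hk, him, abs_mul, abs_of_pos (by positivity : (0:ℝ) < 2 * π)] at hfv
  have h5 : |(k:ℝ)| * 2 = 1 := by
    apply mul_right_cancel₀ hpi.ne'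
    linarith
  have h6 : |k| * 2 = 1 := by exact_mod_cast h5
  omega

lemma MM_symm (τ : ℂ) (t : ℝ) : MM τ (1 - t) = MM τ t := by
  have h1 : cexp (2 * π * I * ((1 - t : ℝ) : ℂ)) = cexp (-(2 * π * I * t)) := by
    rw [Complex.exp_eq_exp_iff_exists_int]; exact ⟨1, by push_cast; ring⟩
  have h2 : cexp (-(2 * π * I * ((1 - t : ℝ) : ℂ))) = cexp (2 * π * I * t) := by
    rw [Complex.exp_eq_exp_iff_exists_int]; exact ⟨-1, by push_cast; ring⟩
  rw [MM, MM, h1, h2]; ring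

lemma LL_symm (τ : ℂ) (t : ℝ) : LL τ (1 - t) = LL τ t := by
  rw [LL, LL, MM_symm, mul_sub, mul_one, Real.sin_pi_sub]

/-- the dominating function -/
noncomputable def gdom (σ : ℝ) (t : ℝ) : ℝ := (Real.sin (π * t) / π) ^ σ

lemma sin_div_lt_one (t : ℝ) : Real.sin (π * t) / π < 1 := by
  rw [div_lt_one Real.pi_pos]
  have := Real.sin_le_one (π * t)
  linarith [Real.pi_gt_three]

lemma sin_lower {t : ℝ} (ht : t ∈ Set.Ioo (0:ℝ) 1) : t * (1 - t) / 2 ≤ Real.sin (π * t) / π := by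
  have hpi := Real.pi_pos
  have h4 := Real.pi_le_four
  have key : ∀ u : ℝ, 0 ≤ u → u ≤ 1/2 → 2 * u ≤ Real.sin (π * u) := by
    intro u h0 h1
    have := Real.mul_le_sin (x := π * u) (by positivity) (by nlinarith)
    calc 2 * u = 2 / π * (π * u) := by field_simp
      _ ≤ _ := this
  rw [le_div_iff₀ hpi]
  rcases le_total t (1/2) with h | h
  · have := key t ht.1.le h
    have : t * (1 - t) / 2 * π ≤ t * (1 - t) / 2 * 4 := by
      have : 0 ≤ t * (1 - t) / 2 := by have := ht.1; have := ht.2; nlinarith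
      gcongr
    nlinarith [ht.1, ht.2]
  · have h2 := key (1 - t) (by linarith [ht.2]) (by linarith)
    rw [show π * (1 - t) = π - π * t by ring, Real.sin_pi_sub] at h2
    have : t * (1 - t) / 2 * π ≤ t * (1 - t) / 2 * 4 := by
      have : 0 ≤ t * (1 - t) / 2 := by have := ht.1; have := ht.2; nlinarith
      gcongr
    nlinarith [ht.1, ht.2]

lemma integrable_gdom {σ : ℝ} (h1 : -1 < σ) (h0 : σ ≤ 0) :
    IntegrableOn (gdom σ) (Set.Ioo 0 1) := by
  have hb := Complex.betaIntegral_convergent (u := σ + 1) (v := σ + 1) (by simp; linarith) (by simp; linarith)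
  rw [intervalIntegrable_iff_integrableOn_Ioo_of_le zero_le_one] at hb
  have hb2 := hb.norm.const_mul ((1/2:ℝ) ^ σ)
  refine hb2.mono' ?_ ?_
  · refine ContinuousOn.aestronglyMeasurable ?_ measurableSet_Ioo
    exact ContinuousOn.rpow_const (by fun_prop) fun t ht => Or.inl (sin_div_pos ht).ne'
  · filter_upwards [ae_restrict_mem measurableSet_Ioo] with t ht
    have ht0 := ht.1
    have ht1 : 0 < 1 - t := by linarith [ht.2]
    rw [gdom, Real.norm_of_nonneg (Real.rpow_nonneg (sin_div_pos ht).le _)]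
    have e1 : ‖(t : ℂ) ^ ((σ : ℂ) + 1 - 1) * (1 - (t:ℂ)) ^ ((σ : ℂ) + 1 - 1)‖ = t ^ σ * (1 - t) ^ σ := by
      rw [norm_mul, add_sub_cancel_right, show (1 - (t:ℂ)) = ((1 - t : ℝ) : ℂ) by push_cast; rfl,
        Complex.norm_cpow_eq_rpow_re_of_pos ht0, Complex.norm_cpow_eq_rpow_re_of_pos ht1]
      simp
    rw [e1]
    have e2 : (1/2:ℝ) ^ σ * (t ^ σ * (1 - t) ^ σ) = (t * (1 - t) / 2) ^ σ := by
      rw [← Real.mul_rpow ht0.le ht1.le, ← Real.mul_rpow (by norm_num) (by positivity)]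
      congr 1; ring
    rw [e2]
    exact Real.rpow_le_rpow_of_nonpos (by positivity) (sin_lower ht) h0

lemma MM_bdd {τ : ℂ} (hτ : 0 < τ.im) : ∃ C : ℝ, 0 ≤ C ∧ ∀ t ∈ Set.Icc (0:ℝ) 1, ‖MM τ t‖ ≤ C := by
  obtain ⟨C, hC⟩ := isCompact_Icc.exists_bound_of_continuousOn (MM_continuous hτ).continuousOn
    (s := Set.Icc (0:ℝ) 1)
  exact ⟨C, (norm_nonneg _).trans (hC 0 (by simp)), hC⟩

lemma norm_exp_LL_le {τ s : ℂ} {C σ : ℝ} {t : ℝ} (hC : ‖MM τ t‖ ≤ C) (ht : t ∈ Set.Ioo (0:ℝ) 1)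
    (hs : σ ≤ s.re) : ‖cexp (s * LL τ t)‖ ≤ Real.exp (‖s‖ * C) * gdom σ t := by
  rw [Complex.norm_exp, gdom, Real.rpow_def_of_pos (sin_div_pos ht), ← Real.exp_add, Real.exp_le_exp,
    LL, mul_add, Complex.add_re]
  have h1 : (s * MM τ t).re ≤ ‖s‖ * C := by
    refine (Complex.re_le_norm _).trans ?_
    rw [norm_mul]; gcongr
  have h2 : Real.log (Real.sin (π * t) / π) ≤ 0 := Real.log_nonpos (sin_div_pos ht).le (sin_div_lt_one t).le
  have h3 : (s * (Real.log (Real.sin (π * t) / π) : ℂ)).re = s.re * Real.log (Real.sin (π * t) / π) := by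
    simp
  rw [h3]
  nlinarith

end LogBranch

section Cont
open scoped Real

lemma holo_int {H : ℂ → ℝ → ℂ} {Om : Set ℂ} (hO : IsOpen Om)
    (hd : ∀ t ∈ Set.Ioo (0:ℝ) 1, DifferentiableOn ℂ (fun s => H s t) Om)
    (hm : ∀ s ∈ Om, ContinuousOn (H s) (Set.Ioo 0 1))
    (hb : ∀ s0 ∈ Om, ∃ g : ℝ → ℝ, IntegrableOn g (Set.Ioo 0 1) ∧
      ∀ᶠ s in 𝓝 s0, ∀ t ∈ Set.Ioo (0:ℝ) 1, ‖H s t‖ ≤ g t) :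
    DifferentiableOn ℂ (fun s => ∫ t in Set.Ioo (0:ℝ) 1, H s t) Om := by
  intro s0 hs0
  obtain ⟨g, hg, hev⟩ := hb s0 hs0
  obtain ⟨R, hR, hball⟩ := Metric.eventually_nhds_iff_ball.1 (hev.and (hO.mem_nhds hs0))
  set r := R / 3 with hr
  have hr0 : 0 < r := by positivity
  have hsub : ∀ y ∈ Metric.ball s0 r, Metric.closedBall y r ⊆ Metric.ball s0 R := by
    intro y hy z hz
    rw [Metric.mem_ball] at *
    rw [Metric.mem_closedBall] at hz
    have := dist_triangle z y s0
    linarith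
  have hmeas : ∀ s ∈ Metric.ball s0 R,
      AEStronglyMeasurable (H s) (volume.restrict (Set.Ioo (0:ℝ) 1)) := fun s hs =>
    (hm s (hball s hs).2).aestronglyMeasurable measurableSet_Ioo
  have hself : s0 ∈ Metric.ball s0 R := Metric.mem_ball_self hR
  have hder : ∀ t ∈ Set.Ioo (0:ℝ) 1, ∀ s ∈ Metric.ball s0 R,
      HasDerivAt (fun s => H s t) (deriv (fun s => H s t) s) s := by
    intro t ht s hs
    exact ((hd t ht).differentiableAt (hO.mem_nhds (hball s hs).2)).hasDerivAt
  have main := hasDerivAt_integral_of_dominated_loc_of_deriv_le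
    (μ := volume.restrict (Set.Ioo (0:ℝ) 1)) (F := H) (x₀ := s0) (s := Metric.ball s0 r)
    (bound := fun t => g t / r) (F' := fun s t => deriv (fun s => H s t) s)
    (Metric.ball_mem_nhds _ hr0) ?_ ?_ ?_ ?_ ?_ ?_
  · exact main.2.differentiableAt.differentiableWithinAt
  · filter_upwards [Metric.ball_mem_nhds s0 hR] with s hs using hmeas s hs
  · refine Integrable.mono' hg (hmeas s0 hself) ?_
    filter_upwards [ae_restrict_mem measurableSet_Ioo] with t ht using (hball s0 hself).1 t ht
  · have hu : ∀ n : ℕ, (((r / (n + 1) : ℝ) : ℂ)) + s0 ∈ Metric.ball s0 R := by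
      intro n
      rw [Metric.mem_ball, dist_eq_norm, add_sub_cancel_right, Complex.norm_real,
        Real.norm_of_nonneg (by positivity)]
      have : r / (n + 1) ≤ r := div_le_self hr0.le (by linarith [n.cast_nonneg (α := ℝ)])
      linarith
    refine aestronglyMeasurable_of_tendsto_ae atTop
      (f := fun (n : ℕ) t => (((r / (n + 1) : ℝ) : ℂ))⁻¹ • (H (s0 + ((r / (n + 1) : ℝ) : ℂ)) t - H s0 t)) ?_ ?_
    · intro n
      refine ((hmeas _ ?_).sub (hmeas s0 hself)).const_smul (((r / (n + 1) : ℝ) : ℂ))⁻¹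
      rw [add_comm]; exact hu n
    · filter_upwards [ae_restrict_mem measurableSet_Ioo] with t ht
      have h1 := (hder t ht s0 hself).tendsto_slope_zero
      refine h1.comp (f := fun n : ℕ => (((r / (n + 1) : ℝ) : ℂ))) ?_
      rw [tendsto_nhdsWithin_iff]
      constructor
      · have : Tendsto (fun n : ℕ => r / ((n : ℝ) + 1)) atTop (𝓝 0) := by
          have := tendsto_one_div_add_atTop_nhds_zero_nat (𝕜 := ℝ) |>.const_mul r
          simpa [div_eq_mul_inv] using this
        have h2 := (Complex.continuous_ofReal.tendsto 0).comp this
        simpa [Function.comp_def] using h2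
      · refine Eventually.of_forall fun n => ?_
        simp only [Set.mem_compl_iff, Set.mem_singleton_iff, Complex.ofReal_eq_zero]
        positivity
  · filter_upwards [ae_restrict_mem measurableSet_Ioo] with t ht s hs
    refine Complex.norm_deriv_le_of_forall_mem_sphere_norm_le hr0 ?_ ?_
    · refine DifferentiableOn.diffContOnCl ?_
      rw [closure_ball _ hr0.ne']
      exact (hd t ht).mono fun z hz => (hball z (hsub s hs hz)).2
    · intro z hz
      exact (hball z (hsub s hs (Metric.sphere_subset_closedBall hz))).1 t ht
  · exact hg.div_const r
  · filter_upwards [ae_restrict_mem measurableSet_Ioo] with t ht s hs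
    exact hder t ht s (Metric.ball_subset_ball (by linarith) hs)

/-- derivative of `E` -/
noncomputable def dE (τ z : ℂ) : ℂ := theta1' z τ / theta1' 0 τ

lemma EF_hasDerivAt {τ : ℂ} (hτ : 0 < τ.im) (z : ℂ) : HasDerivAt (fun z => EF z τ) (dE τ z) z := by
  unfold EF dE
  exact ((theta1_differentiable hτ z).hasDerivAt).div_const _

lemma EF_differentiable {τ : ℂ} (hτ : 0 < τ.im) : Differentiable ℂ (fun z => EF z τ) :=
  fun z => (EF_hasDerivAt hτ z).differentiableAt

lemma deriv_entire {f : ℂ → ℂ} (hf : Differentiable ℂ f) : Differentiable ℂ (deriv f) := by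
  intro z
  exact (hf.analyticAt z).deriv.differentiableAt

lemma dE_differentiable {τ : ℂ} (hτ : 0 < τ.im) : Differentiable ℂ (dE τ) := by
  have : dE τ = deriv (fun z => EF z τ) := by ext z; exact (EF_hasDerivAt hτ z).deriv.symm
  rw [this]; exact deriv_entire (EF_differentiable hτ)

lemma dE_zero {τ : ℂ} (hτ : 0 < τ.im) : dE τ 0 = 1 := div_self (theta1'_zero_ne hτ)

lemma EF_one_sub (τ z : ℂ) : EF (1 - z) τ = EF z τ := by
  rw [EF, EF, show 1 - z = -z + 1 by ring, theta1_add_one, theta1_neg, neg_neg]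

lemma dE_one_sub {τ : ℂ} (hτ : 0 < τ.im) (z : ℂ) : dE τ (1 - z) = - dE τ z := by
  have h1 := (EF_hasDerivAt hτ (1 - z)).scomp z ((hasDerivAt_id z).const_sub 1)
  have h2 : HasDerivAt (fun z => EF (1 - z) τ) (-1 • dE τ (1 - z)) z := by simpa [Function.comp_def] using h1
  simp_rw [EF_one_sub] at h2
  have := h2.unique (EF_hasDerivAt hτ z)
  rw [← this]; simp

lemma dE_one {τ : ℂ} (hτ : 0 < τ.im) : dE τ 1 = -1 := by
  have := dE_one_sub hτ 0
  rwa [sub_zero, dE_zero hτ] at this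

lemma EF_zero (τ : ℂ) : EF 0 τ = 0 := by rw [EF, theta1_zero, zero_div]
lemma EF_one (τ : ℂ) : EF 1 τ = 0 := by
  have := EF_one_sub τ 0
  rw [sub_zero] at this; rw [this, EF_zero]

lemma EF_ne {τ : ℂ} (hτ : 0 < τ.im) {t : ℝ} (ht : t ∈ Set.Ioo (0:ℝ) 1) : EF t τ ≠ 0 := by
  rw [← exp_LL hτ ht]; exact Complex.exp_ne_zero _

lemma LL_hasDerivAt {τ : ℂ} (hτ : 0 < τ.im) {t : ℝ} (ht : t ∈ Set.Ioo (0:ℝ) 1) :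
    HasDerivAt (LL τ) (dE τ t / EF t τ) t := by
  have hE := EF_ne hτ ht
  have h1 : HasDerivAt (fun u : ℝ => LL τ t + Complex.log (EF u τ / EF t τ)) (dE τ t / EF t τ) t := by
    have h2 : HasDerivAt (fun u : ℝ => EF u τ / EF t τ) (dE τ t / EF t τ) t :=
      ((EF_hasDerivAt hτ t).comp_ofReal).div_const _
    have h3 := (h2.clog_real (by rw [div_self hE]; exact one_mem_slitPlane)).const_add (LL τ t)
    rwa [div_self hE, div_one] at h3
  refine h1.congr_of_eventuallyEq ?_
  have hc : ContinuousAt (fun u => (LL τ u - LL τ t).im) t :=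
    Complex.continuous_im.continuousAt.comp
      (((LL_continuousOn hτ).continuousAt (Ioo_mem_nhds ht.1 ht.2)).sub continuousAt_const)
  have hpi := Real.pi_pos
  have ev := hc.eventually (Ioo_mem_nhds (a := -π) (b := π) (by simp [hpi]) (by simp [hpi]))
  filter_upwards [ev, Ioo_mem_nhds ht.1 ht.2] with u hu hu2
  rw [← exp_LL hτ ht, ← exp_LL hτ hu2, ← Complex.exp_sub, Complex.log_exp hu.1 hu.2.le]
  ring

lemma EF_lower {τ : ℂ} (hτ : 0 < τ.im) : ∃ c : ℝ, 0 < c ∧ ∀ t ∈ Set.Ioo (0:ℝ) 1,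
    c * (t * (1 - t)) ≤ ‖EF t τ‖ := by
  obtain ⟨C, hC0, hC⟩ := MM_bdd hτ
  refine ⟨Real.exp (-C) / 2, by positivity, fun t ht => ?_⟩
  have h1 : ‖EF t τ‖ = Real.sin (π * t) / π * Real.exp (MM τ t).re := by
    rw [← exp_LL hτ ht, LL, Complex.exp_add, norm_mul, Complex.norm_exp (MM τ t), ← Complex.ofReal_exp,
      Real.exp_log (sin_div_pos ht), Complex.norm_real, Real.norm_of_nonneg (sin_div_pos ht).le]
  rw [h1]
  have h2 := sin_lower ht
  have h3 : Real.exp (-C) ≤ Real.exp (MM τ t).re := by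
    rw [Real.exp_le_exp]
    have := (abs_le.1 ((Complex.abs_re_le_norm _).trans (hC t ⟨ht.1.le, ht.2.le⟩))).1
    exact this
  have h4 : 0 < t * (1 - t) := mul_pos ht.1 (by linarith [ht.2])
  calc Real.exp (-C) / 2 * (t * (1 - t)) = t * (1 - t) / 2 * Real.exp (-C) := by ring
    _ ≤ _ := by gcongr; exact (sin_div_pos ht).le

lemma quot_bdd {τ : ℂ} (hτ : 0 < τ.im) {f : ℂ → ℂ} (hf : Differentiable ℂ f) (h0 : f 0 = 0) (h1 : f 1 = 0) :
    ∃ C : ℝ, 0 ≤ C ∧ ∀ t ∈ Set.Ioo (0:ℝ) 1, ‖f t‖ ≤ C * ‖EF t τ‖ := by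
  obtain ⟨c, hc, hE⟩ := EF_lower hτ
  have hd1 : Differentiable ℂ (dslope f 0) := by
    rw [← differentiableOn_univ] at *
    exact (differentiableOn_dslope univ_mem).2 hf
  have hd2 : Differentiable ℂ (dslope (dslope f 0) 1) := by
    rw [← differentiableOn_univ] at *
    exact (differentiableOn_dslope univ_mem).2 hd1
  have e1 : ∀ z, f z = z * dslope f 0 z := by
    intro z
    have := sub_smul_dslope f 0 z
    rw [h0, sub_zero, sub_zero, smul_eq_mul] at this
    exact this.symm
  have h10 : dslope f 0 1 = 0 := by have := e1 1; rwa [h1, one_mul, eq_comm] at this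
  have e2 : ∀ z, f z = z * ((z - 1) * dslope (dslope f 0) 1 z) := by
    intro z
    have := sub_smul_dslope (dslope f 0) 1 z
    rw [h10, sub_zero, smul_eq_mul] at this
    rw [this]; exact e1 z
  obtain ⟨K, hK⟩ := isCompact_Icc.exists_bound_of_continuousOn (s := Set.Icc (0:ℝ) 1)
    (hd2.continuous.comp Complex.continuous_ofReal).continuousOn
  have hK0 : 0 ≤ K := (norm_nonneg _).trans (hK 0 (by simp))
  refine ⟨K / c, by positivity, fun t ht => ?_⟩
  have h4 : 0 < t * (1 - t) := mul_pos ht.1 (by linarith [ht.2])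
  have h5 : ‖f t‖ ≤ t * (1 - t) * K := by
    rw [e2 t, norm_mul, norm_mul, show ((t:ℂ) - 1) = ((t - 1 : ℝ) : ℂ) by push_cast; rfl, Complex.norm_real,
      Complex.norm_real, Real.norm_of_nonneg ht.1.le, Real.norm_of_nonpos (by linarith [ht.2]), ← mul_assoc,
      neg_sub]
    gcongr
    exact hK t ⟨ht.1.le, ht.2.le⟩
  calc ‖f t‖ ≤ t * (1 - t) * K := h5
    _ = K / c * (c * (t * (1 - t))) := by field_simp
    _ ≤ _ := by gcongr; exact hE t ht

/-- the bounded coefficient -/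
noncomputable def BB (τ : ℂ) (t : ℝ) : ℂ := (1 - dE τ t * Complex.cos (π * t)) / EF t τ

lemma BB_bdd {τ : ℂ} (hτ : 0 < τ.im) : ∃ C : ℝ, 0 ≤ C ∧ ∀ t ∈ Set.Ioo (0:ℝ) 1, ‖BB τ t‖ ≤ C := by
  have hd := dE_differentiable hτ
  obtain ⟨C, hC, h⟩ := quot_bdd hτ (f := fun z => 1 - dE τ z * Complex.cos (π * z)) (by fun_prop)
    (by simp [dE_zero hτ]) (by simp [dE_one hτ])
  refine ⟨C, hC, fun t ht => ?_⟩
  rw [BB, norm_div, div_le_iff₀ (norm_pos_iff.2 (EF_ne hτ ht))]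
  exact h t ht

lemma BB_cont {τ : ℂ} (hτ : 0 < τ.im) : ContinuousOn (BB τ) (Set.Ioo 0 1) := by
  have hd := (dE_differentiable hτ).continuous
  have hE := (EF_differentiable hτ).continuous
  unfold BB
  refine ContinuousOn.div ?_ ?_ fun t ht => EF_ne hτ ht
  · fun_prop
  · exact (hE.comp Complex.continuous_ofReal).continuousOn

/-- integrand of the regularized functional -/
noncomputable def LamI (τ s : ℂ) (N : ℂ → ℂ) (t : ℝ) : ℂ :=
  cexp (s * LL τ t) * (BB τ t * N t - deriv (fun z => Complex.cos (π * z) * N z) t / s)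

/-- the regularized functional -/
noncomputable def Lam (τ s : ℂ) (N : ℂ → ℂ) : ℂ := ∫ t in Set.Ioo (0:ℝ) 1, LamI τ s N t

end Cont

section Cont2
open scoped Real

lemma expLL_cont {τ : ℂ} (hτ : 0 < τ.im) (s : ℂ) : ContinuousOn (fun t => cexp (s * LL τ t)) (Set.Ioo 0 1) :=
  (continuousOn_const.mul (LL_continuousOn hτ)).cexp

lemma expLL_bound {τ : ℂ} (hτ : 0 < τ.im) (s : ℂ) : ∃ C : ℝ, 0 ≤ C ∧ ∀ t ∈ Set.Ioo (0:ℝ) 1,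
    ‖cexp (s * LL τ t)‖ ≤ C * gdom s.re t := by
  obtain ⟨C, hC0, hC⟩ := MM_bdd hτ
  exact ⟨Real.exp (‖s‖ * C), by positivity, fun t ht =>
    norm_exp_LL_le (hC t ⟨ht.1.le, ht.2.le⟩) ht le_rfl⟩

lemma gdom_nonneg (σ : ℝ) {t : ℝ} (ht : t ∈ Set.Ioo (0:ℝ) 1) : 0 ≤ gdom σ t :=
  Real.rpow_nonneg (sin_div_pos ht).le _

lemma gdom_anti {σ ρ : ℝ} (h : σ ≤ ρ) {t : ℝ} (ht : t ∈ Set.Ioo (0:ℝ) 1) : gdom ρ t ≤ gdom σ t :=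
  Real.rpow_le_rpow_of_exponent_ge (sin_div_pos ht) (sin_div_lt_one t).le h

/-- integrability of `e^{sL}` times a bounded continuous function -/
lemma expLL_int {τ : ℂ} (hτ : 0 < τ.im) {s : ℂ} (hs : -1 < s.re) {f : ℝ → ℂ}
    (hf : ContinuousOn f (Set.Ioo 0 1)) {K : ℝ} (hK : ∀ t ∈ Set.Ioo (0:ℝ) 1, ‖f t‖ ≤ K) :
    IntegrableOn (fun t => cexp (s * LL τ t) * f t) (Set.Ioo 0 1) := by
  obtain ⟨C, hC0, hC⟩ := expLL_bound hτ s
  have hg := integrable_gdom (σ := min s.re 0) (lt_min hs (by norm_num)) (min_le_right _ _)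
  refine Integrable.mono' (hg.const_mul (C * K)) (((expLL_cont hτ s).mul hf).aestronglyMeasurable measurableSet_Ioo) ?_
  filter_upwards [ae_restrict_mem measurableSet_Ioo] with t ht
  rw [norm_mul]
  have hK0 : 0 ≤ K := (norm_nonneg _).trans (hK t ht)
  calc _ ≤ (C * gdom (min s.re 0) t) * K := by
        refine mul_le_mul ((hC t ht).trans ?_) (hK t ht) (norm_nonneg _) (mul_nonneg hC0 (gdom_nonneg _ ht))
        exact mul_le_mul_of_nonneg_left (gdom_anti (min_le_left _ _) ht) hC0
    _ = _ := by ring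

lemma entire_bdd {f : ℂ → ℂ} (hf : Differentiable ℂ f) : ∃ K : ℝ, 0 ≤ K ∧ ∀ t ∈ Set.Ioo (0:ℝ) 1, ‖f t‖ ≤ K := by
  obtain ⟨K, hK⟩ := isCompact_Icc.exists_bound_of_continuousOn (s := Set.Icc (0:ℝ) 1)
    (hf.continuous.comp Complex.continuous_ofReal).continuousOn
  exact ⟨K, (norm_nonneg _).trans (hK 0 (by simp)), fun t ht => hK t ⟨ht.1.le, ht.2.le⟩⟩

lemma cosN_diff {N : ℂ → ℂ} (hN : Differentiable ℂ N) : Differentiable ℂ (fun z => Complex.cos (π * z) * N z) := by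
  fun_prop

lemma ofReal_cont {f : ℂ → ℂ} (hf : Differentiable ℂ f) (s : Set ℝ) : ContinuousOn (fun t : ℝ => f t) s :=
  (hf.continuous.comp Complex.continuous_ofReal).continuousOn

lemma LamI_int {τ : ℂ} (hτ : 0 < τ.im) {s : ℂ} (hs : -1 < s.re) {N : ℂ → ℂ} (hN : Differentiable ℂ N) :
    IntegrableOn (LamI τ s N) (Set.Ioo 0 1) := by
  have hd := deriv_entire (cosN_diff hN)
  obtain ⟨B, hB0, hB⟩ := BB_bdd hτ
  obtain ⟨K, hK0, hK⟩ := entire_bdd hN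
  obtain ⟨K2, hK20, hK2⟩ := entire_bdd hd
  refine expLL_int hτ hs (K := B * K + K2 / ‖s‖) ?_ ?_
  · exact ((BB_cont hτ).mul (ofReal_cont hN _)).sub ((ofReal_cont hd _).div_const s)
  · intro t ht
    refine (norm_sub_le _ _).trans ?_
    rw [norm_mul, norm_div]
    have := hB t ht
    have := hK t ht
    have := hK2 t ht
    gcongr

lemma deriv_cos_add {M N : ℂ → ℂ} (hM : Differentiable ℂ M) (hN : Differentiable ℂ N) (a b z : ℂ) :
    deriv (fun z => Complex.cos (π * z) * (a * M z + b * N z)) z =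
    a * deriv (fun z => Complex.cos (π * z) * M z) z + b * deriv (fun z => Complex.cos (π * z) * N z) z := by
  have h1 := ((cosN_diff hM z).hasDerivAt.const_mul a).add ((cosN_diff hN z).hasDerivAt.const_mul b)
  rw [← h1.deriv]
  congr 1
  ext z; simp only [Pi.add_apply]; ring

lemma Lam_lin {τ : ℂ} (hτ : 0 < τ.im) {s : ℂ} (hs : -1 < s.re) {M N : ℂ → ℂ} (hM : Differentiable ℂ M)
    (hN : Differentiable ℂ N) (a b : ℂ) :
    Lam τ s (fun z => a * M z + b * N z) = a * Lam τ s M + b * Lam τ s N := by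
  unfold Lam
  rw [← integral_const_mul, ← integral_const_mul, ← integral_add ((LamI_int hτ hs hM).const_mul a)
    ((LamI_int hτ hs hN).const_mul b)]
  refine integral_congr_ae (Eventually.of_forall fun t => ?_)
  simp only [LamI, deriv_cos_add hM hN]
  ring

lemma BB_symm {τ : ℂ} (hτ : 0 < τ.im) (t : ℝ) : BB τ (1 - t) = BB τ t := by
  unfold BB
  push_cast
  rw [EF_one_sub, dE_one_sub hτ, mul_sub, mul_one, Complex.cos_pi_sub]
  ring

lemma Lam_symm {τ : ℂ} (hτ : 0 < τ.im) (s : ℂ) {N : ℂ → ℂ} (hN : Differentiable ℂ N) :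
    Lam τ s (fun z => N (1 - z)) = Lam τ s N := by
  have key : ∀ t : ℝ, LamI τ s (fun z => N (1 - z)) t = LamI τ s N (1 - t) := by
    intro t
    have hd : deriv (fun z => Complex.cos (π * z) * N (1 - z)) (t:ℂ) =
        deriv (fun z => Complex.cos (π * z) * N z) (1 - t) := by
      have h1 := ((cosN_diff hN (1 - t)).hasDerivAt.scomp (t:ℂ) ((hasDerivAt_id (t:ℂ)).const_sub 1)).neg
      have hfun : (fun z => Complex.cos (π * z) * N (1 - z)) =
          -(fun z => Complex.cos (π * z) * N z) ∘ HSub.hSub 1 := by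
        ext z
        simp [Function.comp_def, mul_sub, Complex.cos_pi_sub]
      rw [hfun, h1.deriv]
      simp
    simp only [LamI]
    rw [hd, LL_symm, BB_symm hτ]
    push_cast; rfl
  unfold Lam
  simp_rw [key]
  rw [← integral_Ioc_eq_integral_Ioo, ← integral_Ioc_eq_integral_Ioo,
    ← intervalIntegral.integral_of_le zero_le_one, ← intervalIntegral.integral_of_le zero_le_one,
    intervalIntegral.integral_comp_sub_left (fun t => LamI τ s N t)]
  simp

lemma gdom_tendsto {σ : ℝ} (hσ : 0 < σ) : Tendsto (gdom σ) (𝓝 0) (𝓝 0) ∧ Tendsto (gdom σ) (𝓝 1) (𝓝 0) := by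
  have hc : Continuous (gdom σ) := by
    unfold gdom
    exact Continuous.rpow_const (by fun_prop) fun t => Or.inr hσ.le
  constructor
  · have := hc.tendsto 0
    simpa [gdom, Real.zero_rpow hσ.ne'] using this
  · have := hc.tendsto 1
    simpa [gdom, Real.zero_rpow hσ.ne'] using this

lemma int_zero {V V' : ℝ → ℂ} {σ C : ℝ} (hσ : 0 < σ) (hd : ∀ t ∈ Set.Ioo (0:ℝ) 1, HasDerivAt V (V' t) t)
    (hi : IntegrableOn V' (Set.Ioo 0 1)) (hb : ∀ t ∈ Set.Ioo (0:ℝ) 1, ‖V t‖ ≤ C * gdom σ t) :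
    ∫ t in Set.Ioo (0:ℝ) 1, V' t = 0 := by
  rw [← integral_Ioc_eq_integral_Ioo, ← intervalIntegral.integral_of_le zero_le_one]
  have h1 : Tendsto V (𝓝[>] 0) (𝓝 0) := by
    refine squeeze_zero_norm' (a := fun t => C * gdom σ t) ?_ ?_
    · filter_upwards [Ioo_mem_nhdsGT (zero_lt_one' ℝ)] with t ht using hb t ht
    · have := ((gdom_tendsto hσ).1.const_mul C).mono_left (nhdsWithin_le_nhds (s := Set.Ioi (0:ℝ)))
      rwa [mul_zero] at this
  have h2 : Tendsto V (𝓝[<] 1) (𝓝 0) := by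
    refine squeeze_zero_norm' (a := fun t => C * gdom σ t) ?_ ?_
    · filter_upwards [Ioo_mem_nhdsLT (zero_lt_one' ℝ)] with t ht using hb t ht
    · have := ((gdom_tendsto hσ).2.const_mul C).mono_left (nhdsWithin_le_nhds (s := Set.Iio (1:ℝ)))
      rwa [mul_zero] at this
  rw [intervalIntegral.integral_eq_sub_of_hasDerivAt_of_tendsto zero_lt_one hd
    ((intervalIntegrable_iff_integrableOn_Ioo_of_le zero_le_one).2 hi) h1 h2, sub_zero]

lemma expLL_hasDerivAt {τ : ℂ} (hτ : 0 < τ.im) (s : ℂ) {f : ℂ → ℂ} (hf : Differentiable ℂ f) {t : ℝ}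
    (ht : t ∈ Set.Ioo (0:ℝ) 1) : HasDerivAt (fun t : ℝ => cexp (s * LL τ t) * f t)
      (cexp (s * LL τ t) * (s * (dE τ t / EF t τ) * f t + deriv f t)) t := by
  have h1 := ((LL_hasDerivAt hτ ht).const_mul s).cexp
  have h2 := h1.mul ((hf t).hasDerivAt.comp_ofReal)
  exact h2.congr_deriv (by ring)

lemma Lam_pos {τ : ℂ} (hτ : 0 < τ.im) {s : ℂ} (hs : 0 < s.re) {N : ℂ → ℂ} (hN : Differentiable ℂ N) :
    Lam τ s N = ∫ t in Set.Ioo (0:ℝ) 1, cexp (s * LL τ t) * (N t / EF t τ) := by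
  have hs0 : s ≠ 0 := by rintro rfl; simp at hs
  have hi1 := LamI_int hτ (by linarith : -1 < s.re) hN
  have hi2 : IntegrableOn (fun t : ℝ => cexp (s * LL τ t) * (N t / EF t τ)) (Set.Ioo 0 1) := by
    obtain ⟨K, hK0, hK⟩ := entire_bdd hN
    refine (expLL_int hτ (s := s - 1) (by simpa using hs) (ofReal_cont hN _) hK).congr_fun ?_ measurableSet_Ioo
    intro t ht
    simp only
    rw [sub_mul, Complex.exp_sub, one_mul, exp_LL hτ ht]; ring
  set V' : ℝ → ℂ := fun t => cexp (s * LL τ t) * (s * (dE τ t / EF t τ) * (Complex.cos (π * t) * N t)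
    + deriv (fun z => Complex.cos (π * z) * N z) t) with hV'
  have e : ∀ t ∈ Set.Ioo (0:ℝ) 1, V' t = s * (cexp (s * LL τ t) * (N t / EF t τ) - LamI τ s N t) := by
    intro t ht
    have := EF_ne hτ ht
    simp only [hV', LamI, BB]
    field_simp
    ring
  obtain ⟨K, hK0, hK⟩ := entire_bdd (cosN_diff hN)
  obtain ⟨C, hC0, hC⟩ := expLL_bound hτ s
  have z := int_zero (V := fun t : ℝ => cexp (s * LL τ t) * (Complex.cos (π * t) * N t)) (V' := V')
    (C := C * K) hs (fun t ht => expLL_hasDerivAt hτ s (cosN_diff hN) ht)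
    (IntegrableOn.congr_fun ((hi2.sub hi1).const_mul s) (fun t ht => (e t ht).symm) measurableSet_Ioo) ?_
  · rw [setIntegral_congr_fun measurableSet_Ioo e, integral_const_mul, integral_sub hi2 hi1] at z
    have := (mul_eq_zero.1 z).resolve_left hs0
    rw [sub_eq_zero] at this
    exact this.symm
  · intro t ht
    rw [norm_mul]
    calc _ ≤ (C * gdom s.re t) * K := by
          refine mul_le_mul (hC t ht) (hK t ht) (norm_nonneg _) (mul_nonneg hC0 (gdom_nonneg _ ht))
      _ = _ := by ring

lemma Lam_exact {τ : ℂ} (hτ : 0 < τ.im) {N w : ℂ → ℂ} (hN : Differentiable ℂ N) (hw : Differentiable ℂ w)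
    {r : ℝ → ℂ} (hr : ContinuousOn r (Set.Icc 0 1))
    (h : ∀ t ∈ Set.Icc (0:ℝ) 1, N t = EF t τ * deriv w t - 1/2 * dE τ t * w t + EF t τ ^ 2 * r t) :
    Lam τ (-(1/2)) N = ∫ t in Set.Ioo (0:ℝ) 1, cexp (1/2 * LL τ t) * r t := by
  have hi1 := LamI_int hτ (s := -(1/2)) (by norm_num) hN
  have hi2 : IntegrableOn (fun t : ℝ => cexp (1/2 * LL τ t) * r t) (Set.Ioo 0 1) := by
    obtain ⟨K, hK⟩ := isCompact_Icc.exists_bound_of_continuousOn hr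
    exact expLL_int hτ (s := 1/2) (by norm_num) (hr.mono Set.Ioo_subset_Icc_self)
      fun t ht => hK t (Set.Ioo_subset_Icc_self ht)
  have hf : Differentiable ℂ (fun z => w z + 2 * (Complex.cos (π * z) * N z)) := by fun_prop
  have h0 := h 0 (by simp)
  have h1 := h 1 (by simp)
  simp only [Complex.ofReal_zero, Complex.ofReal_one, EF_zero, EF_one, dE_zero hτ, dE_one hτ] at h0 h1
  obtain ⟨K, hK0, hK⟩ := quot_bdd hτ hf (by simp [h0]) (by simp [h1])
  obtain ⟨C, hC0, hC⟩ := expLL_bound hτ (1/2)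
  have hexp : ∀ t ∈ Set.Ioo (0:ℝ) 1, cexp (1/2 * LL τ t) = cexp (-(1/2) * LL τ t) * EF t τ := by
    intro t ht
    rw [← exp_LL hτ ht, ← Complex.exp_add]; ring_nf
  have hdf : ∀ z, deriv (fun z => w z + 2 * (Complex.cos (π * z) * N z)) z =
      deriv w z + 2 * deriv (fun z => Complex.cos (π * z) * N z) z := fun z =>
    ((hw z).hasDerivAt.add ((cosN_diff hN z).hasDerivAt.const_mul 2)).deriv
  set V' : ℝ → ℂ := fun t => cexp (-(1/2) * LL τ t) * (-(1/2) * (dE τ t / EF t τ) *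
    (w t + 2 * (Complex.cos (π * t) * N t)) + deriv (fun z => w z + 2 * (Complex.cos (π * z) * N z)) t) with hV'
  have e : ∀ t ∈ Set.Ioo (0:ℝ) 1, V' t = LamI τ (-(1/2)) N t - cexp (1/2 * LL τ t) * r t := by
    intro t ht
    have := EF_ne hτ ht
    have h3 := h t (Set.Ioo_subset_Icc_self ht)
    have h4 : r t = (N t - (EF t τ * deriv w t - 1/2 * dE τ t * w t)) / EF t τ ^ 2 := by
      rw [h3]; field_simp; ring
    simp only [hV', LamI, BB, hdf]
    rw [hexp t ht, h4]
    field_simp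
    ring
  have z := int_zero (V := fun t : ℝ => cexp (-(1/2) * LL τ t) * (w t + 2 * (Complex.cos (π * t) * N t))) (V' := V')
    (C := C * K) (σ := 1/2) (by norm_num) (fun t ht => expLL_hasDerivAt hτ _ hf ht)
    ((hi1.sub hi2).congr_fun (fun t ht => (e t ht).symm) measurableSet_Ioo) ?_
  · rw [setIntegral_congr_fun measurableSet_Ioo e, integral_sub hi1 hi2, sub_eq_zero] at z
    exact z
  · intro t ht
    rw [norm_mul]
    have hC2 := hC t ht
    rw [hexp t ht, norm_mul] at hC2
    rw [show ((1/2:ℂ)).re = 1/2 by norm_num] at hC2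
    calc _ ≤ ‖cexp (-(1/2) * LL τ t)‖ * (K * ‖EF t τ‖) := by gcongr; exact hK t ht
      _ = K * (‖cexp (-(1/2) * LL τ t)‖ * ‖EF t τ‖) := by ring
      _ ≤ K * (C * gdom (1/2) t) := mul_le_mul_of_nonneg_left hC2 hK0
      _ = _ := by ring

lemma Lam_holo {τ : ℂ} (hτ : 0 < τ.im) {a φ : ℂ → ℂ} (ha : Differentiable ℂ a) (hφ : Differentiable ℂ φ) (y : ℂ) :
    DifferentiableOn ℂ (fun s => Lam τ s (fun z => a z * φ (y - s * z))) {s : ℂ | -1 < s.re ∧ s ≠ 0} := by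
  have hca := cosN_diff ha
  have hdφ := deriv_entire hφ
  have hdca := deriv_entire hca
  have eq : ∀ s t, LamI τ s (fun z => a z * φ (y - s * z)) t = cexp (s * LL τ t) *
      (BB τ t * (a t * φ (y - s * t)) - (deriv (fun z => Complex.cos (π * z) * a z) t * φ (y - s * t) +
        Complex.cos (π * t) * a t * (deriv φ (y - s * t) * (-s))) / s) := by
    intro s t
    have h1 : HasDerivAt (fun z => φ (y - s * z)) (deriv φ (y - s * t) * (-s)) t := by
      have := (hφ (y - s * t)).hasDerivAt.comp (t:ℂ) (((hasDerivAt_id (t:ℂ)).const_mul s).const_sub y)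
      exact this.congr_deriv (by simp)
    have h2 := ((hca t).hasDerivAt.mul h1).deriv
    rw [LamI, ← h2]
    congr 4
    ext z; simp only [Pi.mul_apply]; ring
  have hopen : IsOpen {s : ℂ | -1 < s.re ∧ s ≠ 0} :=
    (isOpen_lt continuous_const Complex.continuous_re).inter isOpen_ne
  unfold Lam
  refine holo_int hopen ?_ ?_ ?_
  · intro t ht
    simp_rw [eq]
    intro s hs
    have := hs.2
    refine DifferentiableAt.differentiableWithinAt ?_
    fun_prop (disch := assumption)
  · intro s hs
    have hN : Differentiable ℂ (fun z => a z * φ (y - s * z)) := by fun_prop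
    exact (expLL_cont hτ s).mul (((BB_cont hτ).mul (ofReal_cont hN _)).sub
      ((ofReal_cont (deriv_entire (cosN_diff hN)) _).div_const s))
  · intro s0 hs0
    obtain ⟨C, hC0, hC⟩ := MM_bdd hτ
    obtain ⟨B, hB0, hB⟩ := BB_bdd hτ
    have hcpt : IsCompact (Metric.closedBall s0 1 ×ˢ Set.Icc (0:ℝ) 1) := (isCompact_closedBall s0 1).prod isCompact_Icc
    have ca := ha.continuous
    have cφ := hφ.continuous
    have cdφ := hdφ.continuous
    have cd := hdca.continuous
    obtain ⟨K1, hK1⟩ := hcpt.exists_bound_of_continuousOn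
      (f := fun p : ℂ × ℝ => a p.2 * φ (y - p.1 * p.2)) (by fun_prop)
    obtain ⟨K2, hK2⟩ := hcpt.exists_bound_of_continuousOn
      (f := fun p : ℂ × ℝ => deriv (fun z => Complex.cos (π * z) * a z) p.2 * φ (y - p.1 * p.2) +
        Complex.cos (π * p.2) * a p.2 * (deriv φ (y - p.1 * p.2) * (-p.1))) (by fun_prop)
    have hs0n : 0 < ‖s0‖ := norm_pos_iff.2 hs0.2
    set σ := min ((s0.re - 1) / 2) 0 with hσ
    have hs1 := hs0.1
    have hσ1 : -1 < σ := lt_min (by linarith) (by norm_num)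
    have hσ2 : σ < s0.re := by
      by_cases h : 0 < s0.re
      · exact (min_le_right _ _).trans_lt h
      · refine (min_le_left _ _).trans_lt ?_
        linarith
    refine ⟨fun t => (Real.exp ((‖s0‖ + 1) * C) * (B * K1 + K2 / (‖s0‖/2))) * gdom σ t,
      (integrable_gdom hσ1 (min_le_right _ _)).const_mul _, ?_⟩
    have ev1 : ∀ᶠ s in 𝓝 s0, s ∈ Metric.closedBall s0 1 := Metric.closedBall_mem_nhds _ one_pos
    have ev2 : ∀ᶠ s : ℂ in 𝓝 s0, σ < s.re := Complex.continuous_re.continuousAt.eventually (lt_mem_nhds hσ2)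
    have ev3 : ∀ᶠ s : ℂ in 𝓝 s0, ‖s0‖/2 < ‖s‖ := continuous_norm.continuousAt.eventually (lt_mem_nhds (by linarith))
    filter_upwards [ev1, ev2, ev3] with s h1 h2 h3 t ht
    have ht' : t ∈ Set.Icc (0:ℝ) 1 := Set.Ioo_subset_Icc_self ht
    have k1 := hK1 (s, t) ⟨h1, ht'⟩
    have k2 := hK2 (s, t) ⟨h1, ht'⟩
    simp only at k1 k2
    have k10 : 0 ≤ K1 := (norm_nonneg _).trans k1
    have k20 : 0 ≤ K2 := (norm_nonneg _).trans k2
    have hsn : ‖s‖ ≤ ‖s0‖ + 1 := by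
      have : ‖s - s0‖ ≤ 1 := by rw [← dist_eq_norm]; exact h1
      have := norm_add_le (s - s0) s0
      rw [sub_add_cancel] at this
      linarith
    rw [eq, norm_mul]
    have b1 : ‖cexp (s * LL τ t)‖ ≤ Real.exp ((‖s0‖ + 1) * C) * gdom σ t := by
      refine (norm_exp_LL_le (hC t ht') ht h2.le).trans ?_
      have := gdom_nonneg σ ht
      gcongr
    have b2 : ‖BB τ t * (a t * φ (y - s * t)) - (deriv (fun z => Complex.cos (π * z) * a z) t * φ (y - s * t) +
        Complex.cos (π * t) * a t * (deriv φ (y - s * t) * (-s))) / s‖ ≤ B * K1 + K2 / (‖s0‖/2) := by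
      refine (norm_sub_le _ _).trans ?_
      rw [norm_mul, norm_div]
      have := hB t ht
      gcongr
    calc _ ≤ (Real.exp ((‖s0‖ + 1) * C) * gdom σ t) * (B * K1 + K2 / (‖s0‖/2)) :=
          mul_le_mul b1 b2 (norm_nonneg _) (mul_nonneg (Real.exp_pos _).le (gdom_nonneg _ ht))
      _ = _ := by ring

end Cont2

section Phi
open scoped Real

/-- the basic numerator -/
noncomputable def Phi (τ : ℂ) (ψ : ℂ → ℂ) (x z : ℂ) : ℂ :=
  theta1 (x - z) τ * ψ (z + 2 * x) + theta1 (x + z) τ * ψ (z - 2 * x)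

lemma Phi_diff {τ : ℂ} (hτ : 0 < τ.im) {ψ : ℂ → ℂ} (hψ : Differentiable ℂ ψ) (x : ℂ) :
    Differentiable ℂ (Phi τ ψ x) := by
  have h := theta1_differentiable hτ
  have h1 : Differentiable ℂ (fun z => theta1 (x - z) τ) := h.comp (by fun_prop : Differentiable ℂ (fun z : ℂ => x - z))
  have h2 : Differentiable ℂ (fun z => theta1 (x + z) τ) := h.comp (by fun_prop : Differentiable ℂ (fun z : ℂ => x + z))
  unfold Phi
  fun_prop

lemma Phi_lin (τ a b : ℂ) (ψ χ : ℂ → ℂ) (x z : ℂ) :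
    Phi τ (fun u => a * ψ u + b * χ u) x z = a * Phi τ ψ x z + b * Phi τ χ x z := by
  unfold Phi; ring

lemma theta1_hasDerivAt {τ : ℂ} (hτ : 0 < τ.im) (z : ℂ) : HasDerivAt (fun z => theta1 z τ) (theta1' z τ) z :=
  (theta1_differentiable hτ z).hasDerivAt

lemma theta1'_neg {τ : ℂ} (hτ : 0 < τ.im) (z : ℂ) : theta1' (-z) τ = theta1' z τ := by
  have h1 := ((theta1_hasDerivAt hτ (-z)).scomp z (hasDerivAt_neg z)).neg
  have h2 : -(fun z => theta1 z τ) ∘ Neg.neg = fun z => theta1 z τ := by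
    ext z; simp [theta1_neg]
  rw [h2] at h1
  have := h1.unique (theta1_hasDerivAt hτ z)
  rw [← this]; simp

lemma Phi_deriv0 {τ : ℂ} (hτ : 0 < τ.im) {ψ : ℂ → ℂ} (hψ : Differentiable ℂ ψ) (z : ℂ) :
    HasDerivAt (fun x => Phi τ ψ x z) (2 * theta1' z τ * ψ z - 4 * theta1 z τ * deriv ψ z) 0 := by
  have a1 : HasDerivAt (fun x => theta1 (x - z) τ) (theta1' (0 - z) τ) 0 := by
    have := (theta1_hasDerivAt hτ (0 - z)).comp (0:ℂ) ((hasDerivAt_id (0:ℂ)).sub_const z)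
    exact this.congr_deriv (by simp)
  have a2 : HasDerivAt (fun x => theta1 (x + z) τ) (theta1' (0 + z) τ) 0 := by
    have := (theta1_hasDerivAt hτ (0 + z)).comp (0:ℂ) ((hasDerivAt_id (0:ℂ)).add_const z)
    exact this.congr_deriv (by simp)
  have b1 : HasDerivAt (fun x => ψ (z + 2 * x)) (deriv ψ (z + 2 * 0) * 2) 0 := by
    have := (hψ (z + 2 * 0)).hasDerivAt.comp (0:ℂ) (((hasDerivAt_id (0:ℂ)).const_mul 2).const_add z)
    exact this.congr_deriv (by simp)
  have b2 : HasDerivAt (fun x => ψ (z - 2 * x)) (deriv ψ (z - 2 * 0) * (-2)) 0 := by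
    have := (hψ (z - 2 * 0)).hasDerivAt.comp (0:ℂ) (((hasDerivAt_id (0:ℂ)).const_mul 2).const_sub z)
    exact this.congr_deriv (by simp)
  have := (a1.mul b1).add (a2.mul b2)
  refine this.congr_deriv ?_
  simp only [zero_sub, zero_add, mul_zero, add_zero, sub_zero, theta1'_neg hτ, theta1_neg]
  ring

lemma Lam_Phi {τ : ℂ} (hτ : 0 < τ.im) {ψ : ℂ → ℂ} (hψ : Differentiable ℂ ψ) {K X : ℂ → ℂ} {K0 : ℂ}
    {G Hh Dd r : ℝ → ℂ}
    (h : ∀ x, ∀ t ∈ Set.Icc (0:ℝ) 1, Phi τ ψ x t * Dd t = K x * G t + X x * Hh t)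
    (hK : HasDerivAt K K0 0) (hX : HasDerivAt X 0 0) (hK0 : K0 ≠ 0) (hD : ∀ t ∈ Set.Icc (0:ℝ) 1, Dd t ≠ 0)
    (hr : ContinuousOn r (Set.Icc 0 1)) (hE : ∀ t ∈ Set.Icc (0:ℝ) 1, Hh t = EF t τ ^ 2 * r t * Dd t) (x : ℂ) :
    Lam τ (-(1/2)) (Phi τ ψ x) = X x * ∫ t in Set.Ioo (0:ℝ) 1, cexp (1/2 * LL τ t) * r t := by
  have hth := theta1'_zero_ne hτ
  rw [← integral_const_mul]
  have := Lam_exact hτ (N := Phi τ ψ x) (w := fun z => (-4 * (K x / K0) * theta1' 0 τ) * ψ z)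
    (r := fun t => X x * r t) (Phi_diff hτ hψ x) (by fun_prop) (continuousOn_const.mul hr) ?_
  · rw [this]
    refine integral_congr_ae (Eventually.of_forall fun t => ?_)
    simp only; ring
  · intro t ht
    have d1 := (Phi_deriv0 hτ hψ (t:ℂ)).mul_const (Dd t)
    have d2 := (hK.mul_const (G t)).add (hX.mul_const (Hh t))
    have hfun : (fun x => Phi τ ψ x t * Dd t) = (fun y => K y * G t) + fun y => X y * Hh t := by
      ext y; exact h y t ht
    rw [hfun] at d1
    have d3 := d1.unique d2
    have hG : G t = (2 * theta1' t τ * ψ t - 4 * theta1 t τ * deriv ψ t) * Dd t / K0 := by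
      rw [d3]; field_simp; ring
    have h1 := h x t ht
    rw [hG, hE t ht] at h1
    have h2 : Phi τ ψ x t = K x / K0 * (2 * theta1' t τ * ψ t - 4 * theta1 t τ * deriv ψ t) + X x * (EF t τ ^ 2 * r t) := by
      apply mul_right_cancel₀ (hD t ht)
      rw [h1]; ring
    rw [h2, deriv_const_mul _ (hψ _), dE]
    have e : theta1 t τ = EF t τ * theta1' 0 τ := by rw [EF]; field_simp
    rw [e]
    field_simp
    ring

/-- half-argument level four theta -/
noncomputable def th (τ : ℂ) (m : ℤ) (u : ℂ) : ℂ := theta4m m (u / 2) τ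

lemma jt_diff {τ : ℂ} (hτ : 0 < τ.im) : Differentiable ℂ (fun z => jacobiTheta₂ z τ) :=
  fun z => differentiableAt_jacobiTheta₂_fst z hτ

lemma theta4m_diff {τ : ℂ} (hτ : 0 < τ.im) (m : ℤ) : Differentiable ℂ (fun x => theta4m m x τ) := by
  have h8 : 0 < (8 * τ).im := by simpa using hτ
  simp_rw [theta4m_eq]
  have : Differentiable ℂ (fun x => jacobiTheta₂ (4 * x + m * τ) (8 * τ)) :=
    (jt_diff h8).comp (by fun_prop : Differentiable ℂ (fun x : ℂ => 4 * x + m * τ))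
  fun_prop

lemma th_diff {τ : ℂ} (hτ : 0 < τ.im) (m : ℤ) : Differentiable ℂ (th τ m) :=
  (theta4m_diff hτ m).comp (by fun_prop : Differentiable ℂ (fun u : ℂ => u / 2))

lemma theta4m_shift (m k : ℤ) (x τ : ℂ) : theta4m (m + 8 * k) x τ = theta4m m x τ := by
  rw [theta4m_eq, theta4m_eq, show 4 * x + ((m + 8 * k : ℤ) : ℂ) * τ = 4 * x + m * τ + k * (8 * τ) by push_cast; ring,
    jt_shift, ← mul_assoc, ← Complex.exp_add]
  congr 2
  push_cast; ring

lemma theta4m_congr {m n : ℤ} (h : m % 8 = n % 8) (x τ : ℂ) : theta4m m x τ = theta4m n x τ := by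
  obtain ⟨k, rfl⟩ : ∃ k, m = n + 8 * k := ⟨(m - n) / 8, by omega⟩
  exact theta4m_shift n k x τ

lemma theta4m_neg (m : ℤ) (x τ : ℂ) : theta4m (-m) x τ = theta4m m (-x) τ := by
  rw [theta4m_eq, theta4m_eq, show 4 * x + ((-m : ℤ) : ℂ) * τ = -(4 * -x + m * τ) by push_cast; ring,
    jacobiTheta₂_neg_left]
  congr 2
  push_cast; ring

lemma theta4m_half (m : ℤ) (x τ : ℂ) : theta4m m (x + 1/2) τ = cexp (π * I * m / 2) * theta4m m x τ := by
  rw [theta4m_eq, theta4m_eq, show 4 * (x + 1/2) + (m : ℂ) * τ = 4 * x + m * τ + (2:ℤ) by push_cast; ring,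
    jt_add_int, ← mul_assoc, ← Complex.exp_add]
  congr 2
  ring

lemma theta4m_sum (m : ℤ) (y : ℂ) {τ : ℂ} (hτ : 0 < τ.im) : theta4m m y τ + theta4m (m + 4) y τ =
    cexp (π * I * m ^ 2 * τ / 8 + π * I * m * y) * jacobiTheta₂ (2 * y + m * τ / 2) (2 * τ) := by
  have h2 : 0 < (2 * τ).im := by simpa using hτ
  rw [jt_split _ h2, theta4m_eq, theta4m_eq, mul_add, ← mul_assoc (cexp _) (cexp _), ← Complex.exp_add]
  congr 1
  · congr 2 <;> ring
  · congr 1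
    · congr 1; push_cast; ring
    · congr 1
      · push_cast; ring
      · ring

lemma theta4m_diffe (m : ℤ) (y : ℂ) {τ : ℂ} (hτ : 0 < τ.im) : theta4m m y τ - theta4m (m + 4) y τ =
    cexp (π * I * m ^ 2 * τ / 8 + π * I * m * y) * jacobiTheta₂ (2 * y + m * τ / 2 + 1/2) (2 * τ) := by
  have h2 : 0 < (2 * τ).im := by simpa using hτ
  have e : cexp (π * I * (2 * τ) + 2 * π * I * (2 * y + m * τ / 2 + 1/2)) =
      - cexp (π * I * (2 * τ) + 2 * π * I * (2 * y + m * τ / 2)) := by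
    rw [show π * I * (2 * τ) + 2 * π * I * (2 * y + m * τ / 2 + 1/2) =
      π * I * (2 * τ) + 2 * π * I * (2 * y + m * τ / 2) + π * I by ring, Complex.exp_add _ (π * I), Complex.exp_pi_mul_I]
    ring
  rw [jt_split _ h2, e, show 2 * (2 * y + m * τ / 2 + 1/2) = 2 * (2 * y + m * τ / 2) + (1:ℤ) by push_cast; ring,
    add_right_comm _ ((1:ℤ):ℂ), jt_add_int, jt_add_int, neg_mul, ← sub_eq_add_neg,
    theta4m_eq, theta4m_eq, mul_sub, ← mul_assoc (cexp _) (cexp _), ← Complex.exp_add]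
  congr 1
  · congr 2 <;> ring
  · congr 1
    · congr 1; push_cast; ring
    · congr 1
      · push_cast; ring
      · ring

lemma Phi_th_symm (τ : ℂ) (m : ℤ) (x z : ℂ) :
    Phi τ (th τ m) x (1 - z) = -cexp (π * I * m / 2) * Phi τ (th τ (-m)) x z := by
  unfold Phi th
  rw [show (1 - z + 2 * x) / 2 = -((z - 2 * x) / 2) + 1/2 by ring, show (1 - z - 2 * x) / 2 = -((z + 2 * x) / 2) + 1/2 by ring,
    theta4m_half, theta4m_half, ← theta4m_neg, ← theta4m_neg, show x - (1 - z) = x + z - 1 by ring,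
    show x + (1 - z) = x - z + 1 by ring, theta1_sub_one, theta1_add_one]
  ring

lemma Lam_th_symm {τ : ℂ} (hτ : 0 < τ.im) (m : ℤ) (x : ℂ) :
    Lam τ (-(1/2)) (Phi τ (th τ m) x) = -cexp (π * I * m / 2) * Lam τ (-(1/2)) (Phi τ (th τ (-m)) x) := by
  have hd := Phi_diff hτ (th_diff hτ m) x
  have hd2 := Phi_diff hτ (th_diff hτ (-m)) x
  rw [← Lam_symm hτ _ hd]
  simp_rw [Phi_th_symm]
  have := Lam_lin hτ (s := -(1/2)) (by norm_num) hd2 hd2 (-cexp (π * I * m / 2)) 0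
  simpa using this

lemma th_congr {τ : ℂ} {m n : ℤ} (h : m % 8 = n % 8) : th τ m = th τ n := by
  ext u; exact theta4m_congr h _ _

lemma case_zero {τ : ℂ} (hτ : 0 < τ.im) {m : ℤ} (hm : m % 4 = 0) (x : ℂ) :
    Lam τ (-(1/2)) (Phi τ (th τ m) x) = 0 := by
  have h := Lam_th_symm hτ m x
  rw [th_congr (by omega : (-m) % 8 = m % 8)] at h
  obtain ⟨k, rfl⟩ : ∃ k, m = 4 * k := ⟨m / 4, by omega⟩
  have e : cexp (π * I * ((4 * k : ℤ) : ℂ) / 2) = 1 := by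
    rw [Complex.exp_eq_one_iff]; exact ⟨k, by push_cast; ring⟩
  rw [e] at h
  linear_combination h / 2

end Phi

section Cases
open scoped Real

lemma jt_real_ne {τ : ℂ} (hτ : 0 < τ.im) (t : ℝ) : jacobiTheta₂ t τ ≠ 0 := by
  refine jt_ne_zero _ hτ fun a b h => ?_
  have h1 := congrArg Complex.im h
  simp at h1
  have h2 : τ.im * (1 + 2 * b) = 0 := by linarith
  rcases mul_eq_zero.1 h2 with h3 | h3
  · linarith
  · have : (1 + 2 * b : ℤ) = 0 := by exact_mod_cast h3
    omega

lemma T4_real_ne {τ : ℂ} (hτ : 0 < τ.im) (t : ℝ) : T4 t τ ≠ 0 := by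
  have := jt_real_ne hτ (t + 1/2)
  push_cast at this
  exact this

lemma jt0_ne {τ : ℂ} (hτ : 0 < τ.im) : jacobiTheta₂ 0 τ ≠ 0 := by
  have := jt_real_ne hτ 0; rwa [Complex.ofReal_zero] at this

lemma T40_ne {τ : ℂ} (hτ : 0 < τ.im) : T4 0 τ ≠ 0 := by
  have := T4_real_ne hτ 0; rwa [Complex.ofReal_zero] at this

lemma T20_ne {τ : ℂ} (hτ : 0 < τ.im) : T2 0 τ ≠ 0 := by
  have h := theta1_ne_zero hτ (not_inLattice_of_Ioo hτ (t := 1/2) ⟨by norm_num, by norm_num⟩)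
  push_cast at h
  rw [T2, zero_add]; exact h

lemma theta1_half_ne {τ : ℂ} (hτ : 0 < τ.im) (t : ℝ) : theta1 (t - τ / 2) (2 * τ) ≠ 0 := by
  have h2 : 0 < (2 * τ).im := by simpa using hτ
  refine theta1_ne_zero h2 ?_
  rintro ⟨a, b, h⟩
  have h1 := congrArg Complex.im h
  simp at h1
  have h2 : τ.im * (1 + 4 * b) = 0 := by linarith
  rcases mul_eq_zero.1 h2 with h3 | h3
  · linarith
  · have : (1 + 4 * b : ℤ) = 0 := by exact_mod_cast h3
    omega

lemma T2_half_ne {τ : ℂ} (hτ : 0 < τ.im) (t : ℝ) : T2 (t - τ / 2) (2 * τ) ≠ 0 := by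
  have := theta1_half_ne hτ (t + 1/2)
  rw [T2, show (t:ℂ) - τ / 2 + 1/2 = ((t + 1/2 : ℝ) : ℂ) - τ / 2 by push_cast; ring]
  exact this

lemma T2_diff {τ : ℂ} (hτ : 0 < τ.im) : Differentiable ℂ (fun z => T2 z τ) :=
  (theta1_differentiable hτ).comp (by fun_prop : Differentiable ℂ (fun z : ℂ => z + 1/2))

lemma T4_diff {τ : ℂ} (hτ : 0 < τ.im) : Differentiable ℂ (fun z => T4 z τ) :=
  (jt_diff hτ).comp (by fun_prop : Differentiable ℂ (fun z : ℂ => z + 1/2))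

lemma odd_gen {τ : ℂ} (hτ : 0 < τ.im) {ψ A B : ℂ → ℂ} (hψ : Differentiable ℂ ψ) (hA : Differentiable ℂ A)
    (hA0 : A 0 ≠ 0) (hAe : ∀ x, A (-x) = A x) (hBe : ∀ x, B (-x) = B x) {D α : ℝ → ℂ}
    (hD : ∀ t ∈ Set.Icc (0:ℝ) 1, D t ≠ 0)
    (h : ∀ x : ℂ, ∀ t : ℝ, 2 * D t * ψ (t + 2 * x) = α t * (T2 (x + t) τ * A x + theta1 (x + t) τ * B x)) (x : ℂ) :
    Lam τ (-(1/2)) (Phi τ ψ x) = 0 := by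
  have h2 : 0 < (2 * τ).im := by simpa using hτ
  have hθ := theta1_differentiable hτ
  have hT2 := T2_diff hτ
  have := Lam_Phi hτ hψ (K := fun x => A x * T2 x τ * theta1 x τ) (X := fun _ => 0)
    (K0 := A 0 * T2 0 τ * theta1' 0 τ) (G := fun t => α t * T4 (2 * t) (2 * τ)) (Hh := fun _ => 0)
    (r := fun _ => 0) (Dd := fun t => T4 0 (2 * τ) * D t) ?_ ?_ ?_ ?_ ?_ continuousOn_const ?_ x
  · rw [this, zero_mul]
  · intro x t _
    have h1 := h x t
    have h3 := h (-x) t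
    rw [hAe, hBe, show -x + (t:ℂ) = -(x - t) by ring, T2_neg, theta1_neg,
      show (t:ℂ) + 2 * -x = t - 2 * x by ring] at h3
    have h4 := id_dup x t hτ
    simp only [Phi]
    linear_combination (theta1 (x - t) τ * T4 0 (2 * τ) / 2) * h1 + (theta1 (x + t) τ * T4 0 (2 * τ) / 2) * h3
      + (α t * A x / 2) * h4
  · have := ((hA 0).hasDerivAt.mul (hT2 0).hasDerivAt).mul (theta1_hasDerivAt hτ 0)
    refine this.congr_deriv ?_
    simp [theta1_zero]
  · exact hasDerivAt_const _ _
  · exact mul_ne_zero (mul_ne_zero hA0 (T20_ne hτ)) (theta1'_zero_ne hτ)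
  · intro t ht; exact mul_ne_zero (T40_ne h2) (hD t ht)
  · intro t _; simp

/-- building blocks for odd `m` -/
noncomputable def psiO (τ δ u : ℂ) : ℂ := cexp (π * I * u / 2) * jacobiTheta₂ (u + τ / 2 + δ) (2 * τ)

lemma psiO_diff {τ : ℂ} (hτ : 0 < τ.im) (δ : ℂ) : Differentiable ℂ (psiO τ δ) := by
  have h2 : 0 < (2 * τ).im := by simpa using hτ
  have : Differentiable ℂ (fun u => jacobiTheta₂ (u + τ / 2 + δ) (2 * τ)) :=
    (jt_diff h2).comp (by fun_prop : Differentiable ℂ (fun u : ℂ => u + τ / 2 + δ))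
  unfold psiO
  fun_prop

lemma theta1_add_tau (X τ : ℂ) : theta1 (X + τ / 2) τ =
    cexp (-(π * I * τ / 4) - π * I * X) * (I * T4 X τ) := by
  have h := T2_add_tau (X - 1/2) τ
  rw [show X - 1/2 + τ/2 = X + τ/2 - 1/2 by ring, T2_sub_half, jt_sub_half] at h
  rw [h, show -(π * I * τ / 4) - π * I * (X - 1/2) = (-(π * I * τ / 4) - π * I * X) + π * I * (1/2) by ring,
    Complex.exp_add, exp_pi_half]
  ring

lemma odd0_id {τ : ℂ} (hτ : 0 < τ.im) (x : ℂ) (t : ℝ) :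
    2 * T2 (t - τ / 2) (2 * τ) * psiO τ 0 (t + 2 * x) =
    cexp (π * I * t / 2 - π * I * τ / 4) * (T2 (x + t) τ * jacobiTheta₂ x τ + theta1 (x + t) τ * (I * T4 x τ)) := by
  have h := id_TT (-(x + τ/2)) (t + 2 * x + τ/2) hτ
  rw [show 2 * -(x + τ/2) + (t + 2 * x + τ/2) = t - τ/2 by ring,
    show -(x + τ/2) + (t + 2 * x + τ/2) = x + t by ring, T2_neg, theta1_neg, T2_add_tau, theta1_add_tau] at h
  have e : cexp (π * I * t / 2 - π * I * τ / 4) =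
      cexp (π * I * (t + 2 * x) / 2) * cexp (-(π * I * τ / 4) - π * I * x) := by
    rw [← Complex.exp_add]; congr 1; ring
  rw [psiO, add_zero, e]
  linear_combination cexp (π * I * (t + 2 * x) / 2) * h

lemma odd1_id {τ : ℂ} (hτ : 0 < τ.im) (x : ℂ) (t : ℝ) :
    2 * theta1 (t - τ / 2) (2 * τ) * psiO τ (1/2) (t + 2 * x) =
    cexp (π * I * t / 2 - π * I * τ / 4) * (T2 (x + t) τ * (-(I * T4 x τ)) + theta1 (x + t) τ * jacobiTheta₂ x τ) := by
  have h := id_TT (-(x + τ/2 + 1/2)) (t + 2 * x + τ/2 + 1/2) hτ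
  rw [show 2 * -(x + τ/2 + 1/2) + (t + 2 * x + τ/2 + 1/2) = t - τ/2 - 1/2 by ring,
    show -(x + τ/2 + 1/2) + (t + 2 * x + τ/2 + 1/2) = x + t by ring, T2_neg, theta1_neg, T2_add_half,
    show theta1 (x + τ/2 + 1/2) τ = T2 (x + τ/2) τ from rfl, T2_sub_half, T2_add_tau, theta1_add_tau] at h
  have e : cexp (π * I * t / 2 - π * I * τ / 4) =
      cexp (π * I * (t + 2 * x) / 2) * cexp (-(π * I * τ / 4) - π * I * x) := by
    rw [← Complex.exp_add]; congr 1; ring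
  rw [psiO, e]
  linear_combination cexp (π * I * (t + 2 * x) / 2) * h

lemma Lam_psi0 {τ : ℂ} (hτ : 0 < τ.im) (x : ℂ) : Lam τ (-(1/2)) (Phi τ (psiO τ 0) x) = 0 :=
  odd_gen hτ (psiO_diff hτ 0) (jt_diff hτ) (jt0_ne hτ) (fun x => jacobiTheta₂_neg_left x τ)
    (B := fun x => I * T4 x τ) (fun x => by simp only [T4_neg]) (fun t _ => T2_half_ne hτ t) (odd0_id hτ) x

lemma Lam_psi1 {τ : ℂ} (hτ : 0 < τ.im) (x : ℂ) : Lam τ (-(1/2)) (Phi τ (psiO τ (1/2)) x) = 0 :=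
  odd_gen hτ (psiO_diff hτ (1/2)) (A := fun x => -(I * T4 x τ)) (((T4_diff hτ).const_mul I).neg)
    (neg_ne_zero.2 (mul_ne_zero I_ne_zero (T40_ne hτ))) (fun x => by simp only [T4_neg])
    (fun x => jacobiTheta₂_neg_left x τ) (fun t _ => theta1_half_ne hτ t) (odd1_id hτ) x

lemma Lam_Phi_lin {τ : ℂ} (hτ : 0 < τ.im) {ψ χ : ℂ → ℂ} (hψ : Differentiable ℂ ψ) (hχ : Differentiable ℂ χ)
    (a b x : ℂ) : Lam τ (-(1/2)) (Phi τ (fun u => a * ψ u + b * χ u) x) =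
      a * Lam τ (-(1/2)) (Phi τ ψ x) + b * Lam τ (-(1/2)) (Phi τ χ x) := by
  rw [← Lam_lin hτ (by norm_num) (Phi_diff hτ hψ x) (Phi_diff hτ hχ x)]
  congr 1
  ext z; exact Phi_lin τ a b ψ χ x z

lemma case_one {τ : ℂ} (hτ : 0 < τ.im) {m : ℤ} (hm : m % 4 = 1) (x : ℂ) :
    Lam τ (-(1/2)) (Phi τ (th τ m) x) = 0 := by
  have hs : ∀ u, theta4m 1 (u/2) τ + theta4m 5 (u/2) τ = cexp (π * I * τ / 8) * psiO τ 0 u := by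
    intro u
    have := theta4m_sum 1 (u/2) hτ
    rw [show (1 + 4 : ℤ) = 5 by norm_num] at this
    rw [this, psiO, ← mul_assoc, ← Complex.exp_add]
    congr 2 <;> (push_cast; ring)
  have hd : ∀ u, theta4m 1 (u/2) τ - theta4m 5 (u/2) τ = cexp (π * I * τ / 8) * psiO τ (1/2) u := by
    intro u
    have := theta4m_diffe 1 (u/2) hτ
    rw [show (1 + 4 : ℤ) = 5 by norm_num] at this
    rw [this, psiO, ← mul_assoc, ← Complex.exp_add]
    congr 2 <;> (push_cast; ring)
  have key : ∃ b : ℂ, th τ m = fun u => cexp (π * I * τ / 8) / 2 * psiO τ 0 u + b * psiO τ (1/2) u := by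
    rcases (by omega : m % 8 = 1 % 8 ∨ m % 8 = 5 % 8) with h | h
    · refine ⟨cexp (π * I * τ / 8) / 2, ?_⟩
      rw [th_congr h]; ext u
      rw [th]; linear_combination hs u / 2 + hd u / 2
    · refine ⟨-(cexp (π * I * τ / 8) / 2), ?_⟩
      rw [th_congr h]; ext u
      rw [th]; linear_combination hs u / 2 - hd u / 2
  obtain ⟨b, hb⟩ := key
  rw [hb, Lam_Phi_lin hτ (psiO_diff hτ 0) (psiO_diff hτ (1/2)), Lam_psi0 hτ, Lam_psi1 hτ]
  ring

lemma case_three {τ : ℂ} (hτ : 0 < τ.im) {m : ℤ} (hm : m % 4 = 3) (x : ℂ) :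
    Lam τ (-(1/2)) (Phi τ (th τ m) x) = 0 := by
  rw [Lam_th_symm hτ, case_one hτ (by omega), mul_zero]

lemma id_pyth2 (t : ℂ) {τ : ℂ} (hτ : 0 < τ.im) :
    T4 0 (2 * τ) ^ 2 * jacobiTheta₂ t (2 * τ) ^ 2 =
    jacobiTheta₂ 0 (2 * τ) ^ 2 * T4 t (2 * τ) ^ 2 - T2 0 (2 * τ) ^ 2 * theta1 t (2 * τ) ^ 2 := by
  have p := id_p2 t hτ
  have r := id_r2 t hτ
  have pq := id_pQ t hτ
  have rp := id_rP t hτ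
  have p0 := id_p2 0 hτ
  have r0 := id_r2 0 hτ
  have c0 := id_pr 0 hτ
  rw [mul_zero] at c0
  generalize jacobiTheta₂ 0 τ = P at *
  generalize T4 0 τ = Q at *
  linear_combination (-jacobiTheta₂ t (2 * τ) ^ 2) * c0 - (P * Q) / 2 * p - (P * Q) / 2 * r
    + (P ^ 2) / 2 * pq + (Q ^ 2) / 2 * rp - (1/2) * T4 t (2 * τ) ^ 2 * (- p0 - r0)
    + (1/2) * theta1 t (2 * τ) ^ 2 * (r0 - p0)

lemma id_quartic (t : ℂ) {τ : ℂ} (hτ : 0 < τ.im) :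
    T4 (2 * t) (2 * τ) * T4 0 (2 * τ) ^ 3 = T4 t (2 * τ) ^ 4 - theta1 t (2 * τ) ^ 4 := by
  have pq := id_pQ t hτ
  have rp := id_rP t hτ
  have c0 := id_pr 0 hτ
  have c := id_pr t hτ
  rw [mul_zero] at c0
  linear_combination (-T4 (2 * t) (2 * τ) * T4 0 (2 * τ)) * c0 - (jacobiTheta₂ 0 τ * T4 0 τ) * c
    + (T4 t τ * jacobiTheta₂ 0 τ) * pq + (T4 t (2 * τ) ^ 2 - theta1 t (2 * τ) ^ 2) * rp

lemma id_quartic0 {τ : ℂ} (hτ : 0 < τ.im) :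
    jacobiTheta₂ 0 (2 * τ) ^ 4 = T2 0 (2 * τ) ^ 4 + T4 0 (2 * τ) ^ 4 := by
  have p0 := id_p2 0 hτ
  have r0 := id_r2 0 hτ
  have c0 := id_pr 0 hτ
  rw [mul_zero] at c0
  linear_combination (- T4 0 τ ^ 2) * p0 - (jacobiTheta₂ 0 (2 * τ) ^ 2 + T2 0 (2 * τ) ^ 2) * r0 +
    (jacobiTheta₂ 0 τ * T4 0 τ + T4 0 (2 * τ) ^ 2) * c0

end Cases

section CaseTwo
open scoped Real

/-- the normalised period integral -/
noncomputable def Khat (τ : ℂ) : ℂ := ∫ t in Set.Ioo (0:ℝ) 1, cexp (1/2 * LL τ t) *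
  (jacobiTheta₂ 0 (2 * τ) ^ 2 * T4 0 (2 * τ) ^ 2 * jacobiTheta₂ t (2 * τ) / T4 t (2 * τ) ^ 2)

lemma EF_S {τ : ℂ} (hτ : 0 < τ.im) (t : ℂ) : EF t τ * (π * jacobiTheta₂ 0 (2 * τ) * T2 0 (2 * τ) *
    T4 0 (2 * τ) ^ 2) = theta1 t (2 * τ) * T4 t (2 * τ) := by
  have h0 := theta1'_zero_ne hτ
  have h1 := id_T1t t hτ
  have h2 := jacobi_deriv hτ
  have h3 := id_T2zero hτ
  rw [EF, div_mul_eq_mul_div, div_eq_iff h0, h2]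
  linear_combination (-theta1 t τ * π * T4 0 (2 * τ) ^ 2 / 2) * h3 + (π * T4 0 (2 * τ) ^ 2 * T2 0 τ / 2) * h1

lemma id_G {τ : ℂ} (hτ : 0 < τ.im) (t : ℂ) :
    T4 (2 * t) (2 * τ) / T4 0 (2 * τ) + theta1 t τ ^ 2 / T2 0 τ ^ 2 - T2 t τ ^ 2 / T2 0 τ ^ 2 =
    2 * theta1 t (2 * τ) ^ 2 * jacobiTheta₂ t (2 * τ) ^ 2 / (T2 0 (2 * τ) ^ 2 * T4 0 (2 * τ) ^ 2) := by
  have h2 : 0 < (2 * τ).im := by simpa using hτ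
  have ha := jt0_ne h2
  have hb := T20_ne h2
  have hc := T40_ne h2
  have hp := T20_ne hτ
  have e1 := id_T1t t hτ
  have e2 := id_T2t t hτ
  have e3 := id_T2zero hτ
  have e4 := id_pyth t hτ
  have e5 := id_pyth2 t hτ
  have e6 := id_quartic t hτ
  have e7 := id_quartic0 hτ
  have f1 : theta1 t τ ^ 2 / T2 0 τ ^ 2 =
      theta1 t (2 * τ) ^ 2 * T4 t (2 * τ) ^ 2 / (jacobiTheta₂ 0 (2 * τ) ^ 2 * T2 0 (2 * τ) ^ 2) := by
    have : theta1 t τ ^ 2 / T2 0 τ ^ 2 = (theta1 t τ * T2 0 τ) ^ 2 / (T2 0 τ ^ 2) ^ 2 := by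
      field_simp
    rw [this, e1, e3]; field_simp
  have f2 : T2 t τ ^ 2 / T2 0 τ ^ 2 =
      T2 t (2 * τ) ^ 2 * jacobiTheta₂ t (2 * τ) ^ 2 / (jacobiTheta₂ 0 (2 * τ) ^ 2 * T2 0 (2 * τ) ^ 2) := by
    have : T2 t τ ^ 2 / T2 0 τ ^ 2 = (T2 t τ * T2 0 τ) ^ 2 / (T2 0 τ ^ 2) ^ 2 := by
      field_simp
    rw [this, e2, e3]; field_simp
  have f3 : T4 (2 * t) (2 * τ) / T4 0 (2 * τ) = (T4 t (2 * τ) ^ 4 - theta1 t (2 * τ) ^ 4) / T4 0 (2 * τ) ^ 4 := by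
    rw [← e6]; field_simp
  rw [f1, f2, f3]
  generalize T2 0 (2 * τ) = b at *
  generalize T4 0 (2 * τ) = c at *
  generalize jacobiTheta₂ 0 (2 * τ) = a at *
  generalize jacobiTheta₂ t (2 * τ) = S3 at *
  generalize T2 t (2 * τ) = S2 at *
  generalize theta1 t (2 * τ) = S1 at *
  generalize T4 t (2 * τ) = S4 at *
  field_simp
  linear_combination (c^2 * S3^2) * e4 - (b^2*S4^2 - a^2*S1^2 + 2 * a^2 * S1^2) * e5 - (S1^2*S4^2) * e7

lemma two_psi {τ : ℂ} (hτ : 0 < τ.im) (u : ℂ) :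
    T2 u (2 * τ) = 1 * th τ 2 u + 1 * th τ (-2) u := by
  have h := theta4m_sum (-2) (u/2) hτ
  rw [show (-2 + 4 : ℤ) = 2 by norm_num] at h
  rw [th, th, ← T2_neg, T2_eq]
  rw [one_mul, one_mul, add_comm (theta4m 2 _ _), h, ← jacobiTheta₂_neg_left]
  congr 2 <;> (push_cast; ring)

lemma Lam_T2 {τ : ℂ} (hτ : 0 < τ.im) (x : ℂ) :
    Lam τ (-(1/2)) (Phi τ (fun u => T2 u (2 * τ)) x) = 2 * π ^ 2 * theta1 x τ ^ 3 * Khat τ := by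
  have h2 : 0 < (2 * τ).im := by simpa using hτ
  have ha := jt0_ne h2
  have hb := T20_ne h2
  have hc := T40_ne h2
  have hp := T20_ne hτ
  have hpi : (π : ℂ) ≠ 0 := by exact_mod_cast Real.pi_ne_zero
  have := Lam_Phi hτ (T2_diff h2) (K := fun x => 2 * theta1 x τ * (T2 x τ ^ 2 - theta1 x τ ^ 2))
    (X := fun x => theta1 x τ ^ 3) (K0 := 2 * theta1' 0 τ * T2 0 τ ^ 2)
    (G := fun t => T4 (2 * t) (2 * τ) / T4 0 (2 * τ) + theta1 t τ ^ 2 / T2 0 τ ^ 2)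
    (Hh := fun t => 4 * theta1 t (2 * τ) ^ 2 * jacobiTheta₂ t (2 * τ) ^ 2 / (T2 0 (2 * τ) ^ 2 * T4 0 (2 * τ) ^ 2))
    (r := fun t => 2 * π ^ 2 * (jacobiTheta₂ 0 (2 * τ) ^ 2 * T4 0 (2 * τ) ^ 2 * jacobiTheta₂ t (2 * τ) / T4 t (2 * τ) ^ 2))
    (Dd := fun t => 2 * jacobiTheta₂ t (2 * τ)) ?_ ?_ ?_ ?_ ?_ ?_ ?_ x
  · rw [this, Khat]
    have : ∀ t : ℝ, cexp (1/2 * LL τ t) * (2 * π ^ 2 * (jacobiTheta₂ 0 (2 * τ) ^ 2 * T4 0 (2 * τ) ^ 2 * jacobiTheta₂ t (2 * τ) / T4 t (2 * τ) ^ 2)) =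
      2 * π ^ 2 * (cexp (1/2 * LL τ t) * (jacobiTheta₂ 0 (2 * τ) ^ 2 * T4 0 (2 * τ) ^ 2 * jacobiTheta₂ t (2 * τ) / T4 t (2 * τ) ^ 2)) := by
      intro t; ring
    simp_rw [this]
    rw [integral_const_mul]; ring
  · intro x t _
    have h1 := id_TT x t hτ
    have h3 := id_TT (-x) t hτ
    rw [show -x + (t:ℂ) = -(x - t) by ring, T2_neg, theta1_neg, T2_neg, theta1_neg,
      show 2 * -x + (t:ℂ) = t - 2 * x by ring] at h3
    rw [show 2 * x + (t:ℂ) = t + 2 * x by ring] at h1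
    have h4 : (theta1 (x - t) τ * T2 (x + t) τ + theta1 (x + t) τ * T2 (x - t) τ) =
      2 * theta1 x τ * T2 x τ * (T4 (2 * t) (2 * τ) / T4 0 (2 * τ)) := by
      rw [← mul_div_assoc, eq_div_iff hc]; exact id_dup x t hτ
    have h5 : theta1 (x + t) τ * theta1 (x - t) τ =
      theta1 x τ ^ 2 * (T2 t τ ^ 2 / T2 0 τ ^ 2) - T2 x τ ^ 2 * (theta1 t τ ^ 2 / T2 0 τ ^ 2) := by
      rw [← mul_div_assoc, ← mul_div_assoc, ← sub_div, eq_div_iff (pow_ne_zero 2 hp)]; exact id_addition x t hτ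
    have h6 := id_G hτ t
    simp only [Phi]
    linear_combination (theta1 (x - t) τ) * h1 + (theta1 (x + t) τ) * h3 + T2 x τ * h4 - 2 * theta1 x τ * h5
      + 2 * theta1 x τ ^ 3 * h6
  · have h := ((theta1_hasDerivAt hτ 0).const_mul 2).mul ((((T2_diff hτ) 0).hasDerivAt.pow 2).sub ((theta1_hasDerivAt hτ 0).pow 2))
    refine h.congr_deriv ?_
    simp [theta1_zero]
  · refine ((theta1_hasDerivAt hτ 0).pow 3).congr_deriv ?_
    simp [theta1_zero]
  · exact mul_ne_zero (mul_ne_zero two_ne_zero (theta1'_zero_ne hτ)) (pow_ne_zero _ hp)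
  · intro t _; exact mul_ne_zero two_ne_zero (jt_real_ne h2 t)
  · apply Continuous.continuousOn
    refine continuous_const.mul (Continuous.div₀ ?_ ?_ fun t => pow_ne_zero 2 (T4_real_ne h2 t))
    · exact continuous_const.mul ((jt_diff h2).continuous.comp continuous_ofReal)
    · exact ((T4_diff h2).continuous.comp continuous_ofReal).pow 2
  · intro t _
    have h4 := T4_real_ne h2 t
    have e : EF t τ = theta1 t (2 * τ) * T4 t (2 * τ) / (π * jacobiTheta₂ 0 (2 * τ) * T2 0 (2 * τ) * T4 0 (2 * τ) ^ 2) := by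
      rw [eq_div_iff (by positivity)]; exact EF_S hτ t
    simp only [e]
    field_simp
    ring

lemma case_two {τ : ℂ} (hτ : 0 < τ.im) {m : ℤ} (hm : m % 4 = 2) (x : ℂ) :
    Lam τ (-(1/2)) (Phi τ (th τ m) x) = π ^ 2 * theta1 x τ ^ 3 * Khat τ := by
  have h1 := Lam_th_symm hτ 2 x
  have h2 := Lam_T2 hτ x
  have h3 : (fun u => T2 u (2 * τ)) = fun u => 1 * th τ 2 u + 1 * th τ (-2) u := funext (two_psi hτ)
  rw [h3, Lam_Phi_lin hτ (th_diff hτ 2) (th_diff hτ (-2))] at h2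
  rw [show (π * I * (2:ℤ) / 2 : ℂ) = π * I by push_cast; ring, Complex.exp_pi_mul_I] at h1
  rcases (by omega : m % 8 = 2 % 8 ∨ m % 8 = (-2) % 8) with h | h
  · rw [th_congr h]; linear_combination h2 / 2 + h1 / 2
  · rw [th_congr h]; linear_combination h2 / 2 - h1 / 2

end CaseTwo

section Holo
open scoped Real

lemma MM_continuousAt {τ : ℂ} (hτ : 0 < τ.im) (t : ℝ) :
    ContinuousAt (fun p : ℂ × ℝ => MM p.1 p.2) (τ, t) := by
  refine (MM_continuous_strip (half_pos hτ)).continuousAt ?_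
  have ho : IsOpen {p : ℂ × ℝ | τ.im / 2 < p.1.im} :=
    isOpen_lt continuous_const (Complex.continuous_im.comp continuous_fst)
  filter_upwards [ho.mem_nhds (show (τ, t) ∈ {p : ℂ × ℝ | τ.im / 2 < p.1.im} from half_lt_self hτ)] with p hp
  exact le_of_lt hp

lemma MM_diff_tau (t : ℝ) {τ : ℂ} (hτ : 0 < τ.im) : DifferentiableAt ℂ (fun τ => MM τ t) τ := by
  have hq : DifferentiableAt ℂ (fun τ : ℂ => cexp (2 * π * I * τ)) τ := by fun_prop
  have h : ∀ w : ℂ, ‖w‖ ≤ 1 → DifferentiableAt ℂ (fun τ : ℂ => lgs (cexp (2 * π * I * τ)) w) τ := fun w hw =>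
    DifferentiableAt.comp (g := fun Q => lgs Q w) τ (lgs_differentiableAt (norm_Qexp hτ) hw) hq
  unfold MM
  exact ((h _ (norm_w t)).add (h _ (norm_w' t))).sub ((h 1 (by simp)).const_mul 2)

lemma jt_diff_tau (z : ℂ) {τ : ℂ} (hτ : 0 < τ.im) : DifferentiableAt ℂ (fun τ => jacobiTheta₂ z (2 * τ)) τ := by
  have h2 : 0 < (2 * τ).im := by simpa using hτ
  exact (differentiableAt_jacobiTheta₂_snd z h2).comp τ (by fun_prop : DifferentiableAt ℂ (fun τ : ℂ => 2 * τ) τ)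

/-- the regular part of the integrand -/
noncomputable def RR (τ : ℂ) (t : ℝ) : ℂ := cexp (1/2 * MM τ t) *
  (jacobiTheta₂ 0 (2 * τ) ^ 2 * T4 0 (2 * τ) ^ 2 * jacobiTheta₂ t (2 * τ) / T4 t (2 * τ) ^ 2)

lemma Khat_eq (τ : ℂ) : Khat τ = ∫ t in Set.Ioo (0:ℝ) 1,
    cexp (1/2 * (Real.log (Real.sin (π * t) / π) : ℂ)) * RR τ t := by
  unfold Khat
  congr 1; ext t
  rw [RR, LL, mul_add, Complex.exp_add]; ring

lemma RR_diff (t : ℝ) {τ : ℂ} (hτ : 0 < τ.im) : DifferentiableAt ℂ (fun τ => RR τ t) τ := by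
  have h2 : 0 < (2 * τ).im := by simpa using hτ
  have h1 := MM_diff_tau t hτ
  have h3 := jt_diff_tau t hτ
  have h4 := jt_diff_tau 0 hτ
  have h5 : DifferentiableAt ℂ (fun τ => T4 t (2 * τ)) τ := jt_diff_tau (t + 1/2) hτ
  have h6 : DifferentiableAt ℂ (fun τ => T4 0 (2 * τ)) τ := jt_diff_tau (0 + 1/2) hτ
  unfold RR
  exact ((h1.const_mul (1/2)).cexp).mul ((((h4.pow 2).mul (h6.pow 2)).mul h3).div (h5.pow 2)
    (pow_ne_zero 2 (T4_real_ne h2 t)))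

lemma jt_cont2 (e : ℂ) {τ : ℂ} (hτ : 0 < τ.im) (t : ℝ) :
    ContinuousAt (fun p : ℂ × ℝ => jacobiTheta₂ (p.2 + e) (2 * p.1)) (τ, t) := by
  have h2 : 0 < (2 * τ).im := by simpa using hτ
  have h := continuousAt_jacobiTheta₂ ((t : ℂ) + e) h2
  exact ContinuousAt.comp (f := fun p : ℂ × ℝ => ((p.2 : ℂ) + e, 2 * p.1)) (x := (τ, t)) h (by fun_prop)

lemma RR_cont {τ : ℂ} (hτ : 0 < τ.im) (t : ℝ) : ContinuousAt (fun p : ℂ × ℝ => RR p.1 p.2) (τ, t) := by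
  have h2 : 0 < (2 * τ).im := by simpa using hτ
  have h1 := MM_continuousAt hτ t
  have h3 : ContinuousAt (fun p : ℂ × ℝ => jacobiTheta₂ p.2 (2 * p.1)) (τ, t) := by
    simpa using jt_cont2 0 hτ t
  have h4 : ContinuousAt (fun p : ℂ × ℝ => jacobiTheta₂ 0 (2 * p.1)) (τ, t) :=
    ContinuousAt.comp (f := fun p : ℂ × ℝ => p.1) (x := (τ, t)) (g := fun τ => jacobiTheta₂ 0 (2 * τ))
      (jt_diff_tau 0 hτ).continuousAt continuousAt_fst
  have h6 : ContinuousAt (fun p : ℂ × ℝ => T4 0 (2 * p.1)) (τ, t) :=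
    ContinuousAt.comp (f := fun p : ℂ × ℝ => p.1) (x := (τ, t)) (g := fun τ => T4 0 (2 * τ))
      (jt_diff_tau (0 + 1/2) hτ).continuousAt continuousAt_fst
  have h5 : ContinuousAt (fun p : ℂ × ℝ => T4 p.2 (2 * p.1)) (τ, t) := jt_cont2 (1/2) hτ t
  unfold RR
  exact ((continuousAt_const.mul h1).cexp).mul ((((h4.pow 2).mul (h6.pow 2)).mul h3).div₀ (h5.pow 2)
    (pow_ne_zero 2 (T4_real_ne h2 t)))

lemma norm_sqrt_fac {t : ℝ} (ht : t ∈ Set.Ioo (0:ℝ) 1) :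
    ‖cexp (1/2 * (Real.log (Real.sin (π * t) / π) : ℂ))‖ ≤ 1 := by
  rw [Complex.norm_exp, Real.exp_le_one_iff]
  have h := Real.log_nonpos (sin_div_pos ht).le (sin_div_lt_one t).le
  have e : (1/2 * (Real.log (Real.sin (π * t) / π) : ℂ)) = ((1/2 * Real.log (Real.sin (π * t) / π) : ℝ) : ℂ) := by
    push_cast; ring
  rw [e, Complex.ofReal_re]; linarith

lemma Khat_holo : DifferentiableOn ℂ Khat {τ | 0 < τ.im} := by
  have : Khat = fun τ => ∫ t in Set.Ioo (0:ℝ) 1,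
    cexp (1/2 * (Real.log (Real.sin (π * t) / π) : ℂ)) * RR τ t := funext Khat_eq
  rw [this]
  refine holo_int (isOpen_lt continuous_const Complex.continuous_im) ?_ ?_ ?_
  · intro t _ τ hτ
    exact ((RR_diff t hτ).const_mul _).differentiableWithinAt
  · intro τ hτ t ht
    refine ContinuousAt.continuousWithinAt (ContinuousAt.mul ?_ ?_)
    · refine (continuousAt_const.mul ?_).cexp
      refine Complex.continuous_ofReal.continuousAt.comp (ContinuousAt.log ?_ (sin_div_pos ht).ne')
      fun_prop
    · exact ContinuousAt.comp (f := fun t : ℝ => (τ, t)) (g := fun p : ℂ × ℝ => RR p.1 p.2) (RR_cont hτ t) (by fun_prop)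
  · intro τ0 h0
    have h0' : 0 < τ0.im := h0
    have hK : IsCompact (Metric.closedBall τ0 (τ0.im / 2) ×ˢ Set.Icc (0:ℝ) 1) :=
      (isCompact_closedBall _ _).prod isCompact_Icc
    have hin : ∀ τ ∈ Metric.closedBall τ0 (τ0.im / 2), 0 < τ.im := by
      intro τ h
      have h1 := Complex.abs_im_le_norm (τ - τ0)
      rw [Metric.mem_closedBall, dist_eq_norm] at h
      rw [Complex.sub_im] at h1
      have := (abs_le.1 (h1.trans h)).1
      linarith
    obtain ⟨C, hC⟩ := hK.exists_bound_of_continuousOn (f := fun p : ℂ × ℝ => RR p.1 p.2)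
      (fun p hp => (RR_cont (hin p.1 hp.1) p.2).continuousWithinAt)
    refine ⟨fun _ => C, by simp, ?_⟩
    filter_upwards [Metric.closedBall_mem_nhds τ0 (half_pos h0')] with τ hτ t ht
    rw [norm_mul]
    have h1 := hC (τ, t) ⟨hτ, Set.Ioo_subset_Icc_self ht⟩
    have h2 := norm_sqrt_fac ht
    calc _ ≤ 1 * ‖RR τ t‖ := by gcongr
      _ ≤ C := by rw [one_mul]; exact h1

end Holo

section RealAxis
open scoped Real
open scoped ComplexConjugate

lemma conj_tau {τ : ℂ} (hre : τ.re = 0) : conj τ = -τ := by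
  apply Complex.ext <;> simp [hre]

lemma jt_real {τ : ℂ} (hre : τ.re = 0) (t : ℝ) : ((jacobiTheta₂ t τ).re : ℂ) = jacobiTheta₂ t τ := by
  rw [← Complex.conj_eq_iff_re, jacobiTheta₂_conj, conj_tau hre, neg_neg, Complex.conj_ofReal]

lemma T2_real {τ : ℂ} (hre : τ.re = 0) (t : ℝ) : ((T2 t τ).re : ℂ) = T2 t τ := by
  rw [← Complex.conj_eq_iff_re]
  conv_rhs => rw [← T2_neg]
  rw [T2_eq, T2_eq, map_mul, jacobiTheta₂_conj, ← Complex.exp_conj]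
  simp only [map_add, map_mul, map_div₀, conj_tau hre, Complex.conj_ofReal, Complex.conj_I, neg_neg]
  rw [← jacobiTheta₂_neg_left]
  have h2 : conj (2:ℂ) = 2 := Complex.conj_ofNat 2
  have h4 : conj (4:ℂ) = 4 := Complex.conj_ofNat 4
  rw [h2, h4]
  congr 2 <;> ring

lemma jt_re_pos {τ : ℂ} (hτ : 0 < τ.im) (hre : τ.re = 0) (t : ℝ) : 0 < (jacobiTheta₂ t τ).re := by
  have hc : Continuous (fun t : ℝ => (jacobiTheta₂ t τ).re) :=
    Complex.continuous_re.comp ((jt_diff hτ).continuous.comp continuous_ofReal)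
  have hne : ∀ t : ℝ, (jacobiTheta₂ t τ).re ≠ 0 := by
    intro t h
    apply jt_real_ne hτ t
    rw [← jt_real hre, h, Complex.ofReal_zero]
  have h0 : 0 ≤ (jacobiTheta₂ ((0:ℝ):ℂ) τ).re := by
    have h := Complex.hasSum_re (hasSum_jacobiTheta₂_term ((0:ℝ):ℂ) hτ)
    refine h.nonneg fun n => ?_
    have hI : τ = I * (τ.im : ℂ) := by apply Complex.ext <;> simp [hre]
    have : jacobiTheta₂_term n ((0:ℝ):ℂ) τ = (Real.exp (-(π * n^2 * τ.im)) : ℂ) := by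
      rw [jacobiTheta₂_term]
      conv_lhs => rw [hI]
      push_cast
      congr 1
      linear_combination (π * n ^ 2 * (τ.im : ℂ)) * Complex.I_sq
    rw [this, Complex.ofReal_re]; positivity
  by_contra hcon
  obtain ⟨s, hs⟩ := mem_range_of_exists_le_of_exists_ge hc ⟨t, not_lt.1 hcon⟩ ⟨0, h0⟩
  exact hne s hs

lemma lgs_conj {Q w : ℂ} (hQ : ‖Q‖ < 1) (hw : ‖w‖ ≤ 1) : conj (lgs Q w) = lgs (conj Q) (conj w) := by
  rw [lgs, lgs, Complex.conj_tsum]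
  congr 1; ext j
  have h := one_sub_slit (norm_fac_lt hQ hw j)
  rw [← Complex.log_conj _ (Complex.slitPlane_arg_ne_pi h)]
  simp

lemma LL_real {τ : ℂ} (hτ : 0 < τ.im) (hre : τ.re = 0) (t : ℝ) : ((LL τ t).re : ℂ) = LL τ t := by
  rw [← Complex.conj_eq_iff_re]
  have hQ : conj (cexp (2 * π * I * τ)) = cexp (2 * π * I * τ) := by
    rw [← Complex.exp_conj]
    simp only [map_mul, conj_tau hre, Complex.conj_ofReal, Complex.conj_I, Complex.conj_ofNat]
    congr 1; ring
  have h1 : conj (cexp (2 * π * I * t)) = cexp (-(2 * π * I * t)) := by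
    rw [← Complex.exp_conj]
    simp only [map_mul, Complex.conj_ofReal, Complex.conj_I, Complex.conj_ofNat]
    congr 1; ring
  have h2 : conj (cexp (-(2 * π * I * t))) = cexp (2 * π * I * t) := by
    rw [← h1, Complex.conj_conj]
  rw [LL, MM, map_add, map_sub, map_add, map_mul, lgs_conj (norm_Qexp hτ) (norm_w t),
    lgs_conj (norm_Qexp hτ) (norm_w' t), lgs_conj (norm_Qexp hτ) (by simp), hQ, h1, h2, map_one,
    Complex.conj_ofReal, Complex.conj_ofNat]
  ring

lemma wronsk_deriv {τ : ℂ} (hτ : 0 < τ.im) (t : ℂ) {N1 D1 : ℂ}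
    (hN : HasDerivAt (fun z => theta1 z (2 * τ)) N1 t) (hD : HasDerivAt (fun z => T4 z (2 * τ)) D1 t) :
    N1 * T4 t (2 * τ) - D1 * theta1 t (2 * τ) = theta1' 0 τ / 2 * T2 t τ := by
  have hN' : HasDerivAt (fun h => theta1 (t + h) (2 * τ)) N1 0 := by
    have : HasDerivAt (fun z => theta1 z (2 * τ)) N1 (t + 0) := by rwa [add_zero]
    exact this.comp_const_add t 0
  have hD' : HasDerivAt (fun h => T4 (t + h) (2 * τ)) D1 0 := by
    have : HasDerivAt (fun z => T4 z (2 * τ)) D1 (t + 0) := by rwa [add_zero]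
    exact this.comp_const_add t 0
  have e1 := (hN'.mul_const (T4 t (2 * τ))).sub (hD'.mul_const (theta1 t (2 * τ)))
  have g0 : HasDerivAt (fun h : ℂ => h / 2) (1/2) 0 := (hasDerivAt_id (0:ℂ)).div_const 2
  have g1 : HasDerivAt (fun h : ℂ => theta1 (h/2) τ) (theta1' 0 τ * (1/2)) 0 := by
    have : HasDerivAt (fun z => theta1 z τ) (theta1' 0 τ) ((fun h : ℂ => h / 2) 0) := by
      simpa using theta1_hasDerivAt hτ 0
    exact HasDerivAt.comp (h₂ := fun z => theta1 z τ) 0 this g0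
  have g2 : DifferentiableAt ℂ (fun h : ℂ => T2 (t + h/2) τ) 0 :=
    ((T2_diff hτ).comp (by fun_prop : Differentiable ℂ (fun h : ℂ => t + h/2))) 0
  have e2 := g1.mul g2.hasDerivAt
  have e3 : (fun h => theta1 (t + h) (2 * τ) * T4 t (2 * τ) - T4 (t + h) (2 * τ) * theta1 t (2 * τ)) =
    fun h => theta1 (h/2) τ * T2 (t + h/2) τ := funext fun h => id_wronsk t h hτ
  have e1' : HasDerivAt (fun h => theta1 (t + h) (2 * τ) * T4 t (2 * τ) - T4 (t + h) (2 * τ) * theta1 t (2 * τ))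
    _ 0 := e1
  rw [e3] at e1'
  have := e1'.unique e2
  rw [this]
  rw [zero_div, theta1_zero, add_zero]; ring

lemma quot_deriv {τ : ℂ} (hτ : 0 < τ.im) (t : ℝ) :
    HasDerivAt (fun z => jacobiTheta₂ 0 (2 * τ) * theta1 z (2 * τ) / (T2 0 (2 * τ) * T4 z (2 * τ)))
      (π * jacobiTheta₂ 0 (2 * τ) * T4 0 (2 * τ) * jacobiTheta₂ t (2 * τ) / T4 t (2 * τ) *
        (T4 0 (2 * τ) * T2 t (2 * τ) / (T2 0 (2 * τ) * T4 t (2 * τ)))) t := by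
  have h2 : 0 < (2 * τ).im := by simpa using hτ
  have hb := T20_ne h2
  have h4 := T4_real_ne h2 t
  have hN := ((theta1_differentiable h2) t).hasDerivAt
  have hD := ((T4_diff h2) t).hasDerivAt
  have hw := wronsk_deriv hτ t hN hD
  have e1 := id_T2t t hτ
  have e2 := jacobi_deriv hτ
  refine ((hN.const_mul _).div (hD.const_mul _) (mul_ne_zero hb h4)).congr_deriv ?_
  rw [e2] at hw
  generalize deriv (fun z => theta1 z (2 * τ)) (t:ℂ) = N1 at *
  generalize deriv (fun z => T4 z (2 * τ)) (t:ℂ) = D1 at *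
  field_simp
  linear_combination jacobiTheta₂ 0 (2 * τ) * (hw + (π * T4 0 (2 * τ) ^ 2 / 2) * e1)

end RealAxis

section Const
open scoped Real

lemma abstract_cov {v v' w : ℝ → ℝ} {f : ℝ → ℂ} {k : ℂ}
    (hv : ∀ t, HasDerivAt v (v' t) t) (hvw : ∀ t, v t ^ 2 + w t ^ 2 = 1)
    (h0 : v 0 = 0) (h1 : w (1/2) = 0)
    (hvp : ∀ t ∈ Set.Ioo (0:ℝ) (1/2), 0 < v t) (hv'p : ∀ t ∈ Set.Ioo (0:ℝ) (1/2), 0 < v' t)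
    (hwp : ∀ t ∈ Set.Ioo (0:ℝ) (1/2), 0 < w t)
    (hf : ∀ t ∈ Set.Ioo (0:ℝ) (1/2), ((Real.sqrt (v t) * v' t / w t : ℝ) : ℂ) = k * f t) :
    Complex.betaIntegral (3/4) (1/2) = 2 * k * ∫ t in Set.Ioo (0:ℝ) (1/2), f t := by
  have hp : ∀ t, HasDerivAt (fun t => v t ^ 2) (2 * v t * v' t) t := by
    intro t
    refine ((hv t).pow 2).congr_deriv ?_
    ring
  have hcont : Continuous (fun t => v t ^ 2) := continuous_iff_continuousAt.2 fun t => (hp t).continuousAt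
  have hpos : ∀ t ∈ Set.Ioo (0:ℝ) (1/2), 0 < 2 * v t * v' t := fun t ht =>
    mul_pos (mul_pos two_pos (hvp t ht)) (hv'p t ht)
  have hinj : Set.InjOn (fun t => v t ^ 2) (Set.Ioo (0:ℝ) (1/2)) := by
    refine (strictMonoOn_of_deriv_pos (convex_Ioo _ _) hcont.continuousOn ?_).injOn
    intro t ht
    rw [interior_Ioo] at ht
    rw [(hp t).deriv]; exact hpos t ht
  have himg : (fun t => v t ^ 2) '' Set.Ioo (0:ℝ) (1/2) = Set.Ioo 0 1 := by
    apply Set.Subset.antisymm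
    · rintro _ ⟨t, ht, rfl⟩
      refine ⟨pow_pos (hvp t ht) 2, ?_⟩
      have := hvw t
      have := pow_pos (hwp t ht) 2
      simp only; linarith
    · have := intermediate_value_Ioo (by norm_num : (0:ℝ) ≤ 1/2) hcont.continuousOn
      have e1 := hvw (1/2)
      simp only [h0] at this
      rw [h1] at e1
      rw [show v (1/2) ^ 2 = 1 by linarith] at this
      simpa using this
  have hcv := integral_image_eq_integral_abs_deriv_smul measurableSet_Ioo (fun t _ => (hp t).hasDerivWithinAt) hinj
    (fun p : ℝ => (p : ℂ) ^ ((3/4 : ℂ) - 1) * (1 - (p : ℂ)) ^ ((1/2 : ℂ) - 1))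
  rw [himg] at hcv
  rw [Complex.betaIntegral, intervalIntegral.integral_of_le zero_le_one, integral_Ioc_eq_integral_Ioo, hcv,
    ← integral_const_mul]
  refine setIntegral_congr_fun measurableSet_Ioo fun t ht => ?_
  have hvt := hvp t ht
  have hwt := hwp t ht
  rw [abs_of_pos (hpos t ht), Complex.real_smul, mul_assoc 2 k, ← hf t ht]
  have e1 : (((v t ^ 2 : ℝ)) : ℂ) ^ ((3/4 : ℂ) - 1) = ((Real.sqrt (v t))⁻¹ : ℝ) := by
    have : ((3/4 : ℂ) - 1) = ((-(1/4) : ℝ) : ℂ) := by push_cast; norm_num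
    rw [this, ← Complex.ofReal_cpow (by positivity)]
    congr 1
    rw [Real.sqrt_eq_rpow, ← Real.rpow_neg hvt.le, ← Real.rpow_natCast, ← Real.rpow_mul hvt.le]
    norm_num
  have e2 : (1 - ((v t ^ 2 : ℝ) : ℂ)) ^ ((1/2 : ℂ) - 1) = ((w t)⁻¹ : ℝ) := by
    have : ((1/2 : ℂ) - 1) = ((-(1/2) : ℝ) : ℂ) := by push_cast; norm_num
    rw [this, show (1 - ((v t ^ 2 : ℝ) : ℂ)) = ((w t ^ 2 : ℝ) : ℂ) by
        rw [show w t ^ 2 = 1 - v t ^ 2 by linarith [hvw t]]; push_cast; ring,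
      ← Complex.ofReal_cpow (by positivity)]
    congr 1
    rw [← Real.rpow_natCast, ← Real.rpow_mul hwt.le, ← Real.rpow_neg_one]
    norm_num
  rw [e1, e2]
  have hs : 0 < Real.sqrt (v t) := Real.sqrt_pos.2 hvt
  have hss : Real.sqrt (v t) * Real.sqrt (v t) = v t := Real.mul_self_sqrt hvt.le
  norm_cast
  field_simp
  rw [Real.sq_sqrt hvt.le]; ring

lemma Khat_half {τ : ℂ} (hτ : 0 < τ.im) : Khat τ = 2 * ∫ t in Set.Ioo (0:ℝ) (1/2), cexp (1/2 * LL τ t) *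
    (jacobiTheta₂ 0 (2 * τ) ^ 2 * T4 0 (2 * τ) ^ 2 * jacobiTheta₂ t (2 * τ) / T4 t (2 * τ) ^ 2) := by
  have h2 : 0 < (2 * τ).im := by simpa using hτ
  set r : ℝ → ℂ := fun t => jacobiTheta₂ 0 (2 * τ) ^ 2 * T4 0 (2 * τ) ^ 2 * jacobiTheta₂ t (2 * τ) / T4 t (2 * τ) ^ 2
    with hr
  have hrc : Continuous r := by
    refine (Continuous.div₀ ?_ ?_ fun t => pow_ne_zero 2 (T4_real_ne h2 t))
    · exact continuous_const.mul ((jt_diff h2).continuous.comp continuous_ofReal)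
    · exact ((T4_diff h2).continuous.comp continuous_ofReal).pow 2
  obtain ⟨C, hC⟩ := isCompact_Icc.exists_bound_of_continuousOn (s := Set.Icc (0:ℝ) 1) hrc.continuousOn
  have hint : IntegrableOn (fun t => cexp (1/2 * LL τ t) * r t) (Set.Ioo 0 1) :=
    expLL_int hτ (by norm_num) hrc.continuousOn (fun t ht => hC t (Set.Ioo_subset_Icc_self ht))
  have hi : IntervalIntegrable (fun t => cexp (1/2 * LL τ t) * r t) volume 0 1 := by
    rw [intervalIntegrable_iff_integrableOn_Ioo_of_le zero_le_one]; exact hint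
  have hi1 : IntervalIntegrable (fun t => cexp (1/2 * LL τ t) * r t) volume 0 (1/2) :=
    hi.mono_set (by rw [Set.uIcc_of_le (by norm_num), Set.uIcc_of_le (by norm_num)]; exact Set.Icc_subset_Icc_right (by norm_num))
  have hi2 : IntervalIntegrable (fun t => cexp (1/2 * LL τ t) * r t) volume (1/2) 1 :=
    hi.mono_set (by rw [Set.uIcc_of_le (by norm_num), Set.uIcc_of_le (by norm_num)]; exact Set.Icc_subset_Icc_left (by norm_num))
  have hsymm : ∀ t : ℝ, cexp (1/2 * LL τ (1 - t)) * r (1 - t) = cexp (1/2 * LL τ t) * r t := by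
    intro t
    have e1 : jacobiTheta₂ ((1 - t : ℝ) : ℂ) (2 * τ) = jacobiTheta₂ t (2 * τ) := by
      rw [show ((1 - t : ℝ) : ℂ) = -t + 1 by push_cast; ring, jacobiTheta₂_add_left, jacobiTheta₂_neg_left]
    have e2 : T4 ((1 - t : ℝ) : ℂ) (2 * τ) = T4 t (2 * τ) := by
      rw [show ((1 - t : ℝ) : ℂ) = -t + 1 by push_cast; ring, T4_add_one, T4_neg]
    simp only [hr, LL_symm, e1, e2]
  have hsub := intervalIntegral.integral_comp_sub_left (a := 0) (b := 1/2) (fun t => cexp (1/2 * LL τ t) * r t) 1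
  simp only [hsymm] at hsub
  rw [show (1:ℝ) - 1/2 = 1/2 by norm_num, sub_zero] at hsub
  have hadd := intervalIntegral.integral_add_adjacent_intervals hi1 hi2
  rw [← hsub] at hadd
  have k1 : Khat τ = ∫ t in (0:ℝ)..1, cexp (1/2 * LL τ t) * r t := by
    rw [intervalIntegral.integral_of_le zero_le_one, integral_Ioc_eq_integral_Ioo]; rfl
  rw [k1, ← hadd, intervalIntegral.integral_of_le (by norm_num), integral_Ioc_eq_integral_Ioo]
  ring

end Const

section ConstB
open scoped Real

lemma Khat_imag {τ : ℂ} (hτ : 0 < τ.im) (hre : τ.re = 0) :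
    Complex.betaIntegral (3/4) (1/2) = (π * Real.sqrt π : ℝ) * Khat τ := by
  have h2 : 0 < (2 * τ).im := by simpa using hτ
  have hre2 : (2 * τ).re = 0 := by simp [hre]
  have hpi := Real.pi_pos
  set a : ℝ := (jacobiTheta₂ ((0:ℝ):ℂ) (2 * τ)).re with ha
  set s3 : ℝ → ℝ := fun t => (jacobiTheta₂ t (2 * τ)).re with hs3
  set s4 : ℝ → ℝ := fun t => (jacobiTheta₂ ((t + 1/2 : ℝ):ℂ) (2 * τ)).re with hs4
  set s2 : ℝ → ℝ := fun t => (T2 t (2 * τ)).re with hs2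
  set s1 : ℝ → ℝ := fun t => (T2 ((t - 1/2 : ℝ) : ℂ) (2 * τ)).re with hs1
  have ea : (a : ℂ) = jacobiTheta₂ 0 (2 * τ) := by
    rw [ha, jt_real hre2]; simp
  have e3 : ∀ t : ℝ, (s3 t : ℂ) = jacobiTheta₂ t (2 * τ) := fun t => jt_real hre2 t
  have e4 : ∀ t : ℝ, (s4 t : ℂ) = T4 t (2 * τ) := by
    intro t; rw [hs4]; simp only; rw [jt_real hre2, T4]; push_cast; rfl
  have e2 : ∀ t : ℝ, (s2 t : ℂ) = T2 t (2 * τ) := fun t => T2_real hre2 t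
  have e1 : ∀ t : ℝ, (s1 t : ℂ) = theta1 t (2 * τ) := by
    intro t; rw [hs1]; simp only; rw [T2_real hre2, T2]; congr 1; push_cast; ring
  set c : ℝ := s4 0 with hc
  set b : ℝ := s2 0 with hb
  have ec : (c : ℂ) = T4 0 (2 * τ) := by rw [hc, e4]; simp
  have eb : (b : ℂ) = T2 0 (2 * τ) := by rw [hb, e2]; simp
  have pa : 0 < a := jt_re_pos h2 hre2 0
  have p3 : ∀ t, 0 < s3 t := fun t => jt_re_pos h2 hre2 t
  have p4 : ∀ t, 0 < s4 t := fun t => jt_re_pos h2 hre2 _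
  have pc : 0 < c := p4 0
  have nb : b ≠ 0 := by
    intro h; apply T20_ne h2; rw [← eb, h]; simp
  set v : ℝ → ℝ := fun t => a * s1 t / (b * s4 t) with hv
  set w : ℝ → ℝ := fun t => c * s2 t / (b * s4 t) with hw
  set ε : ℝ → ℝ := fun t => Real.exp (1/2 * (LL τ t).re) with hε
  have eε : ∀ t, (ε t : ℂ) = cexp (1/2 * LL τ t) := by
    intro t
    rw [hε, ← LL_real hτ hre t]; push_cast; simp
  have pε : ∀ t, 0 < ε t := fun t => Real.exp_pos _
  -- derivative of v
  have hvd : ∀ t, HasDerivAt v (π * a * c * s3 t / s4 t * w t) t := by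
    intro t
    have h := (quot_deriv hτ t).real_of_complex
    have hv2 : v = fun x : ℝ => (jacobiTheta₂ 0 (2 * τ) * theta1 x (2 * τ) / (T2 0 (2 * τ) * T4 x (2 * τ))).re := by
      funext x
      rw [← ea, ← eb, ← e1, ← e4, hv]
      norm_cast
    rw [hv2]
    refine h.congr_deriv ?_
    rw [← ea, ← eb, ← ec, ← e3, ← e4, ← e2, hw]
    norm_cast
  have hvw : ∀ t, v t ^ 2 + w t ^ 2 = 1 := by
    intro t
    have h := id_pyth (t:ℂ) hτ
    rw [← ea, ← eb, ← ec, ← e1, ← e4, ← e2] at h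
    have h' : b ^ 2 * s4 t ^ 2 - a ^ 2 * s1 t ^ 2 = c ^ 2 * s2 t ^ 2 := by exact_mod_cast h
    have := (p4 t).ne'
    simp only [hv, hw]
    field_simp
    linarith
  have hvE : ∀ t ∈ Set.Ioo (0:ℝ) 1, v t = π * a ^ 2 * c ^ 2 * ε t ^ 2 / s4 t ^ 2 := by
    intro t ht
    have h := EF_S hτ t
    have hE : EF t τ = ((ε t ^ 2 : ℝ) : ℂ) := by
      rw [← exp_LL hτ ht]; push_cast; rw [eε, ← Complex.exp_nat_mul]; congr 1; push_cast; ring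
    rw [hE, ← ea, ← eb, ← ec, ← e1, ← e4] at h
    have h' : ε t ^ 2 * (π * a * b * c ^ 2) = s1 t * s4 t := by exact_mod_cast h
    have := (p4 t).ne'
    simp only [hv]
    field_simp
    linear_combination -h'
  have hvp : ∀ t ∈ Set.Ioo (0:ℝ) (1/2), 0 < v t := by
    intro t ht
    rw [hvE t ⟨ht.1, ht.2.trans (by norm_num)⟩]
    have := p4 t; have := pε t
    positivity
  have hwp : ∀ t ∈ Set.Ioo (0:ℝ) (1/2), 0 < w t := by
    have hwc : Continuous w := by
      simp only [hw]
      refine Continuous.div₀ ?_ ?_ fun t => mul_ne_zero nb (p4 t).ne'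
      · exact continuous_const.mul (Complex.continuous_re.comp ((T2_diff h2).continuous.comp continuous_ofReal))
      · refine continuous_const.mul (Complex.continuous_re.comp ((jt_diff h2).continuous.comp ?_))
        fun_prop
    have hw0 : w 0 = 1 := by
      simp only [hw]; rw [← hb, ← hc]; field_simp
    intro t ht
    by_contra hcon
    have hI := intermediate_value_Icc' ht.1.le (hwc.continuousOn (s := Set.Icc 0 t))
    rw [hw0] at hI
    obtain ⟨u, hu, hu0⟩ := hI ⟨not_lt.1 hcon, zero_le_one⟩
    have hs : s2 u ≠ 0 := by
      intro h
      have h1 := theta1_ne_zero h2 (not_inLattice_of_Ioo h2 (t := u + 1/2) ⟨by linarith [hu.1], by linarith [hu.2, ht.2]⟩)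
      apply h1
      have h3 := e2 u
      rw [h, T2] at h3
      push_cast at h3 ⊢
      exact h3.symm
    exact (div_ne_zero (mul_ne_zero pc.ne' hs) (mul_ne_zero nb (p4 u).ne')) hu0
  have h := abstract_cov (v := v) (w := w) (v' := fun t => π * a * c * s3 t / s4 t * w t)
    (f := fun t => cexp (1/2 * LL τ t) *
    (jacobiTheta₂ 0 (2 * τ) ^ 2 * T4 0 (2 * τ) ^ 2 * jacobiTheta₂ t (2 * τ) / T4 t (2 * τ) ^ 2))
    (k := ((π * Real.sqrt π : ℝ) : ℂ)) hvd hvw ?_ ?_ hvp ?_ hwp ?_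
  · rw [h, Khat_half hτ]; ring
  · have : s1 0 = 0 := by
      have := e1 0
      rw [Complex.ofReal_zero, theta1_zero] at this
      exact_mod_cast this
    simp only [hv, this]; simp
  · have : s2 (1/2) = 0 := by
      have := e2 (1/2)
      push_cast at this
      rw [T2, show (1/2 + 1/2 : ℂ) = 0 + 1 by norm_num, theta1_add_one, theta1_zero, neg_zero] at this
      exact_mod_cast this
    simp only [hw, this]; simp
  · intro t ht
    have := p3 t; have := p4 t; have := hwp t ht
    positivity
  · intro t ht
    rw [← eε, ← ea, ← ec, ← e3, ← e4]
    norm_cast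
    have h3 := p3 t
    have h4 := p4 t
    have h5 := hwp t ht
    have h6 := pε t
    have hsq : Real.sqrt (v t) = Real.sqrt π * a * c * ε t / s4 t := by
      rw [hvE t ⟨ht.1, ht.2.trans (by norm_num)⟩, Real.sqrt_eq_iff_mul_self_eq (by positivity) (by positivity)]
      have := Real.mul_self_sqrt hpi.le
      field_simp
      rw [Real.sq_sqrt hpi.le]
    rw [hsq]
    field_simp

lemma beta_val : Complex.betaIntegral (3/4) (1/2) =
    4 * (Real.sqrt π : ℂ) * (Complex.Gamma (3/4) / Complex.Gamma (1/4)) := by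
  have h := Complex.Gamma_mul_Gamma_eq_betaIntegral (s := 3/4) (t := 1/2) (by norm_num) (by norm_num)
  have hg : Complex.Gamma (1/4) ≠ 0 := Complex.Gamma_ne_zero_of_re_pos (by norm_num)
  have h1 : Complex.Gamma (3/4 + 1/2) = 1/4 * Complex.Gamma (1/4) := by
    rw [show (3/4 + 1/2 : ℂ) = 1/4 + 1 by norm_num, Complex.Gamma_add_one _ (by norm_num)]
  have h2 : Complex.Gamma (1/2) = (Real.sqrt π : ℂ) := by
    have := Real.Gamma_one_half_eq
    rw [← this, ← Complex.Gamma_ofReal]; push_cast; rfl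
  rw [h1, h2] at h
  field_simp
  linear_combination -4 * h

lemma Khat_val {τ : ℂ} (hτ : 0 < τ.im) :
    Khat τ = 4 / π * (Complex.Gamma (3/4) / Complex.Gamma (1/4)) := by
  have hpi : (π : ℂ) ≠ 0 := by exact_mod_cast Real.pi_ne_zero
  have hsp : (Real.sqrt π : ℂ) ≠ 0 := by exact_mod_cast (Real.sqrt_pos.2 Real.pi_pos).ne'
  have himag : ∀ τ : ℂ, 0 < τ.im → τ.re = 0 → Khat τ = 4 / π * (Complex.Gamma (3/4) / Complex.Gamma (1/4)) := by
    intro τ h1 h2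
    have h := Khat_imag h1 h2
    rw [beta_val] at h
    push_cast at h
    have : Khat τ = (4 * (Real.sqrt π : ℂ) * (Complex.Gamma (3/4) / Complex.Gamma (1/4))) / (π * (Real.sqrt π : ℂ)) := by
      rw [eq_div_iff (mul_ne_zero hpi hsp), h]; ring
    rw [this]; field_simp
  have ho : IsOpen {τ : ℂ | 0 < τ.im} := isOpen_lt continuous_const Complex.continuous_im
  have hcx : Convex ℝ {τ : ℂ | 0 < τ.im} := convex_halfSpace_im_gt 0
  refine AnalyticOnNhd.eqOn_of_preconnected_of_frequently_eq (Khat_holo.analyticOnNhd ho)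
    (g := fun _ => 4 / π * (Complex.Gamma (3/4) / Complex.Gamma (1/4))) analyticOnNhd_const hcx.isPreconnected
    (show I ∈ {τ : ℂ | 0 < τ.im} by simp) ?_ hτ
  have ht : Tendsto (fun n : ℕ => I * ((1 + 1 / ((n:ℝ) + 1) : ℝ) : ℂ)) atTop (𝓝[≠] I) := by
    refine tendsto_nhdsWithin_iff.2 ⟨?_, Eventually.of_forall fun n => ?_⟩
    · have h1 : Tendsto (fun n : ℕ => (1 + 1 / ((n:ℝ) + 1) : ℝ)) atTop (𝓝 (1 + 0)) :=
        tendsto_const_nhds.add tendsto_one_div_add_atTop_nhds_zero_nat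
      have h2 := ((Complex.continuous_ofReal.tendsto _).comp h1).const_mul I
      simpa using h2
    · intro h
      have h' := congrArg Complex.im h
      simp only [Complex.mul_im, Complex.I_re, Complex.I_im, Complex.ofReal_re, Complex.ofReal_im] at h'
      have : (0:ℝ) < 1 / ((n:ℝ) + 1) := by positivity
      linarith
  refine ht.frequently (Frequently.of_forall fun n => himag _ ?_ ?_)
  · simp only [Complex.mul_im, Complex.I_re, Complex.I_im, Complex.ofReal_re, Complex.ofReal_im]
    have : (0:ℝ) < 1 / ((n:ℝ) + 1) := by positivity
    linarith
  · simp

end ConstB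

section Final
open scoped Real

lemma bracket {τ : ℂ} (hτ : 0 < τ.im) (x : ℂ) :
    Complex.exp ((Real.pi : ℂ) * Complex.I * τ / 4) *
              (Complex.exp ((Real.pi : ℂ) * Complex.I * x) -
                Complex.exp (-((Real.pi : ℂ) * Complex.I * x))) *
              ∏' j : ℕ,
                ((1 - Complex.exp (2 * (Real.pi : ℂ) * Complex.I * τ) ^ (j + 1)) *
                  (1 - Complex.exp (2 * (Real.pi : ℂ) * Complex.I * τ) ^ (j + 1) *
                    Complex.exp (2 * (Real.pi : ℂ) * Complex.I * x)) *
                  (1 - Complex.exp (2 * (Real.pi : ℂ) * Complex.I * τ) ^ (j + 1) *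
                    Complex.exp (-(2 * (Real.pi : ℂ) * Complex.I * x)))) = I * theta1 x τ := by
  have hQ := norm_Qexp hτ
  have h := theta1_prod x hτ
  have m1 := mult_pr hQ 1
  have m2 := mult_pr hQ (cexp (2 * π * I * x))
  have m3 := mult_pr hQ (cexp (-(2 * π * I * x)))
  have hp := (m1.mul m2).tprod_mul m3
  rw [m1.tprod_mul m2] at hp
  rw [qpi_eq_pr] at h
  simp only [mul_one, ← sub_eq_add_neg] at hp
  rw [hp, h]
  simp only [pr, mul_one, ← sub_eq_add_neg]
  linear_combination (cexp (π * I * τ / 4) * (cexp (π * I * x) - cexp (-(π * I * x))) *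
    ((∏' j : ℕ, (1 - cexp (2 * π * I * τ) ^ (j + 1))) *
      (∏' j : ℕ, (1 - cexp (2 * π * I * τ) ^ (j + 1) * cexp (2 * π * I * x))) *
      (∏' j : ℕ, (1 - cexp (2 * π * I * τ) ^ (j + 1) * cexp (-(2 * π * I * x)))))) * Complex.I_sq

lemma gamma_neg_half : Complex.Gamma (-(1/2)) = -2 * (Real.sqrt π : ℂ) := by
  have h2 : Complex.Gamma (1/2) = (Real.sqrt π : ℂ) := by
    have := Real.Gamma_one_half_eq
    rw [← this, ← Complex.Gamma_ofReal]; push_cast; rfl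
  have h := Complex.Gamma_add_one (-(1/2)) (by norm_num)
  rw [show (-(1/2) + 1 : ℂ) = 1/2 by norm_num, h2] at h
  linear_combination 2 * h

lemma U_aux {κ : ℂ} (h : κ ∈ ({κ : ℂ | κ.re < 0} ∪ {κ : ℂ | 2 < κ.im}) ∪ {κ : ℂ | 3 < κ.re}) :
    κ ≠ 0 ∧ -1 < (-(2 / κ)).re := by
  have hk : 2 * κ.re < Complex.normSq κ := by
    rw [Complex.normSq_apply]
    rcases h with (h | h) | h <;> simp only [Set.mem_ofPred_eq] at h <;>
      nlinarith [mul_self_nonneg κ.re, mul_self_nonneg κ.im, mul_self_nonneg (κ.re - 1)]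
  have h0 : κ ≠ 0 := by rintro rfl; simp at hk
  refine ⟨h0, ?_⟩
  have hp : 0 < Complex.normSq κ := Complex.normSq_pos.2 h0
  rw [Complex.neg_re, Complex.div_re]
  simp only [Complex.re_ofNat, Complex.im_ofNat, zero_mul, zero_div, add_zero]
  have : 2 * κ.re / Complex.normSq κ < 1 := by rwa [div_lt_one hp]
  linarith

lemma U_conn : IsConnected (({κ : ℂ | κ.re < 0} ∪ {κ : ℂ | 2 < κ.im}) ∪ {κ : ℂ | 3 < κ.re}) := by
  have h1 : IsConnected {κ : ℂ | κ.re < 0} := (convex_halfSpace_re_lt 0).isConnected ⟨-1, by simp⟩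
  have h2 : IsConnected {κ : ℂ | 2 < κ.im} := (convex_halfSpace_im_gt 2).isConnected ⟨⟨0, 3⟩, by simp; norm_num⟩
  have h3 : IsConnected {κ : ℂ | 3 < κ.re} := (convex_halfSpace_re_gt 3).isConnected ⟨4, by simp; norm_num⟩
  refine IsConnected.union ⟨⟨4, 3⟩, ?_, ?_⟩ (IsConnected.union ⟨⟨-1, 3⟩, ?_, ?_⟩ h1 h2) h3
  · right; simp; norm_num
  · simp; norm_num
  · simp
  · simp; norm_num

end Final

/-- the elliptic Selberg-type integral `h_m(x,τ,κ)` has an analytic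
continuation regular at `κ = 4`, which vanishes there unless `m ≡ 2 (mod 4)`, in which
case its value is `2π^{1/2}B(−1/2,3/4)·[q^{1/8}(e^{iπx}−e^{−iπx})
∏_{j≥1}(1−q^j)(1−q^je^{2πix})(1−q^je^{−2πix})]²`. -/
theorem selberg_integral_identity (τ : ℂ) (hτ : 0 < τ.im)
    (x : ℂ) (hx : ¬ inLattice τ x) (hx' : ¬ inLattice τ (-x)) (m : ℤ)
    (L : ℝ → ℂ) (hLc : ContinuousOn L (Set.Ioo 0 1))
    (hLe : ∀ t ∈ Set.Ioo (0 : ℝ) 1, Complex.exp (L t) = EF (t : ℂ) τ)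
    (hL0 : Tendsto (fun t : ℝ => L t - (Real.log t : ℂ)) (𝓝[>] (0 : ℝ)) (𝓝 0)) :
    ∃ U : Set ℂ, IsOpen U ∧ IsConnected U ∧ ({κ : ℂ | κ.re < 0} ∪ {4}) ⊆ U ∧
      ∃ F : ℂ → ℂ, DifferentiableOn ℂ F U ∧
        (∀ κ : ℂ, κ.re < 0 → F κ =
          ∫ t in Set.Ioo (0 : ℝ) 1,
            Complex.exp (-(2 / κ) * L t) *
              (sigmaF x (t : ℂ) τ * theta4m m (x + 2 * (t : ℂ) / κ) τ +
                sigmaF (-x) (t : ℂ) τ * theta4m m (-x + 2 * (t : ℂ) / κ) τ)) ∧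
        (¬ m % 4 = 2 → F 4 = 0) ∧
        (m % 4 = 2 → F 4 =
          2 * (Real.sqrt Real.pi : ℂ) *
            (Complex.Gamma (-(1 / 2)) * Complex.Gamma (3 / 4) / Complex.Gamma (1 / 4)) *
            (Complex.exp ((Real.pi : ℂ) * Complex.I * τ / 4) *
              (Complex.exp ((Real.pi : ℂ) * Complex.I * x) -
                Complex.exp (-((Real.pi : ℂ) * Complex.I * x))) *
              ∏' j : ℕ,
                ((1 - Complex.exp (2 * (Real.pi : ℂ) * Complex.I * τ) ^ (j + 1)) *
                  (1 - Complex.exp (2 * (Real.pi : ℂ) * Complex.I * τ) ^ (j + 1) *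
                    Complex.exp (2 * (Real.pi : ℂ) * Complex.I * x)) *
                  (1 - Complex.exp (2 * (Real.pi : ℂ) * Complex.I * τ) ^ (j + 1) *
                    Complex.exp (-(2 * (Real.pi : ℂ) * Complex.I * x))))) ^ 2) := by
  have hpi : (Real.pi : ℂ) ≠ 0 := by exact_mod_cast Real.pi_ne_zero
  have hxn := theta1_ne_zero hτ hx
  have hφ := theta4m_diff hτ m
  have hθ := theta1_differentiable hτ
  have ha1 : Differentiable ℂ (fun z => theta1 (x - z) τ / theta1 x τ) :=
    (hθ.comp (by fun_prop : Differentiable ℂ (fun z : ℂ => x - z))).div_const _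
  have ha2 : Differentiable ℂ (fun z => theta1 (x + z) τ / theta1 x τ) :=
    (hθ.comp (by fun_prop : Differentiable ℂ (fun z : ℂ => x + z))).div_const _
  have hsum : ∀ s : ℂ, -1 < s.re →
      Lam τ s (fun z => theta1 (x - z) τ / theta1 x τ * theta4m m (x - s * z) τ) +
      Lam τ s (fun z => theta1 (x + z) τ / theta1 x τ * theta4m m (-x - s * z) τ) =
      Lam τ s (fun z => theta1 (x - z) τ / theta1 x τ * theta4m m (x - s * z) τ +
        theta1 (x + z) τ / theta1 x τ * theta4m m (-x - s * z) τ) := by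
    intro s hs
    have d1 : Differentiable ℂ (fun z => theta1 (x - z) τ / theta1 x τ * theta4m m (x - s * z) τ) :=
      ha1.mul (hφ.comp (by fun_prop : Differentiable ℂ (fun z : ℂ => x - s * z)))
    have d2 : Differentiable ℂ (fun z => theta1 (x + z) τ / theta1 x τ * theta4m m (-x - s * z) τ) :=
      ha2.mul (hφ.comp (by fun_prop : Differentiable ℂ (fun z : ℂ => -x - s * z)))
    have := Lam_lin hτ hs d1 d2 1 1
    simp only [one_mul] at this
    exact this.symm
  have h4 : Lam τ (-(2 / 4)) (fun z => theta1 (x - z) τ / theta1 x τ * theta4m m (x - -(2 / 4) * z) τ) +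
      Lam τ (-(2 / 4)) (fun z => theta1 (x + z) τ / theta1 x τ * theta4m m (-x - -(2 / 4) * z) τ) =
      1 / theta1 x τ * Lam τ (-(1/2)) (Phi τ (th τ m) x) := by
    rw [hsum _ (by norm_num), show (-(2 / 4) : ℂ) = -(1/2) by norm_num]
    have hd := Phi_diff hτ (th_diff hτ m) x
    have := Lam_lin hτ (s := -(1/2)) (by norm_num) hd hd (1 / theta1 x τ) 0
    rw [zero_mul, add_zero] at this
    rw [← this]
    congr 1; ext z
    rw [Phi, th, th, show (z + 2 * x) / 2 = x - -(1/2) * z by ring,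
      show (z - 2 * x) / 2 = -x - -(1/2) * z by ring]
    ring
  refine ⟨({κ : ℂ | κ.re < 0} ∪ {κ : ℂ | 2 < κ.im}) ∪ {κ : ℂ | 3 < κ.re}, ?_, U_conn, ?_,
    fun κ => Lam τ (-(2 / κ)) (fun z => theta1 (x - z) τ / theta1 x τ * theta4m m (x - -(2 / κ) * z) τ) +
      Lam τ (-(2 / κ)) (fun z => theta1 (x + z) τ / theta1 x τ * theta4m m (-x - -(2 / κ) * z) τ), ?_, ?_, ?_, ?_⟩
  · exact ((isOpen_lt Complex.continuous_re continuous_const).union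
      (isOpen_lt continuous_const Complex.continuous_im)).union (isOpen_lt continuous_const Complex.continuous_re)
  · rintro κ (h | h)
    · exact Or.inl (Or.inl h)
    · right
      rw [Set.mem_singleton_iff] at h
      rw [h]; norm_num
  · have hs : DifferentiableOn ℂ (fun κ : ℂ => -(2 / κ))
        (({κ : ℂ | κ.re < 0} ∪ {κ : ℂ | 2 < κ.im}) ∪ {κ : ℂ | 3 < κ.re}) := by
      intro κ hκ
      exact ((differentiableAt_const 2).div differentiableAt_id (U_aux hκ).1).neg.differentiableWithinAt
    have hmap : Set.MapsTo (fun κ : ℂ => -(2 / κ))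
        (({κ : ℂ | κ.re < 0} ∪ {κ : ℂ | 2 < κ.im}) ∪ {κ : ℂ | 3 < κ.re}) {s : ℂ | -1 < s.re ∧ s ≠ 0} := by
      intro κ hκ
      exact ⟨(U_aux hκ).2, neg_ne_zero.2 (div_ne_zero two_ne_zero (U_aux hκ).1)⟩
    exact ((Lam_holo hτ ha1 hφ x).comp hs hmap).add ((Lam_holo hτ ha2 hφ (-x)).comp hs hmap)
  · intro κ hκ
    have hk0 : κ ≠ 0 := by rintro rfl; simp at hκ
    have hp : 0 < Complex.normSq κ := Complex.normSq_pos.2 hk0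
    have hs : 0 < (-(2 / κ)).re := by
      rw [Complex.neg_re, Complex.div_re]
      simp only [Complex.re_ofNat, Complex.im_ofNat, zero_mul, zero_div, add_zero]
      have : 2 * κ.re / Complex.normSq κ < 0 := div_neg_of_neg_of_pos (by linarith) hp
      linarith
    simp only
    rw [hsum _ (by linarith), Lam_pos hτ hs]
    · refine setIntegral_congr_fun measurableSet_Ioo fun t ht => ?_
      have hL := LL_unique hτ hLc hLe hL0 t ht
      have ht0 := theta1_ne_zero hτ (not_inLattice_of_Ioo hτ ht)
      have hd0 := theta1'_zero_ne hτ
      rw [hL, sigmaF, sigmaF, EF, theta1_neg, show -x - (t:ℂ) = -(x + t) by ring, theta1_neg,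
        show x - -(2 / κ) * (t:ℂ) = x + 2 * t / κ by ring, show -x - -(2 / κ) * (t:ℂ) = -x + 2 * t / κ by ring]
      congr 1
      field_simp
    · exact (ha1.mul (hφ.comp (by fun_prop : Differentiable ℂ (fun z : ℂ => x - -(2 / κ) * z)))).add
        (ha2.mul (hφ.comp (by fun_prop : Differentiable ℂ (fun z : ℂ => -x - -(2 / κ) * z))))
  · intro hm
    simp only
    rw [h4]
    rcases (by omega : m % 4 = 0 ∨ m % 4 = 1 ∨ m % 4 = 3) with h | h | h
    · rw [case_zero hτ h, mul_zero]
    · rw [case_one hτ h, mul_zero]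
    · rw [case_three hτ h, mul_zero]
  · intro hm
    simp only
    rw [h4, case_two hτ hm, bracket hτ x, Khat_val hτ, gamma_neg_half]
    have hsq : (Real.sqrt Real.pi : ℂ) ^ 2 = Real.pi := by
      exact_mod_cast Real.sq_sqrt Real.pi_pos.le
    have hg : Complex.Gamma (1/4) ≠ 0 := Complex.Gamma_ne_zero_of_re_pos (by norm_num)
    rw [mul_pow, Complex.I_sq]
    have : 1 / theta1 x τ * ((Real.pi:ℂ) ^ 2 * theta1 x τ ^ 3 * (4 / Real.pi * (Complex.Gamma (3/4) / Complex.Gamma (1/4)))) =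
      4 * Real.pi * theta1 x τ ^ 2 * (Complex.Gamma (3/4) / Complex.Gamma (1/4)) := by
      field_simp
    rw [this]
    linear_combination (-4 * theta1 x τ ^ 2 * (Complex.Gamma (3/4) / Complex.Gamma (1/4))) * hsq
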